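/- arXiv:2403.13571 — 7 statements merged into one kernel-verified Lean document; each statement's English description precedes it below -/
import Mathlib

section
/- Let d and g be integers with d ≥ 1 and g ≥ 3. Every finite simple graph G whose minimum degree is at least d and whose girth is at least g has at least n₀(d,g) vertices. -/
/-- The Moore function `n₀(d, g)`: for odd `g = 2h+1` it equals
`1 + d·∑_{i=0}^{h-1}(d-1)^i`, and for even `g = 2h` it equals `2·∑_{i=0}^{h-1}(d-1)^i`. -/
noncomputable def mooreBound (d : ℝ) (g : ℕ) : ℝ :=
  if Odd g then 1 + d * ∑ i ∈ Finset.range (g / 2), (d - 1) ^ i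
  else 2 * ∑ i ∈ Finset.range (g / 2), (d - 1) ^ i

/-!
Two different paths with the same ends contain a cycle no longer than their total length, so in a
graph of girth at least `g` two paths of total length less than `g` with the same ends coincide.
Hence the vertices reached from the end `r` of an edge `x r` by short paths avoiding `x` form a
tree: a vertex of layer `i` has all its neighbours but one in layer `i + 1`, and a vertex of layer
`i + 1` has at most one neighbour in layer `i`. By double counting, layer `i` has at least
`(δ - 1) ^ i` vertices, where `δ` is the minimum degree.

For `g = 2 * h + 1`, the trees with `h` layers hanging from the neighbours of a vertex `v` are
pairwise disjoint and miss `v`. For `g = 2 * h`, the two trees with `h` layers hanging from the ends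
of an edge are disjoint.
-/

namespace MooreBound

open SimpleGraph Finset

section Paths

variable {V : Type*} {G : SimpleGraph V} {g : ℕ} {u v w : V}

lemma eq_of_isPath_of_length_add_lt (hg : (g : ℕ∞) ≤ G.egirth) {p q : G.Walk u v}
    (hp : p.IsPath) (hq : q.IsPath) (hlen : p.length + q.length < g) : p = q := by
  by_contra hne
  obtain ⟨_, -, -, c, hc, hc_len⟩ := hp.exists_isCycle_length_le_add_of_ne hq hne
  have hg_le : g ≤ c.length := by exact_mod_cast le_egirth.mp hg _ c hc
  omega

lemma eq_penultimate_of_adj_end (hg : (g : ℕ∞) ≤ G.egirth) {p : G.Walk u v} (hp : p.IsPath)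
    (hlen : p.length + 1 < g) (hvw : G.Adj v w) (hw : w ∈ p.support) : w = p.penultimate := by
  classical
  have hdrop : p.dropUntil w hw = hvw.symm.toWalk := by
    refine eq_of_isPath_of_length_add_lt hg (hp.dropUntil hw) hvw.symm.isPath_toWalk ?_
    have := p.length_dropUntil_le_length hw
    rw [Adj.length_toWalk]
    omega
  refine hp.eq_penultimate_of_mem_edges (p.edges_dropUntil_subset_edges hw ?_)
  rw [hdrop, Adj.edges_toWalk, Sym2.eq_swap]
  exact List.mem_singleton_self _

end Paths

variable {V : Type*} [Fintype V] {G : SimpleGraph V} {g h i j : ℕ} {u v w x r s : V}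

section Layer

open Classical in
/-- The vertices reached from `r` by a path of length `i` avoiding `x`. When `x` is adjacent to `r`
and `i` is small compared to the girth, this is level `i` of the tree hanging from `r` away
from `x`. -/
noncomputable def layer (G : SimpleGraph V) (x r : V) (i : ℕ) : Finset V :=
  {w | ∃ p : G.Walk r w, p.IsPath ∧ p.length = i ∧ x ∉ p.support}

lemma mem_layer :
    w ∈ layer G x r i ↔ ∃ p : G.Walk r w, p.IsPath ∧ p.length = i ∧ x ∉ p.support := by
  simp [layer]

lemma disjoint_layer (hg : (g : ℕ∞) ≤ G.egirth) (hij : i ≠ j) (hlt : i + j < g) :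
    Disjoint (layer G x r i) (layer G x r j) := by
  rw [Finset.disjoint_left]
  intro w hwi hwj
  obtain ⟨p, hp, rfl, -⟩ := mem_layer.mp hwi
  obtain ⟨q, hq, rfl, -⟩ := mem_layer.mp hwj
  exact hij (congrArg Walk.length (eq_of_isPath_of_length_add_lt hg hp hq hlt))

variable [DecidableRel G.Adj]

lemma degree_pred_le_card_bipartiteAbove_layer (hg : (g : ℕ∞) ≤ G.egirth) (hxr : G.Adj x r)
    (hi : i + 2 < g) (hw : w ∈ layer G x r i) :
    G.degree w - 1 ≤ #((layer G x r (i + 1)).bipartiteAbove G.Adj w) := by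
  classical
  obtain ⟨p, hp, rfl, hxp⟩ := mem_layer.mp hw
  -- Starting from `x` gives the path a penultimate vertex even if `w = r`, and an extension that
  -- is still a path then avoids `x`.
  let q : G.Walk x w := .cons hxr p
  have hq : q.IsPath := hp.cons hxp
  have hsub : (G.neighborFinset w).erase q.penultimate ⊆
      (layer G x r (p.length + 1)).bipartiteAbove G.Adj w := by
    intro y hy
    obtain ⟨hne, hwy⟩ : y ≠ q.penultimate ∧ G.Adj w y := by simpa using hy
    have hyq : y ∉ q.support := mt (eq_penultimate_of_adj_end hg hq hi hwy) hne
    obtain ⟨hyx, hyp⟩ : y ≠ x ∧ y ∉ p.support := by simpa [q] using hyq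
    refine (mem_bipartiteAbove _).mpr
      ⟨mem_layer.mpr ⟨p.concat hwy, hp.concat hyp hwy, ?_, ?_⟩, hwy⟩
    · exact p.length_concat hwy
    · simp [Walk.support_concat, hxp, hyx.symm]
  calc G.degree w - 1 ≤ #((G.neighborFinset w).erase q.penultimate) := pred_card_le_card_erase
    _ ≤ _ := card_le_card hsub

lemma card_bipartiteBelow_layer_le_one (hg : (g : ℕ∞) ≤ G.egirth) (hi : 2 * (i + 1) < g)
    (hw : w ∈ layer G x r (i + 1)) : #((layer G x r i).bipartiteBelow G.Adj w) ≤ 1 := by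
  obtain ⟨q, hq, hq_len, -⟩ := mem_layer.mp hw
  have eq_penultimate : ∀ y ∈ (layer G x r i).bipartiteBelow G.Adj w, y = q.penultimate := by
    intro y hy
    obtain ⟨hyi, hyw⟩ := (mem_bipartiteBelow _).mp hy
    obtain ⟨p, hp, hp_len, -⟩ := mem_layer.mp hyi
    by_contra hne
    have hyq : y ∉ q.support :=
      mt (eq_penultimate_of_adj_end hg hq (by omega) hyw.symm) hne
    have hpq : p = q.concat hyw.symm :=
      eq_of_isPath_of_length_add_lt hg hp (hq.concat hyq hyw.symm)
        (by rw [Walk.length_concat]; omega)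
    have hlen := congrArg Walk.length hpq
    rw [Walk.length_concat] at hlen
    omega
  exact card_le_one.mpr fun a ha b hb ↦ (eq_penultimate a ha).trans (eq_penultimate b hb).symm

lemma card_layer_mul_le_card_layer_succ (hg : (g : ℕ∞) ≤ G.egirth) (hxr : G.Adj x r)
    (hi : 2 * (i + 1) < g) : #(layer G x r i) * (G.minDegree - 1) ≤ #(layer G x r (i + 1)) := by
  rw [← mul_one #(layer G x r (i + 1))]
  refine card_mul_le_card_mul G.Adj (fun w hw ↦ ?_)
    fun w hw ↦ card_bipartiteBelow_layer_le_one hg hi hw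
  exact (Nat.sub_le_sub_right (G.minDegree_le_degree w) 1).trans
    (degree_pred_le_card_bipartiteAbove_layer hg hxr (by omega) hw)

lemma pow_le_card_layer (hg : (g : ℕ∞) ≤ G.egirth) (hxr : G.Adj x r) (hi : 2 * i < g) :
    (G.minDegree - 1) ^ i ≤ #(layer G x r i) := by
  induction i with
  | zero => exact card_pos.mpr ⟨r, mem_layer.mpr ⟨.nil, .nil, rfl, by simp [hxr.ne]⟩⟩
  | succ i ih =>
    calc (G.minDegree - 1) ^ (i + 1) = (G.minDegree - 1) ^ i * (G.minDegree - 1) := pow_succ _ _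
      _ ≤ #(layer G x r i) * (G.minDegree - 1) := Nat.mul_le_mul_right _ (ih (by omega))
      _ ≤ #(layer G x r (i + 1)) := card_layer_mul_le_card_layer_succ hg hxr hi

end Layer

section Branch

open Classical in
/-- The vertices reached from `r` by a path of length less than `h` avoiding `x`: the first `h`
levels of the tree hanging from `r` away from `x`. -/
noncomputable def branch (G : SimpleGraph V) (x r : V) (h : ℕ) : Finset V :=
  (range h).biUnion (layer G x r)

lemma mem_branch :
    w ∈ branch G x r h ↔ ∃ p : G.Walk r w, p.IsPath ∧ p.length < h ∧ x ∉ p.support := by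
  simp only [branch, mem_biUnion, mem_range, mem_layer]
  constructor
  · rintro ⟨_, hlt, p, hp, rfl, hx⟩
    exact ⟨p, hp, hlt, hx⟩
  · rintro ⟨p, hp, hlt, hx⟩
    exact ⟨p.length, hlt, p, hp, rfl, hx⟩

lemma notMem_branch_self : x ∉ branch G x r h := fun hx ↦ by
  obtain ⟨p, -, -, hxp⟩ := mem_branch.mp hx
  exact hxp p.end_mem_support

lemma sum_pow_le_card_branch [DecidableRel G.Adj] (hg : (g : ℕ∞) ≤ G.egirth) (hxr : G.Adj x r)
    (hh : 2 * h ≤ g + 1) : ∑ i ∈ range h, (G.minDegree - 1) ^ i ≤ #(branch G x r h) := by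
  classical
  have hdisj : (range h : Set ℕ).PairwiseDisjoint (layer G x r) := fun i hi j hj hij ↦ by
    rw [mem_coe, mem_range] at hi hj
    exact disjoint_layer hg hij (by omega)
  rw [branch, card_biUnion hdisj]
  refine sum_le_sum fun i hi ↦ pow_le_card_layer hg hxr ?_
  rw [mem_range] at hi
  omega

lemma disjoint_branch_of_ne (hg : (g : ℕ∞) ≤ G.egirth) (hh : 2 * h < g) (hr : G.Adj v r)
    (hs : G.Adj v s) (hrs : r ≠ s) : Disjoint (branch G v r h) (branch G v s h) := by
  rw [Finset.disjoint_left]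
  intro w hwr hws
  obtain ⟨p, hp, hp_len, hvp⟩ := mem_branch.mp hwr
  obtain ⟨q, hq, hq_len, hvq⟩ := mem_branch.mp hws
  have hpq : Walk.cons hr p = Walk.cons hs q :=
    eq_of_isPath_of_length_add_lt hg (hp.cons hvp) (hq.cons hvq)
      (by simp only [Walk.length_cons]; omega)
  injection hpq with _ hrs'
  exact hrs hrs'

lemma disjoint_branch_swap (hg : (g : ℕ∞) ≤ G.egirth) (hh : 2 * h ≤ g) (huv : G.Adj u v) :
    Disjoint (branch G u v h) (branch G v u h) := by
  rw [Finset.disjoint_left]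
  intro w hwv hwu
  obtain ⟨p, hp, hp_len, hup⟩ := mem_branch.mp hwv
  obtain ⟨q, hq, hq_len, hvq⟩ := mem_branch.mp hwu
  have hpq : Walk.cons huv p = q :=
    eq_of_isPath_of_length_add_lt hg (hp.cons hup) hq (by rw [Walk.length_cons]; omega)
  apply hvq
  rw [← hpq, Walk.support_cons]
  exact List.mem_cons_of_mem _ p.start_mem_support

end Branch

section Bounds

variable [DecidableRel G.Adj]

theorem one_add_degree_mul_sum_pow_le_card (hg : ((2 * h + 1 : ℕ) : ℕ∞) ≤ G.egirth) (v : V) :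
    1 + G.degree v * ∑ i ∈ range h, (G.minDegree - 1) ^ i ≤ Fintype.card V := by
  classical
  let U := (G.neighborFinset v).biUnion fun r ↦ branch G v r h
  have hvU : v ∉ U := by simp [U, notMem_branch_self]
  have hdisj : (G.neighborFinset v : Set V).PairwiseDisjoint fun r ↦ branch G v r h := by
    intro r hr s hs hrs
    rw [mem_coe, mem_neighborFinset] at hr hs
    exact disjoint_branch_of_ne hg (Nat.lt_succ_self _) hr hs hrs
  have hU : G.degree v * ∑ i ∈ range h, (G.minDegree - 1) ^ i ≤ #U := by
    rw [card_biUnion hdisj, ← card_neighborFinset_eq_degree, ← smul_eq_mul]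
    refine card_nsmul_le_sum _ _ _ fun r hr ↦ ?_
    exact sum_pow_le_card_branch hg ((G.mem_neighborFinset v r).mp hr) (by omega)
  calc 1 + G.degree v * ∑ i ∈ range h, (G.minDegree - 1) ^ i ≤ 1 + #U := by gcongr
    _ = #(insert v U) := by rw [card_insert_of_notMem hvU, add_comm]
    _ ≤ Fintype.card V := card_le_univ _

theorem two_mul_sum_pow_le_card (hg : ((2 * h : ℕ) : ℕ∞) ≤ G.egirth) (huv : G.Adj u v) :
    2 * ∑ i ∈ range h, (G.minDegree - 1) ^ i ≤ Fintype.card V := by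
  classical
  calc 2 * ∑ i ∈ range h, (G.minDegree - 1) ^ i
      ≤ #(branch G u v h) + #(branch G v u h) := by
        rw [two_mul]
        exact add_le_add (sum_pow_le_card_branch hg huv (Nat.le_succ _))
          (sum_pow_le_card_branch hg huv.symm (Nat.le_succ _))
    _ = #(branch G u v h ∪ branch G v u h) :=
        (card_union_of_disjoint (disjoint_branch_swap hg le_rfl huv)).symm
    _ ≤ Fintype.card V := card_le_univ _

lemma exists_adj_of_minDegree_pos (hpos : 0 < G.minDegree) : ∃ u v, G.Adj u v := by
  obtain _ | ⟨⟨u⟩⟩ := isEmpty_or_nonempty V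
  · simp at hpos
  · exact ⟨u, (G.degree_pos_iff_exists_adj u).mp (hpos.trans_le (G.minDegree_le_degree u))⟩

end Bounds

lemma mooreBound_two_mul (d : ℝ) (h : ℕ) :
    mooreBound d (2 * h) = 2 * ∑ i ∈ range h, (d - 1) ^ i := by
  simp [mooreBound]

lemma mooreBound_two_mul_add_one (d : ℝ) (h : ℕ) :
    mooreBound d (2 * h + 1) = 1 + d * ∑ i ∈ range h, (d - 1) ^ i := by
  simp [mooreBound, Nat.mul_add_div]

lemma mooreBound_le_mooreBound {d e : ℝ} (hd : 1 ≤ d) (hde : d ≤ e) (g : ℕ) :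
    mooreBound d g ≤ mooreBound e g := by
  have : 0 ≤ d - 1 := sub_nonneg.mpr hd
  have he : 0 ≤ e := zero_le_one.trans (hd.trans hde)
  unfold mooreBound
  split_ifs <;> gcongr

end MooreBound

open MooreBound in
theorem moore_bound_general {V : Type*} [Fintype V] (G : SimpleGraph V) [DecidableRel G.Adj]
    {d : ℝ} {g : ℕ} (hd : 1 ≤ d) (hmin : d ≤ G.minDegree) (hgirth : (g : ℕ∞) ≤ G.egirth) :
    mooreBound d g ≤ (Fintype.card V : ℝ) := by
  have hpos : 1 ≤ G.minDegree := by exact_mod_cast hd.trans hmin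
  obtain ⟨u, v, huv⟩ := exists_adj_of_minDegree_pos hpos
  refine (mooreBound_le_mooreBound hd hmin g).trans ?_
  obtain ⟨h, rfl | rfl⟩ := g.even_or_odd'
  · rw [mooreBound_two_mul, ← Nat.cast_pred hpos]
    exact_mod_cast two_mul_sum_pow_le_card hgirth huv
  · have hbound : 1 + G.minDegree * ∑ i ∈ Finset.range h, (G.minDegree - 1) ^ i ≤ Fintype.card V :=
      le_trans (by gcongr; exact G.minDegree_le_degree u)
        (one_add_degree_mul_sum_pow_le_card hgirth u)
    rw [mooreBound_two_mul_add_one, ← Nat.cast_pred hpos]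
    exact_mod_cast hbound

/-- **Moore bound.** Every finite graph with minimum degree at least `d ≥ 1` and girth at
least `g ≥ 3` has at least `n₀(d, g)` vertices. -/
theorem moore_bound {V : Type} [Fintype V] (G : SimpleGraph V) [DecidableRel G.Adj]
    (d g : ℕ) (hd : 1 ≤ d) (hg : 3 ≤ g)
    (hmin : d ≤ G.minDegree) (hgirth : (g : ℕ∞) ≤ G.egirth) :
    mooreBound d g ≤ (Fintype.card V : ℝ) :=
  moore_bound_general G (by exact_mod_cast hd) (by exact_mod_cast hmin) hgirth
end

section
/- If d is a positive integer and there exists a finite simple graph G on d²+1 vertices that is d-regular (every vertex has degree d) and has girth at least 5 (equivalently, G contains no cycle of length 3 or 4), then d ∈ {1, 2, 3, 7, 57}. -/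
/-!
In a graph of girth at least `5`, adjacent vertices have no common neighbour and distinct vertices
have at most one. Counting the paths of length two from a fixed vertex of a `d`-regular graph on
`d² + 1` vertices shows that nonadjacent distinct vertices have exactly one, so the graph is
strongly regular with parameters `(d² + 1, d, 0, 1)`.

For any strongly regular graph, the adjacency matrix `A` acts by `k` on constant vectors and
elsewhere only has the two eigenvalues `θ` and `τ` with `(A - θ) (A - τ) = μ J`. The projection onto
the `θ`-part is a combination of `A`, `1` and `J`, and the trace of an idempotent is a natural
number, so `k + m θ + (n - 1 - m) τ = tr A = 0` for some natural number `m`. Here this says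
`(2 m - d²) s = d² - 2 d` with `s² = 4 d - 3`. If `d ≠ 2`, then `s` is an integer dividing
`d (d - 2)`, hence dividing `16 d (d - 2) = (s² + 3) (s² - 5)`, hence dividing `15`.
-/

open Finset SimpleGraph Matrix

section Girth

variable {V : Type*} {G : SimpleGraph V}

lemma eq_of_isPath_of_length_add_length_lt_egirth {u v : V} {p q : G.Walk u v} (hp : p.IsPath)
    (hq : q.IsPath) (hlt : ((p.length + q.length : ℕ) : ℕ∞) < G.egirth) : p = q := by
  by_contra hne
  obtain ⟨w, -, -, c, hc, hle⟩ := hp.exists_isCycle_length_le_add_of_ne hq hne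
  exact absurd ((egirth_le_length hc).trans (Nat.cast_le.mpr hle)) hlt.not_ge

lemma isPath_cons_toWalk {u v w : V} (hvu : G.Adj v u) (huw : G.Adj u w) (hvw : v ≠ w) :
    (Walk.cons hvu huw.toWalk).IsPath :=
  (Walk.IsPath.of_adj huw).cons (by simp [hvu.ne, hvw])

lemma commonNeighbors_eq_empty_of_adj (hgirth : 4 ≤ G.egirth) {v w : V} (hvw : G.Adj v w) :
    G.commonNeighbors v w = ∅ := by
  refine Set.eq_empty_of_forall_notMem fun u hu ↦ ?_
  obtain ⟨hvu, hwu⟩ := (mem_commonNeighbors G).mp hu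
  have heq := eq_of_isPath_of_length_add_length_lt_egirth
    (isPath_cons_toWalk hvu hwu.symm hvw.ne) (Walk.IsPath.of_adj hvw)
    (lt_of_lt_of_le (by norm_num) hgirth)
  simpa using congrArg Walk.length heq

lemma subsingleton_commonNeighbors (hgirth : 5 ≤ G.egirth) {v w : V} (hvw : v ≠ w) :
    (G.commonNeighbors v w).Subsingleton := by
  intro a ha b hb
  obtain ⟨hva, hwa⟩ := (mem_commonNeighbors G).mp ha
  obtain ⟨hvb, hwb⟩ := (mem_commonNeighbors G).mp hb
  have heq := eq_of_isPath_of_length_add_length_lt_egirth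
    (isPath_cons_toWalk hva hwa.symm hvw) (isPath_cons_toWalk hvb hwb.symm hvw)
    (lt_of_lt_of_le (by norm_num) hgirth)
  simpa using congrArg Walk.snd heq

end Girth

section MooreGraph

variable {V : Type*} [Fintype V] {G : SimpleGraph V} [DecidableRel G.Adj] {d : ℕ}

variable (G) in
lemma sum_card_commonNeighbors (v : V) :
    ∑ w, Fintype.card (G.commonNeighbors v w) = ∑ u ∈ G.neighborFinset v, G.degree u := by
  have hcommon (w : V) : Fintype.card (G.commonNeighbors v w)
      = #((G.neighborFinset v).bipartiteBelow G.Adj w) := by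
    rw [← Set.toFinset_card]
    congr 1
    ext u
    simp [mem_commonNeighbors, bipartiteBelow, G.adj_comm w u]
  have hdegree (u : V) : G.degree u = #(univ.bipartiteAbove G.Adj u) := by
    simp [bipartiteAbove, ← card_neighborFinset_eq_degree, neighborFinset_eq_filter]
  simp only [hcommon, hdegree, sum_card_bipartiteAbove_eq_sum_card_bipartiteBelow]

-- Entrywise, this is the matrix inequality `A² + A + I ≤ J + D`, where `D` is the degree matrix.
lemma card_commonNeighbors_add_le [DecidableEq V] (hgirth : 5 ≤ G.egirth) (v w : V) :
    Fintype.card (G.commonNeighbors v w) + (if G.Adj v w then 1 else 0) + (if v = w then 1 else 0)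
      ≤ 1 + if v = w then G.degree v else 0 := by
  obtain rfl | hvw := eq_or_ne v w
  · simpa [add_comm] using G.card_commonNeighbors_le_degree_left v v
  by_cases hadj : G.Adj v w
  · simp [hadj, hvw, commonNeighbors_eq_empty_of_adj (le_trans (by norm_num) hgirth) hadj]
  · have hle : Fintype.card (G.commonNeighbors v w) ≤ 1 := by
      rw [Fintype.card_le_one_iff_subsingleton, Set.subsingleton_coe]
      exact subsingleton_commonNeighbors hgirth hvw
    simpa only [hadj, hvw, if_false, add_zero] using hle

lemma card_commonNeighbors_add_eq [DecidableEq V] (hcard : Fintype.card V = d ^ 2 + 1)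
    (hreg : G.IsRegularOfDegree d) (hgirth : 5 ≤ G.egirth) (v w : V) :
    Fintype.card (G.commonNeighbors v w) + (if G.Adj v w then 1 else 0) + (if v = w then 1 else 0)
      = 1 + if v = w then G.degree v else 0 := by
  refine (sum_eq_sum_iff_of_le fun w _ ↦ card_commonNeighbors_add_le hgirth v w).mp ?_ w
    (mem_univ w)
  have hdegree : #{w | G.Adj v w} = d := by
    rw [← neighborFinset_eq_filter, card_neighborFinset_eq_degree, hreg v]
  simp only [sum_add_distrib, sum_card_commonNeighbors, hreg.degree_eq, sum_const, smul_eq_mul,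
    card_neighborFinset_eq_degree, sum_boole, hdegree, filter_eq, card_singleton, sum_ite_eq,
    mem_univ, if_true, card_univ, hcard, Nat.cast_id]
  ring

theorem isSRGWith_of_five_le_egirth (hcard : Fintype.card V = d ^ 2 + 1)
    (hreg : G.IsRegularOfDegree d) (hgirth : 5 ≤ G.egirth) : G.IsSRGWith (d ^ 2 + 1) d 0 1 := by
  classical
  refine ⟨hcard, hreg, fun v w hadj ↦ ?_, fun v w hvw hadj ↦ ?_⟩
  · simpa [hadj, hadj.ne] using card_commonNeighbors_add_eq hcard hreg hgirth v w
  · simpa [hadj, hvw] using card_commonNeighbors_add_eq hcard hreg hgirth v w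

end MooreGraph

section Idempotent

variable {K : Type*} [Field K]

lemma exists_trace_eq_natCast_of_isIdempotentElem {ι : Type*} [Fintype ι] {E : Matrix ι ι K}
    (hE : IsIdempotentElem E) : ∃ m : ℕ, E.trace = m := by
  classical
  have hlin : IsIdempotentElem E.toLin' := hE.map Matrix.toLinAlgEquiv'
  have hproj := LinearMap.IsIdempotentElem.isProj_range _ hlin
  exact ⟨_, by rw [← Matrix.trace_toLin'_eq, hproj.trace]⟩

-- Since `(a - θ) * (a - τ)` vanishes modulo `j`, the element `a - τ` is `θ - τ` times an idempotent
-- modulo `j`; the multiple of `j` subtracted removes the eigenvalue `k - τ` of `a - τ` on `j`.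
lemma isIdempotentElem_inv_smul_sub_smul {R : Type*} [Ring R] [Algebra K R] {a j : R}
    {θ τ k n μ : K} (hn : n ≠ 0) (hθτ : θ ≠ τ) (haj : a * j = k • j) (hja : j * a = k • j)
    (hjj : j * j = n • j) (hquad : (a - θ • 1) * (a - τ • 1) = μ • j)
    (hparam : (k - θ) * (k - τ) = μ * n) :
    IsIdempotentElem ((θ - τ)⁻¹ • (a - τ • 1 - ((k - τ) / n) • j)) := by
  set c := (k - τ) / n with hc
  have hcn : c * n = k - τ := div_mul_cancel₀ _ hn
  have hcμ : c * (k - θ) = μ := by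
    rw [hc, div_mul_eq_mul_div, mul_comm, hparam, mul_div_cancel_right₀ _ hn]
  have haa : a * a = μ • j + (θ + τ) • a - (θ * τ) • (1 : R) := by
    rw [← hquad]
    simp only [sub_mul, mul_sub, smul_mul_assoc, mul_smul_comm, one_mul, mul_one]
    module
  have hsq : (a - τ • 1 - c • j) * (a - τ • 1 - c • j) = (θ - τ) • (a - τ • 1 - c • j) := by
    simp only [sub_mul, mul_sub, smul_mul_assoc, mul_smul_comm, one_mul, mul_one, haj, hja, haa,
      hjj]
    match_scalars
    · linear_combination c * hcn - hcμ
    · ring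
    · ring
  rw [IsIdempotentElem, smul_mul_smul_comm, hsq, smul_smul, mul_assoc,
    inv_mul_cancel₀ (sub_ne_zero.mpr hθτ), mul_one]

end Idempotent

section StronglyRegular

variable {V : Type*} [Fintype V] {G : SimpleGraph V} [DecidableRel G.Adj] {n k ℓ μ : ℕ}

lemma adjMatrix_mul_of_one {α : Type*} [NonAssocSemiring α] (hreg : G.IsRegularOfDegree k) :
    G.adjMatrix α * of 1 = (k : α) • of 1 := by
  ext v w
  simp [adjMatrix_mul_apply, hreg.degree_eq]

lemma of_one_mul_adjMatrix {α : Type*} [NonAssocSemiring α] (hreg : G.IsRegularOfDegree k) :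
    of 1 * G.adjMatrix α = (k : α) • of 1 := by
  ext v w
  simp [mul_adjMatrix_apply, hreg.degree_eq]

lemma of_one_mul_of_one {α : Type*} [NonAssocSemiring α] :
    (of 1 * of 1 : Matrix V V α) = (Fintype.card V : α) • of 1 := by
  ext v w
  simp [Matrix.mul_apply]

variable {K : Type*} [Field K] {θ τ : K}

lemma adjMatrix_sub_mul_sub_of_isSRGWith [DecidableEq V] (h : G.IsSRGWith n k ℓ μ)
    (hsum : θ + τ = ℓ - μ) (hprod : θ * τ = μ - k) :
    (G.adjMatrix K - θ • 1) * (G.adjMatrix K - τ • 1) = (μ : K) • of 1 := by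
  classical
  have hcompl : Gᶜ.adjMatrix K = of 1 - 1 - G.adjMatrix K := by
    rw [← compl_adjMatrix_eq_adjMatrix_compl, ← one_add_adjMatrix_add_compl_adjMatrix_eq_of_one K G]
    abel
  have hsq := h.matrix_eq (α := K)
  rw [hcompl, sq] at hsq
  simp only [sub_mul, mul_sub, smul_mul_assoc, mul_smul_comm, one_mul, mul_one, hsq]
  match_scalars
  · linear_combination hprod
  · linear_combination -hsum
  · ring

lemma degree_sub_mul_degree_sub_of_isSRGWith [Nonempty V] (h : G.IsSRGWith n k ℓ μ)
    (hsum : θ + τ = ℓ - μ) (hprod : θ * τ = μ - k) :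
    ((k : K) - θ) * (k - τ) = μ * n := by
  classical
  obtain ⟨v⟩ := ‹Nonempty V›
  have hmul := congrArg (· * (of 1 : Matrix V V K))
    (adjMatrix_sub_mul_sub_of_isSRGWith h hsum hprod)
  simp only [Matrix.mul_assoc, sub_mul, mul_sub, smul_mul_assoc, mul_smul_comm, one_mul,
    adjMatrix_mul_of_one h.regular, of_one_mul_of_one, h.card] at hmul
  have hentry := congrFun₂ hmul v v
  simp only [Matrix.sub_apply, Matrix.smul_apply, of_apply, Pi.one_apply, smul_eq_mul,
    mul_one] at hentry
  linear_combination hentry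

-- `m` is the multiplicity of the eigenvalue `θ` on the complement of the constant vectors.
theorem exists_degree_add_mul_add_mul_eq_zero_of_isSRGWith (h : G.IsSRGWith n k ℓ μ)
    (hn : (n : K) ≠ 0) (hθτ : θ ≠ τ) (hsum : θ + τ = ℓ - μ) (hprod : θ * τ = μ - k) :
    ∃ m : ℕ, (k : K) + m * θ + (n - 1 - m) * τ = 0 := by
  classical
  have : Nonempty V := by
    rw [← Fintype.card_pos_iff, h.card]
    exact Nat.pos_of_ne_zero fun h0 ↦ hn (by simp [h0])
  have hJJ : (of 1 * of 1 : Matrix V V K) = (n : K) • of 1 := by rw [of_one_mul_of_one, h.card]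
  obtain ⟨m, hm⟩ := exists_trace_eq_natCast_of_isIdempotentElem <|
    isIdempotentElem_inv_smul_sub_smul hn hθτ (adjMatrix_mul_of_one h.regular)
      (of_one_mul_adjMatrix h.regular) hJJ (adjMatrix_sub_mul_sub_of_isSRGWith h hsum hprod)
      (degree_sub_mul_degree_sub_of_isSRGWith h hsum hprod)
  have hJ : (of 1 : Matrix V V K).trace = n := by simp [Matrix.trace, h.card]
  rw [trace_smul, trace_sub, trace_sub, trace_adjMatrix, trace_smul, trace_smul, trace_one, hJ,
    h.card, smul_eq_mul, smul_eq_mul, smul_eq_mul, div_mul_cancel₀ _ hn,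
    inv_mul_eq_iff_eq_mul₀ (sub_ne_zero.mpr hθτ)] at hm
  exact ⟨m, by linear_combination -hm⟩

theorem exists_sq_mul_eq_sq_of_isSRGWith (h : G.IsSRGWith n k ℓ μ) (hn : n ≠ 0)
    (hdisc : ((ℓ : ℤ) - μ) ^ 2 + 4 * (k - μ) ≠ 0) :
    ∃ m : ℕ, (2 * m - (n - 1) : ℤ) ^ 2 * ((ℓ - μ) ^ 2 + 4 * (k - μ))
      = ((n - 1) * (μ - ℓ) - 2 * k) ^ 2 := by
  obtain ⟨s, hs⟩ := IsAlgClosed.exists_pow_nat_eq (((ℓ : ℂ) - μ) ^ 2 + 4 * (k - μ)) two_pos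
  have hs0 : s ≠ 0 := by
    rintro rfl
    rw [zero_pow two_ne_zero] at hs
    exact hdisc (by exact_mod_cast hs.symm)
  obtain ⟨m, hm⟩ := exists_degree_add_mul_add_mul_eq_zero_of_isSRGWith (K := ℂ)
    (θ := (ℓ - μ + s) / 2) (τ := (ℓ - μ - s) / 2) h (Nat.cast_ne_zero.mpr hn)
    (fun heq ↦ hs0 (by linear_combination heq)) (by ring) (by linear_combination -hs / 4)
  have hlin : (2 * m - (n - 1)) * s = (n - 1) * (μ - ℓ) - 2 * k := by linear_combination 2 * hm
  refine ⟨m, ?_⟩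
  have hsq : (2 * m - (n - 1) : ℂ) ^ 2 * ((ℓ - μ) ^ 2 + 4 * (k - μ))
      = ((n - 1) * (μ - ℓ) - 2 * k) ^ 2 := by rw [← hs, ← mul_pow, hlin]
  exact_mod_cast hsq

end StronglyRegular

lemma exists_sq_eq_and_eq_mul_of_sq_mul_eq_sq {a b D : ℤ} (hb : b ≠ 0)
    (h : a ^ 2 * D = b ^ 2) : ∃ s, s ^ 2 = D ∧ b = a * s := by
  obtain ⟨s, rfl⟩ : a ∣ b := (Int.pow_dvd_pow_iff two_ne_zero).mp ⟨D, h.symm⟩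
  refine ⟨s, mul_left_cancel₀ (pow_ne_zero 2 (left_ne_zero_of_mul hb)) ?_, rfl⟩
  rw [h, mul_pow]

lemma dvd_fifteen_of_sq_eq {d s : ℤ} (hs : s ^ 2 = 4 * d - 3) (hdvd : s ∣ d ^ 2 - 2 * d) :
    s ∣ 15 := by
  have hident : 15 = s * (s ^ 3 - 2 * s) - 16 * (d ^ 2 - 2 * d) := by
    linear_combination -(s ^ 2 + 4 * d - 5) * hs
  rw [hident]
  exact (dvd_mul_right _ _).sub (hdvd.mul_left 16)

lemma eq_of_sq_eq_of_dvd_fifteen {d s : ℤ} (hs : s ^ 2 = 4 * d - 3) (hdvd : s ∣ 15) :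
    d = 1 ∨ d = 3 ∨ d = 7 ∨ d = 57 := by
  have hmem : s.natAbs ∈ Nat.divisors 15 :=
    Nat.mem_divisors.mpr ⟨Int.natAbs_dvd_natAbs.mpr hdvd, by norm_num⟩
  have hdivisors : Nat.divisors 15 = {1, 3, 5, 15} := by decide
  rw [← Int.natAbs_sq] at hs
  simp only [hdivisors, mem_insert, mem_singleton] at hmem
  rcases hmem with h | h | h | h <;> rw [h] at hs <;> omega

/-- **Hoffman–Singleton theorem.** If there is a `d`-regular graph on `d² + 1` vertices with
girth at least `5`, then `d ∈ {1, 2, 3, 7, 57}`. -/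
theorem hoffman_singleton {V : Type} [Fintype V] (G : SimpleGraph V) [DecidableRel G.Adj]
    (d : ℕ) (hd : 0 < d)
    (hcard : Fintype.card V = d ^ 2 + 1)
    (hreg : G.IsRegularOfDegree d)
    (hgirth : (5 : ℕ∞) ≤ G.egirth) :
    d = 1 ∨ d = 2 ∨ d = 3 ∨ d = 7 ∨ d = 57 := by
  obtain rfl | hd2 := eq_or_ne d 2
  · simp
  have hsrg : G.IsSRGWith (d ^ 2 + 1) d 0 1 := isSRGWith_of_five_le_egirth hcard hreg hgirth
  obtain ⟨m, hm⟩ := exists_sq_mul_eq_sq_of_isSRGWith hsrg (by positivity) (by push_cast; omega)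
  have hm' : (2 * m - d ^ 2 : ℤ) ^ 2 * (4 * d - 3) = (d ^ 2 - 2 * d) ^ 2 := by
    push_cast at hm
    linear_combination hm
  have hne : (d : ℤ) ^ 2 - 2 * d ≠ 0 := by
    rw [sq, ← sub_mul]
    exact mul_ne_zero (by omega) (by omega)
  obtain ⟨s, hs, hmul⟩ := exists_sq_eq_and_eq_mul_of_sq_mul_eq_sq hne hm'
  have hdvd : s ∣ 15 := dvd_fifteen_of_sq_eq hs ⟨_, hmul.trans (mul_comm _ _)⟩
  have hd' := eq_of_sq_eq_of_dvd_fifteen hs hdvd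
  omega
end

section
/- Let d ≥ 3 and g ≥ 5 be integers. If there exists a finite simple graph G that is d-regular, has exactly n₀(d,g) vertices, and has girth at least g, then g ∈ {5, 6, 8, 12}. -/
namespace MooreGraph

open Polynomial Matrix

/-! ### Dickson polynomials and ball polynomials -/

section Polynomials

variable {R S : Type*} [CommRing R] [CommRing S]

lemma dickson_two_zero_eq_one (a : R) : dickson 2 a 0 = 1 := by
  rw [dickson_zero]
  norm_num

lemma eval_dickson_two_zero (a x : R) : (dickson 2 a 0).eval x = 1 := by
  rw [dickson_two_zero_eq_one, eval_one]

lemma eval_dickson_add_two (k : ℕ) (a x : R) (n : ℕ) :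
    (dickson k a (n + 2)).eval x
      = x * (dickson k a (n + 1)).eval x - a * (dickson k a n).eval x := by
  simp [dickson_add_two]

lemma isMonicOfDegree_dickson_two [Nontrivial R] (a : R) (n : ℕ) :
    IsMonicOfDegree (dickson 2 a n) n := by
  induction n using Nat.twoStepInduction with
  | zero => rw [isMonicOfDegree_zero_iff, dickson_two_zero_eq_one]
  | one => simpa using isMonicOfDegree_X R
  | more n ihn ihn₁ =>
    rw [dickson_add_two, add_comm n 2, ← one_add_one_eq_two, add_assoc, add_comm 1 n]
    refine ((isMonicOfDegree_X R).mul ihn₁).sub ?_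
    calc (C a * dickson 2 a n).natDegree ≤ (dickson 2 a n).natDegree := natDegree_C_mul_le _ _
      _ < 1 + (n + 1) := by rw [ihn.natDegree_eq]; lia

lemma coeff_dickson_two_succ (a : R) (n : ℕ) : (dickson 2 a (n + 1)).coeff n = 0 := by
  nontriviality R
  induction n with
  | zero => simp
  | succ n ih =>
    have hcoeff : (dickson 2 a n).coeff (n + 1) = 0 :=
      coeff_eq_zero_of_natDegree_lt <| by simp [(isMonicOfDegree_dickson_two a n).natDegree_eq]
    rw [dickson_add_two, coeff_sub, coeff_X_mul, coeff_C_mul, ih, hcoeff, mul_zero, sub_zero]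

lemma eval_dickson_two_ne_zero_of_succ [IsDomain R] {a x : R} (ha : a ≠ 0) {n : ℕ}
    (h : (dickson 2 a (n + 1)).eval x = 0) : (dickson 2 a n).eval x ≠ 0 := by
  induction n with
  | zero => rw [eval_dickson_two_zero]; exact one_ne_zero
  | succ n ih =>
    intro h₁
    rw [eval_dickson_add_two, h₁, mul_zero, zero_sub, neg_eq_zero, mul_eq_zero] at h
    exact ih h₁ (h.resolve_left ha)

lemma eval_dickson_two_add_one (a : R) (n : ℕ) :
    (dickson 2 a n).eval (a + 1) = ∑ i ∈ Finset.range (n + 1), a ^ i := by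
  induction n using Nat.twoStepInduction with
  | zero => rw [eval_dickson_two_zero, zero_add, geom_sum_one]
  | one => simp [Finset.sum_range_succ, add_comm]
  | more n ihn ihn₁ =>
    rw [eval_dickson_add_two, ihn, ihn₁, Finset.sum_range_succ _ (n + 2),
      Finset.sum_range_succ _ (n + 1)]
    ring

lemma sub_mul_sum_eval_dickson_two (a x : R) (n : ℕ) :
    (a + 1 - x) * ∑ i ∈ Finset.range (n + 1), (dickson 2 a i).eval x
      = 1 - (dickson 2 a (n + 1)).eval x + a * (dickson 2 a n).eval x := by
  induction n with
  | zero =>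
    simp only [zero_add, Finset.range_one, Finset.sum_singleton, eval_dickson_two_zero, dickson_one,
      eval_X]
    ring
  | succ n ih =>
    rw [Finset.sum_range_succ, mul_add, ih, eval_dickson_add_two]
    ring

lemma sq_sub_mul_derivative_dickson_two (a : R) (n : ℕ) :
    (X ^ 2 - 4 * C a) * derivative (dickson 2 a n)
      = 2 * ((n : R[X]) + 1) * dickson 2 a (n + 1) - ((n : R[X]) + 2) * X * dickson 2 a n := by
  induction n using Nat.twoStepInduction with
  | zero => simp [-dickson_zero, dickson_two_zero_eq_one]
  | one =>
    simp only [dickson_add_two 2 a 0, zero_add, dickson_one, dickson_two_zero_eq_one, derivative_X,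
      Nat.cast_one]
    ring
  | more n ihn ihn₁ =>
    simp only [dickson_add_two, derivative_sub, derivative_mul, derivative_X, derivative_C]
      at ihn ihn₁ ⊢
    push_cast at ihn ihn₁ ⊢
    linear_combination X * ihn₁ - C a * ihn

lemma sq_sub_mul_eval_derivative_dickson_two (a x : R) (n : ℕ) :
    (x ^ 2 - 4 * a) * (derivative (dickson 2 a n)).eval x
      = 2 * (n + 1) * (dickson 2 a (n + 1)).eval x - (n + 2) * x * (dickson 2 a n).eval x := by
  simpa using congrArg (eval x) (sq_sub_mul_derivative_dickson_two a n)

/-- The sum of the `n`-th and the `(n - 1)`-st Dickson polynomial of the second kind. With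
`a = d - 1` it represents the balls of radius `n` in a `d`-regular graph of large girth. -/
noncomputable def ballPoly (a : R) : ℕ → R[X]
  | 0 => 1
  | n + 1 => dickson 2 a (n + 1) + dickson 2 a n

lemma ballPoly_one (a : R) : ballPoly a 1 = X + 1 := by
  rw [ballPoly, dickson_one, dickson_two_zero_eq_one]

lemma ballPoly_add_two (a : R) (n : ℕ) :
    ballPoly a (n + 2) = X * ballPoly a (n + 1) - C a * ballPoly a n := by
  cases n <;> simp only [ballPoly, dickson_add_two, dickson_two_zero_eq_one, dickson_one] <;> ring

lemma X_add_C_mul_dickson_two_succ (a : R) (n : ℕ) :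
    (X + C (a + 1)) * dickson 2 a (n + 1)
      = X * ballPoly a (n + 1) + C a * (ballPoly a (n + 1) - ballPoly a n) := by
  cases n <;> simp only [ballPoly, dickson_add_two, zero_add, dickson_one,
    dickson_two_zero_eq_one, C_add, C_1] <;> ring

lemma map_ballPoly (f : R →+* S) (a : R) (n : ℕ) :
    (ballPoly a n).map f = ballPoly (f a) n := by
  cases n <;> simp [ballPoly, map_dickson]

lemma isMonicOfDegree_ballPoly [Nontrivial R] (a : R) (n : ℕ) :
    IsMonicOfDegree (ballPoly a n) n := by
  cases n with
  | zero => simp [ballPoly]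
  | succ n =>
    refine (isMonicOfDegree_dickson_two a (n + 1)).add_right ?_
    rw [(isMonicOfDegree_dickson_two a n).natDegree_eq]
    exact n.lt_succ_self

lemma nextCoeff_ballPoly_succ [Nontrivial R] (a : R) (n : ℕ) :
    (ballPoly a (n + 1)).nextCoeff = 1 := by
  have hdeg := (isMonicOfDegree_ballPoly a (n + 1)).natDegree_eq
  have hlead : (dickson 2 a n).coeff n = 1 :=
    ((isMonicOfDegree_iff _ n).mp (isMonicOfDegree_dickson_two a n)).2
  rw [nextCoeff_of_natDegree_pos (by lia), hdeg, Nat.add_sub_cancel, ballPoly, coeff_add,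
    coeff_dickson_two_succ, hlead, zero_add]

lemma eval_ballPoly_add_one (a : R) (n : ℕ) :
    (ballPoly a n).eval (a + 1) = 1 + (a + 1) * ∑ i ∈ Finset.range n, a ^ i := by
  cases n with
  | zero => simp [ballPoly]
  | succ n =>
    rw [ballPoly, eval_add, eval_dickson_two_add_one, eval_dickson_two_add_one, geom_sum_succ]
    ring

/-- A Christoffel–Darboux type kernel: the quotient of `ballPoly a (n + 1)`, minus its value
at `x`, by `X - x`. -/
noncomputable def ballKernel (a x : R) (n : ℕ) : R[X] :=
  ∑ ij ∈ Finset.HasAntidiagonal.antidiagonal n, C ((dickson 2 a ij.1).eval x) * ballPoly a ij.2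

lemma ballKernel_zero (a x : R) : ballKernel a x 0 = 1 := by
  simp [-dickson_zero, ballKernel, eval_dickson_two_zero, ballPoly]

lemma ballKernel_one (a x : R) : ballKernel a x 1 = ballPoly a 1 + C x := by
  simp [-dickson_zero, ballKernel, Finset.Nat.antidiagonal_succ, eval_dickson_two_zero, ballPoly]

lemma ballKernel_add_two (a x : R) (n : ℕ) :
    ballKernel a x (n + 2)
      = C x * ballKernel a x (n + 1) - C a * ballKernel a x n + ballPoly a (n + 2) := by
  simp only [ballKernel, Finset.Nat.antidiagonal_succ, Finset.sum_cons, Finset.sum_map,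
    Function.Embedding.prodMap, Function.Embedding.coeFn_mk, Prod.map,
    Function.Embedding.refl_apply, Nat.succ_eq_add_one, zero_add, eval_dickson_add_two,
    eval_dickson_two_zero, dickson_one, eval_X, C_sub, C_mul, sub_mul, mul_assoc,
    Finset.sum_sub_distrib, ← Finset.mul_sum, C_1]
  ring

lemma X_sub_C_mul_ballKernel (a x : R) (n : ℕ) :
    (X - C x) * ballKernel a x n = ballPoly a (n + 1) - C ((ballPoly a (n + 1)).eval x) := by
  induction n using Nat.twoStepInduction with
  | zero => simp [ballKernel_zero, ballPoly_one]
  | one =>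
    rw [ballKernel_one, ballPoly_add_two a 0, zero_add, ballPoly_one]
    simp only [ballPoly, eval_sub, eval_mul, eval_X,
      eval_add, eval_one, eval_C, C_sub, C_mul, C_add, C_1]
    ring
  | more n ihn ihn₁ =>
    rw [ballKernel_add_two, ballPoly_add_two a (n + 1)]
    simp only [eval_sub, eval_mul, eval_X, eval_C, C_sub, C_mul]
    linear_combination C x * ihn₁ - C a * ihn

lemma X_sub_C_mul_ballKernel_succ_add (a x : R) (n : ℕ) :
    (X - C x) * (ballKernel a x (n + 1) + C a * ballKernel a x n)
      = (X + C (a + 1)) * dickson 2 a (n + 1)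
        - C (((X + C (a + 1)) * dickson 2 a (n + 1)).eval x) := by
  have hP : (X + C (a + 1)) * dickson 2 a (n + 1)
      = ballPoly a (n + 2) + C a * ballPoly a (n + 1) := by
    rw [X_add_C_mul_dickson_two_succ, ballPoly_add_two]
    ring
  rw [hP, eval_add, eval_C_mul, C_add, C_mul]
  linear_combination X_sub_C_mul_ballKernel a x (n + 1) + C a * X_sub_C_mul_ballKernel a x n

end Polynomials

/-! ### Short paths in graphs of large girth -/

section Girth

variable {V : Type*} {G : SimpleGraph V} {u v x : V}

lemma egirth_le_length_add_length {p q : G.Walk u v} (hp : p.IsPath) (hq : q.IsPath)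
    (hpq : p ≠ q) : G.egirth ≤ (p.length + q.length : ℕ) := by
  obtain ⟨_, -, -, c, hc, hlen⟩ := hp.exists_isCycle_length_le_add_of_ne hq hpq
  exact (SimpleGraph.egirth_le_length hc).trans (Nat.cast_le.mpr hlen)

lemma exists_isPath_of_edist_le {i : ℕ} (h : G.edist u v ≤ i) :
    ∃ p : G.Walk u v, p.IsPath ∧ p.length ≤ i := by
  classical
  have hne : G.edist u v ≠ ⊤ := (h.trans_lt (ENat.natCast_lt_top i)).ne
  obtain ⟨w, hw⟩ := SimpleGraph.exists_walk_of_edist_ne_top hne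
  exact ⟨w.bypass, w.bypass_isPath,
    w.length_bypass_le_length.trans (Nat.cast_le.mp (hw.trans_le h))⟩

lemma edist_le_succ_of_adj {i : ℕ} (hux : G.Adj u x) (h : G.edist x v ≤ i) :
    G.edist u v ≤ (i + 1 : ℕ) := by
  obtain ⟨p, -, hp⟩ := exists_isPath_of_edist_le h
  exact (SimpleGraph.edist_le (p.cons hux)).trans (by simpa using hp)

lemma exists_adj_edist_le {i : ℕ} (huv : u ≠ v) (h : G.edist u v ≤ (i + 1 : ℕ)) :
    ∃ x, G.Adj u x ∧ G.edist x v ≤ i := by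
  obtain ⟨p, -, hp⟩ := exists_isPath_of_edist_le h
  cases p with
  | nil => exact absurd rfl huv
  | cons hux p =>
    exact ⟨_, hux, (SimpleGraph.edist_le p).trans (Nat.cast_le.mpr (Nat.succ_le_succ_iff.mp hp))⟩

lemma isPath_cons_of_lt_edist {i : ℕ} (hu : i < G.edist u v) (hux : G.Adj u x) {p : G.Walk x v}
    (hp : p.IsPath) (hlen : p.length ≤ i + 1) : (p.cons hux).IsPath := by
  classical
  refine (SimpleGraph.Walk.cons_isPath_iff hux p).mpr ⟨hp, fun hmem ↦ hu.not_ge ?_⟩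
  have hlt := p.length_dropUntil_lt_length hmem hux.ne
  exact (SimpleGraph.edist_le (p.dropUntil u hmem)).trans (Nat.cast_le.mpr (by lia))

lemma snd_eq_of_adj_of_edist_le {i : ℕ} {r : G.Walk u v} (hr : r.IsPath) (hu : i < G.edist u v)
    (hux : G.Adj u x) (hx : G.edist x v ≤ (i + 1 : ℕ))
    (hgirth : (i + 2 + r.length : ℕ) < G.egirth) : r.snd = x := by
  obtain ⟨p, hp, hlen⟩ := exists_isPath_of_edist_le hx
  by_contra hne
  have hpr : p.cons hux ≠ r := by
    rintro rfl
    exact hne (SimpleGraph.Walk.snd_cons p hux)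
  have hle := egirth_le_length_add_length (isPath_cons_of_lt_edist hu hux hp hlen) hr hpr
  refine (hgirth.trans_le hle).not_ge (Nat.cast_le.mpr ?_)
  rw [SimpleGraph.Walk.length_cons]
  lia

end Girth

section NeighborCounts

open scoped Classical in
/-- The neighbours of `u` within distance `i` of `v`; their numbers are the entries of the product
of the adjacency matrix with the ball matrix of radius `i`. -/
noncomputable def neighborsWithin {V : Type*} (G : SimpleGraph V) [G.LocallyFinite] (i : ℕ)
    (u v : V) : Finset V :=
  {x ∈ G.neighborFinset u | G.edist x v ≤ i}

variable {V : Type*} {G : SimpleGraph V} [G.LocallyFinite] {u v x : V} {i d : ℕ}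

lemma mem_neighborsWithin : x ∈ neighborsWithin G i u v ↔ G.Adj u x ∧ G.edist x v ≤ i := by
  simp [neighborsWithin]

lemma card_neighborsWithin_le (hreg : G.IsRegularOfDegree d) : (neighborsWithin G i u v).card ≤ d :=
  (Finset.card_filter_le _ _).trans_eq (hreg u)

lemma card_neighborsWithin_of_edist_le (hreg : G.IsRegularOfDegree d) (hu : G.edist u v ≤ i) :
    (neighborsWithin G (i + 1) u v).card = d := by
  classical
  rw [neighborsWithin, Finset.filter_true_of_mem, G.card_neighborFinset_eq_degree, hreg u]
  intro x hx
  exact edist_le_succ_of_adj ((G.mem_neighborFinset u x).mp hx).symm hu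

lemma neighborsWithin_eq_empty (hu : (i + 1 : ℕ) < G.edist u v) :
    neighborsWithin G i u v = ∅ := by
  refine Finset.eq_empty_of_forall_notMem fun x hx ↦ hu.not_ge ?_
  obtain ⟨hux, hxv⟩ := mem_neighborsWithin.mp hx
  exact edist_le_succ_of_adj hux hxv

lemma card_neighborsWithin_le_one {r : G.Walk u v} (hr : r.IsPath) (hu : i < G.edist u v)
    (hgirth : (i + 2 + r.length : ℕ) < G.egirth) : (neighborsWithin G (i + 1) u v).card ≤ 1 := by
  refine (Finset.card_le_card fun x hx ↦ ?_).trans_eq (Finset.card_singleton r.snd)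
  obtain ⟨hux, hxv⟩ := mem_neighborsWithin.mp hx
  exact Finset.mem_singleton.mpr (snd_eq_of_adj_of_edist_le hr hu hux hxv hgirth).symm

lemma card_neighborsWithin_eq_one (hu : i < G.edist u v) (hu₂ : G.edist u v ≤ (i + 2 : ℕ))
    (hgirth : (2 * (i + 2) : ℕ) < G.egirth) : (neighborsWithin G (i + 1) u v).card = 1 := by
  obtain ⟨r, hr, hlen⟩ := exists_isPath_of_edist_le hu₂
  have huv : u ≠ v := by
    rintro rfl
    simp at hu
  obtain ⟨x, hux, hxv⟩ := exists_adj_edist_le huv hu₂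
  have hle := card_neighborsWithin_le_one hr hu (hgirth.trans_le' (Nat.cast_le.mpr (by lia)))
  exact hle.antisymm (Finset.card_pos.mpr ⟨x, mem_neighborsWithin.mpr ⟨hux, hxv⟩⟩)

end NeighborCounts

/-! ### Ball matrices as polynomials in the adjacency matrix -/

section BallMatrix

variable {V : Type*} {G : SimpleGraph V}

open scoped Classical in
/-- The 0-1 matrix of the relation `G.edist u v ≤ i`, whose rows are the indicator functions of the
closed balls of radius `i`. -/
noncomputable def ballMatrix (R : Type*) [Zero R] [One R] (G : SimpleGraph V) (i : ℕ) :
    Matrix V V R :=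
  Matrix.of fun u v ↦ if G.edist u v ≤ i then 1 else 0

lemma ballMatrix_apply_of_le {R : Type*} [Zero R] [One R] {i : ℕ} {u v : V}
    (h : G.edist u v ≤ i) : ballMatrix R G i u v = 1 :=
  if_pos h

lemma ballMatrix_apply_of_lt {R : Type*} [Zero R] [One R] {i : ℕ} {u v : V}
    (h : i < G.edist u v) : ballMatrix R G i u v = 0 :=
  if_neg h.not_ge

variable {R : Type*} [CommRing R]

lemma ballMatrix_zero [DecidableEq V] : ballMatrix R G 0 = 1 := by
  ext u v
  simp [ballMatrix, Matrix.one_apply]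

lemma ballMatrix_one [DecidableEq V] [DecidableRel G.Adj] :
    ballMatrix R G 1 = G.adjMatrix R + 1 := by
  ext u v
  rcases eq_or_ne u v with rfl | huv
  · simp [ballMatrix]
  · simp [ballMatrix, SimpleGraph.edist_le_one_iff_adj_or_eq, huv]

variable [Fintype V] {d i : ℕ}

lemma trace_ballMatrix : (ballMatrix R G i).trace = Fintype.card V := by
  simp [Matrix.trace, ballMatrix]

variable [DecidableRel G.Adj]

lemma adjMatrix_mul_ballMatrix_apply (u v : V) :
    (G.adjMatrix R * ballMatrix R G i) u v = (neighborsWithin G i u v).card := by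
  simp [SimpleGraph.adjMatrix_mul_apply, ballMatrix, neighborsWithin]

lemma adjMatrix_mul_ballMatrix (hreg : G.IsRegularOfDegree d)
    (hgirth : (2 * (i + 2) : ℕ) < G.egirth) :
    G.adjMatrix R * ballMatrix R G (i + 1)
      = ballMatrix R G (i + 2) + ((d : R) - 1) • ballMatrix R G i := by
  ext u v
  rw [adjMatrix_mul_ballMatrix_apply, Matrix.add_apply, Matrix.smul_apply, smul_eq_mul]
  rcases le_or_gt (G.edist u v) i with hu | hu
  · have hu₂ : G.edist u v ≤ (i + 2 : ℕ) := hu.trans (Nat.cast_le.mpr (by lia))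
    rw [card_neighborsWithin_of_edist_le hreg hu, ballMatrix_apply_of_le hu,
      ballMatrix_apply_of_le hu₂]
    ring
  rcases le_or_gt (G.edist u v) (i + 2 : ℕ) with hu₂ | hu₂
  · rw [card_neighborsWithin_eq_one hu hu₂ hgirth, ballMatrix_apply_of_lt hu,
      ballMatrix_apply_of_le hu₂]
    simp
  · rw [neighborsWithin_eq_empty hu₂, ballMatrix_apply_of_lt hu, ballMatrix_apply_of_lt hu₂]
    simp

lemma aeval_adjMatrix_ballPoly [DecidableEq V] (hreg : G.IsRegularOfDegree d)
    (hgirth : (2 * i : ℕ) < G.egirth) :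
    aeval (G.adjMatrix R) (ballPoly ((d : R) - 1) i) = ballMatrix R G i := by
  induction i using Nat.twoStepInduction with
  | zero => rw [ballPoly, aeval_one, ballMatrix_zero]
  | one => rw [ballPoly_one, map_add, aeval_X, aeval_one, ballMatrix_one]
  | more i ih ih₁ =>
    specialize ih (hgirth.trans_le' (Nat.cast_le.mpr (by lia)))
    specialize ih₁ (hgirth.trans_le' (Nat.cast_le.mpr (by lia)))
    rw [ballPoly_add_two, map_sub, map_mul, map_mul, aeval_X, aeval_C, ih, ih₁,
      adjMatrix_mul_ballMatrix hreg hgirth, Algebra.smul_def, add_sub_cancel_right]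

lemma adjMatrix_mul_ballMatrix_add_apply_le [LinearOrder R] [IsStrictOrderedRing R] {n : ℕ}
    (hreg : G.IsRegularOfDegree d) (hgirth : (2 * (n + 2) : ℕ) ≤ G.egirth) (u v : V) :
    (G.adjMatrix R * ballMatrix R G (n + 1)
      + ((d : R) - 1) • (ballMatrix R G (n + 1) - ballMatrix R G n)) u v ≤ d := by
  have hcard : ((neighborsWithin G (n + 1) u v).card : R) ≤ d :=
    Nat.cast_le.mpr (card_neighborsWithin_le hreg)
  rw [Matrix.add_apply, adjMatrix_mul_ballMatrix_apply, Matrix.smul_apply, Matrix.sub_apply,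
    smul_eq_mul]
  rcases le_or_gt (G.edist u v) n with hu | hu
  · have hu₁ : G.edist u v ≤ (n + 1 : ℕ) := hu.trans (Nat.cast_le.mpr n.le_succ)
    rw [ballMatrix_apply_of_le hu, ballMatrix_apply_of_le hu₁]
    linarith
  rcases le_or_gt (G.edist u v) (n + 1 : ℕ) with hu₁ | hu₁
  · obtain ⟨r, hr, hlen⟩ := exists_isPath_of_edist_le hu₁
    have hone : ((neighborsWithin G (n + 1) u v).card : R) ≤ 1 :=
      Nat.cast_le_one.mpr <| card_neighborsWithin_le_one hr hu <|
        hgirth.trans_lt' (Nat.cast_lt.mpr (by lia))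
    rw [ballMatrix_apply_of_lt hu, ballMatrix_apply_of_le hu₁]
    linarith
  · rw [ballMatrix_apply_of_lt hu, ballMatrix_apply_of_lt hu₁]
    linarith

end BallMatrix

section ConstantRowSums

variable {V R : Type*} [Fintype V] [CommRing R]

lemma aeval_mulVec_of_mulVec_eq_smul [DecidableEq V] {A : Matrix V V R} {w : V → R} {c : R}
    (h : A *ᵥ w = c • w) (p : R[X]) : aeval A p *ᵥ w = p.eval c • w := by
  rw [← Matrix.toLinAlgEquiv'_apply, ← aeval_algHom_apply]
  exact Module.End.aeval_apply_of_mem_apply_eq_smul (f := Matrix.toLinAlgEquiv' A) h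

lemma aeval_adjMatrix_mulVec_one [DecidableEq V] {G : SimpleGraph V} [DecidableRel G.Adj] {d : ℕ}
    (hreg : G.IsRegularOfDegree d) (p : R[X]) :
    aeval (G.adjMatrix R) p *ᵥ 1 = fun _ ↦ p.eval (d : R) := by
  have hA : G.adjMatrix R *ᵥ 1 = (d : R) • 1 := by
    ext u
    simp [hreg u]
  rw [aeval_mulVec_of_mulVec_eq_smul hA]
  ext u
  simp

lemma eq_of_apply_le_of_mulVec_one_eq [LinearOrder R] [IsStrictOrderedRing R] {M : Matrix V V R}
    {c : R} (hle : ∀ u v, M u v ≤ c) (hsum : M *ᵥ 1 = fun _ ↦ c * Fintype.card V) :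
    M = Matrix.of fun _ _ ↦ c := by
  ext u v
  have hrow : ∑ v, M u v = ∑ _v : V, c := by
    simpa [Matrix.mulVec, dotProduct, mul_comm] using congrFun hsum u
  exact (Finset.sum_eq_sum_iff_of_le fun v _ ↦ hle u v).mp hrow v (Finset.mem_univ v)

end ConstantRowSums

section IsMooreGraph

/-- A Moore graph of degree `d` and girth `g`: a `d`-regular graph of girth at least `g` attaining
the Moore bound on the number of vertices. -/
structure IsMooreGraph {V : Type*} [Fintype V] (G : SimpleGraph V) [DecidableRel G.Adj]
    (d g : ℕ) : Prop where
  regular : G.IsRegularOfDegree d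
  card_eq : (Fintype.card V : ℝ) = mooreBound d g
  le_egirth : (g : ℕ∞) ≤ G.egirth

lemma mooreBound_odd (d : ℝ) (h : ℕ) :
    mooreBound d (2 * h + 1) = (ballPoly (d - 1) h).eval d := by
  have heval := eval_ballPoly_add_one (d - 1) h
  rw [sub_add_cancel] at heval
  rw [mooreBound, if_pos (odd_two_mul_add_one h), heval, show (2 * h + 1) / 2 = h by lia]

lemma mul_mooreBound_even (d : ℝ) (n : ℕ) :
    d * mooreBound d (2 * (n + 2)) = ((X + C d) * dickson 2 (d - 1) (n + 1)).eval d := by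
  have heval := eval_dickson_two_add_one (d - 1) (n + 1)
  rw [sub_add_cancel] at heval
  rw [mooreBound, if_neg (Nat.not_odd_iff_even.mpr (even_two_mul _)), eval_mul, heval,
    Nat.mul_div_cancel_left _ two_pos, eval_add, eval_X, eval_C]
  ring

variable {V : Type*} [Fintype V] [DecidableEq V] {G : SimpleGraph V} [DecidableRel G.Adj] {d : ℕ}

lemma IsMooreGraph.aeval_adjMatrix_odd {h : ℕ} (hG : IsMooreGraph G d (2 * h + 1)) :
    aeval (G.adjMatrix ℝ) (ballPoly ((d : ℝ) - 1) h) = Matrix.of fun _ _ ↦ 1 := by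
  refine eq_of_apply_le_of_mulVec_one_eq (fun u v ↦ ?_) ?_
  · have hgirth : (2 * h : ℕ) < G.egirth :=
      hG.le_egirth.trans_lt' (Nat.cast_lt.mpr (2 * h).lt_succ_self)
    rw [aeval_adjMatrix_ballPoly hG.regular hgirth]
    exact ite_le_one le_rfl zero_le_one
  · rw [aeval_adjMatrix_mulVec_one hG.regular, one_mul, hG.card_eq, mooreBound_odd]

lemma IsMooreGraph.aeval_adjMatrix_even {n : ℕ} (hG : IsMooreGraph G d (2 * (n + 2))) :
    aeval (G.adjMatrix ℝ) ((X + C (d : ℝ)) * dickson 2 ((d : ℝ) - 1) (n + 1))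
      = Matrix.of fun _ _ ↦ (d : ℝ) := by
  have hpoly := X_add_C_mul_dickson_two_succ ((d : ℝ) - 1) n
  rw [sub_add_cancel] at hpoly
  have hball {i : ℕ} (hi : i ≤ n + 1) :
      aeval (G.adjMatrix ℝ) (ballPoly ((d : ℝ) - 1) i) = ballMatrix ℝ G i :=
    aeval_adjMatrix_ballPoly hG.regular (hG.le_egirth.trans_lt' (Nat.cast_lt.mpr (by lia)))
  refine eq_of_apply_le_of_mulVec_one_eq (fun u v ↦ ?_) ?_
  · rw [hpoly, map_add, map_mul, map_mul, aeval_X, aeval_C, map_sub (aeval _), hball le_rfl,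
      hball n.le_succ, ← Algebra.smul_def]
    exact adjMatrix_mul_ballMatrix_add_apply_le hG.regular hG.le_egirth u v
  · rw [aeval_adjMatrix_mulVec_one hG.regular, hG.card_eq, mul_mooreBound_even]

end IsMooreGraph

/-! ### Eigenvalue multiplicities -/

section Spectrum

variable {V : Type*} [Fintype V] [DecidableEq V] {A : Matrix V V ℝ}

lemma trace_aeval_eq_sum_eigenvalues (hA : A.IsHermitian) (p : ℝ[X]) :
    (aeval A p).trace = ∑ i, p.eval (hA.eigenvalues i) := by
  rw [← cfc_polynomial p A, hA.cfc_eq, IsHermitian.cfc]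
  simp [Unitary.conjStarAlgAut_apply, Matrix.trace_mul_cycle]

lemma eval_eigenvalues_eq_zero_of_aeval_eq_zero (hA : A.IsHermitian) {p : ℝ[X]}
    (hp : aeval A p = 0) (i : V) : p.eval (hA.eigenvalues i) = 0 := by
  have h := aeval_mulVec_of_mulVec_eq_smul (hA.mulVec_eigenvectorBasis i) p
  rw [hp, zero_mulVec, eq_comm, smul_eq_zero] at h
  refine h.resolve_right fun h0 ↦ hA.eigenvectorBasis.orthonormal.ne_zero i ?_
  ext j
  exact congrFun h0 j

lemma card_eigenvalues_eq_rootMultiplicity_charpoly (hA : A.IsHermitian) (θ : ℝ) :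
    Finset.card {i | hA.eigenvalues i = θ} = A.charpoly.rootMultiplicity θ := by
  rw [← count_roots, hA.roots_charpoly_eq_eigenvalues, Multiset.count_map]
  simp [Finset.card_def, eq_comm]

/-- All eigenvalues of `A` other than the simple eigenvalue `c` are zeros of `P`, so `Q` vanishes at
all of them except `θ`. -/
lemma trace_aeval_eq_eval_add_rootMultiplicity_mul_eval (hA : A.IsHermitian) {P Q : ℝ[X]} {c θ : ℝ}
    (hPQ : P = (X - C θ) * Q) (hzero : aeval A ((X - C c) * P) = 0) (hc : P.eval c ≠ 0)
    (htrace : (aeval A P).trace = P.eval c) :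
    (aeval A Q).trace = Q.eval c + A.charpoly.rootMultiplicity θ * Q.eval θ := by
  have heigenvalue (i : V) : hA.eigenvalues i = c ∨ P.eval (hA.eigenvalues i) = 0 := by
    simpa [sub_eq_zero] using eval_eigenvalues_eq_zero_of_aeval_eq_zero hA hzero i
  have hsimple : (Finset.card {i | hA.eigenvalues i = c} : ℝ) = 1 := by
    have hsum : ∑ i, P.eval (hA.eigenvalues i)
        = ∑ i, if hA.eigenvalues i = c then P.eval c else 0 := by
      refine Finset.sum_congr rfl fun i _ ↦ ?_
      grind
    rw [trace_aeval_eq_sum_eigenvalues hA, hsum, ← Finset.sum_filter, Finset.sum_const,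
      nsmul_eq_mul] at htrace
    exact mul_right_cancel₀ hc (htrace.trans (one_mul _).symm)
  have hcθ : c ≠ θ := by
    rintro rfl
    simp [hPQ] at hc
  have hQ (i : V) : Q.eval (hA.eigenvalues i)
      = (if hA.eigenvalues i = c then Q.eval c else 0)
        + if hA.eigenvalues i = θ then Q.eval θ else 0 := by
    have hP := heigenvalue i
    simp only [hPQ, eval_mul, eval_sub, eval_X, eval_C, mul_eq_zero, sub_eq_zero] at hP
    grind
  rw [trace_aeval_eq_sum_eigenvalues hA, Finset.sum_congr rfl fun i _ ↦ hQ i,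
    Finset.sum_add_distrib, ← Finset.sum_filter, ← Finset.sum_filter, Finset.sum_const,
    Finset.sum_const, nsmul_eq_mul, nsmul_eq_mul, hsimple, one_mul,
    card_eigenvalues_eq_rootMultiplicity_charpoly]

variable {G : SimpleGraph V} [DecidableRel G.Adj] {d : ℕ}

lemma sub_mul_trace_aeval_adjMatrix [Nonempty V] (hreg : G.IsRegularOfDegree d) {P Q : ℝ[X]}
    {κ θ : ℝ} (hκ : κ ≠ 0) (hP : aeval (G.adjMatrix ℝ) P = Matrix.of fun _ _ ↦ κ)
    (hPQ : P = (X - C θ) * Q) :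
    (d - θ) * (aeval (G.adjMatrix ℝ) Q).trace
      = κ * Fintype.card V
        + (G.adjMatrix ℝ).charpoly.rootMultiplicity θ * ((d - θ) * P.derivative.eval θ) := by
  have hPd : P.eval (d : ℝ) = κ * Fintype.card V := by
    have h := congrFun (aeval_adjMatrix_mulVec_one hreg P) (Classical.arbitrary V)
    rw [hP] at h
    simpa [Matrix.mulVec, dotProduct, mul_comm] using h.symm
  have hzero : aeval (G.adjMatrix ℝ) ((X - C (d : ℝ)) * P) = 0 := by
    rw [map_mul, hP, map_sub (aeval _), aeval_X, aeval_C, sub_mul, ← Algebra.smul_def]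
    ext u v
    simp [hreg u]
  have htrace : (aeval (G.adjMatrix ℝ) P).trace = P.eval (d : ℝ) := by
    rw [hP, hPd]
    simp [Matrix.trace, mul_comm]
  have hne : P.eval (d : ℝ) ≠ 0 := hPd ▸ mul_ne_zero hκ (Nat.cast_ne_zero.mpr Fintype.card_ne_zero)
  have hQd : (d - θ) * Q.eval (d : ℝ) = κ * Fintype.card V := by
    rw [← hPd, hPQ]
    simp
  have hQθ : P.derivative.eval θ = Q.eval θ := by
    rw [hPQ]
    simp
  have hA : (G.adjMatrix ℝ).IsHermitian :=
    (conjTranspose_eq_transpose_of_trivial _).trans G.isSymm_adjMatrix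
  rw [trace_aeval_eq_eval_add_rootMultiplicity_mul_eval hA hPQ hzero hne htrace, hQθ, ← hQd]
  ring

end Spectrum

section Multiplicities

lemma sq_sub_mul_eval_derivative_ballPoly_succ {R : Type*} [CommRing R] {a x : R} {n : ℕ}
    (hx : (ballPoly a (n + 1)).eval x = 0) :
    (x ^ 2 - 4 * a) * (derivative (ballPoly a (n + 1))).eval x
      = -(((2 * n + 3) * x + 2 * (n + 2) * a + 2 * (n + 1)) * (dickson 2 a n).eval x) := by
  rw [ballPoly, eval_add] at hx
  have h₀ := sq_sub_mul_eval_derivative_dickson_two a x n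
  have h₁ := sq_sub_mul_eval_derivative_dickson_two a x (n + 1)
  rw [eval_dickson_add_two] at h₁
  push_cast at h₁
  rw [ballPoly, derivative_add, eval_add]
  linear_combination h₀ + h₁ + ((n + 1) * x + 2 * (n + 1)) * hx

variable {V : Type*} [Fintype V] [DecidableEq V] {G : SimpleGraph V} [DecidableRel G.Adj] {d : ℕ}

lemma trace_aeval_adjMatrix_ballKernel {R : Type*} [CommRing R] {n : ℕ}
    (hreg : G.IsRegularOfDegree d) (hgirth : (2 * n : ℕ) < G.egirth) (x : R) :
    (aeval (G.adjMatrix R) (ballKernel ((d : R) - 1) x n)).trace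
      = Fintype.card V * ∑ j ∈ Finset.range (n + 1), (dickson 2 ((d : R) - 1) j).eval x := by
  have htrace {i : ℕ} (hi : i ≤ n) :
      (aeval (G.adjMatrix R) (ballPoly ((d : R) - 1) i)).trace = Fintype.card V := by
    rw [aeval_adjMatrix_ballPoly hreg (hgirth.trans_le' (Nat.cast_le.mpr (by lia))),
      trace_ballMatrix]
  rw [ballKernel, map_sum, Matrix.trace_sum, Finset.mul_sum,
    ← Finset.Nat.sum_antidiagonal_eq_sum_range_succ_mk
      fun ij ↦ Fintype.card V * (dickson 2 ((d : R) - 1) ij.1).eval x]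
  refine Finset.sum_congr rfl fun ij hij ↦ ?_
  rw [map_mul, aeval_C, ← Algebra.smul_def, Matrix.trace_smul,
    htrace (Finset.HasAntidiagonal.antidiagonal.snd_le hij), smul_eq_mul, mul_comm]

namespace IsMooreGraph

variable [Nonempty V] {n : ℕ} {θ : ℝ}

lemma rootMultiplicity_odd (hG : IsMooreGraph G d (2 * (n + 1) + 1)) (hd : d ≠ 1)
    (hθ : (ballPoly ((d : ℝ) - 1) (n + 1)).eval θ = 0) :
    (G.adjMatrix ℝ).charpoly.rootMultiplicity θ
        * ((d - θ) * ((2 * n + 3) * (d + θ) + d - 2))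
      = Fintype.card V * (d * (4 * (d - 1) - θ ^ 2)) := by
  have hPQ := X_sub_C_mul_ballKernel ((d : ℝ) - 1) θ n
  rw [hθ, C_0, sub_zero] at hPQ
  have htrace := sub_mul_trace_aeval_adjMatrix hG.regular one_ne_zero hG.aeval_adjMatrix_odd
    hPQ.symm
  rw [trace_aeval_adjMatrix_ballKernel hG.regular
    (hG.le_egirth.trans_lt' (Nat.cast_lt.mpr (by lia)))] at htrace
  have hsum := sub_mul_sum_eval_dickson_two ((d : ℝ) - 1) θ n
  have hderiv := sq_sub_mul_eval_derivative_ballPoly_succ hθ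
  rw [ballPoly, eval_add] at hθ
  have ha : (d : ℝ) - 1 ≠ 0 := sub_ne_zero.mpr (Nat.cast_ne_one.mpr hd)
  have hU : (dickson 2 ((d : ℝ) - 1) n).eval θ ≠ 0 := fun h ↦
    eval_dickson_two_ne_zero_of_succ ha (by rwa [h, add_zero] at hθ) h
  have hbalance : Fintype.card V * (d * (dickson 2 ((d : ℝ) - 1) n).eval θ)
      = (G.adjMatrix ℝ).charpoly.rootMultiplicity θ
        * ((d - θ) * (derivative (ballPoly ((d : ℝ) - 1) (n + 1))).eval θ) := by
    linear_combination htrace - Fintype.card V * hsum + Fintype.card V * hθ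
  refine mul_right_cancel₀ hU ?_
  linear_combination (θ ^ 2 - 4 * (d - 1)) * hbalance
    + (G.adjMatrix ℝ).charpoly.rootMultiplicity θ * (d - θ) * hderiv

lemma rootMultiplicity_even (hG : IsMooreGraph G d (2 * (n + 2))) (hd₀ : d ≠ 0) (hd₁ : d ≠ 1)
    (hθ : (dickson 2 ((d : ℝ) - 1) (n + 1)).eval θ = 0) :
    (G.adjMatrix ℝ).charpoly.rootMultiplicity θ * (2 * (n + 2) * (d ^ 2 - θ ^ 2))
      = Fintype.card V * (d * (4 * (d - 1) - θ ^ 2)) := by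
  have hPQ := X_sub_C_mul_ballKernel_succ_add ((d : ℝ) - 1) θ n
  rw [sub_add_cancel, eval_mul, hθ, mul_zero, C_0, sub_zero] at hPQ
  have htrace := sub_mul_trace_aeval_adjMatrix hG.regular (Nat.cast_ne_zero.mpr hd₀)
    hG.aeval_adjMatrix_even hPQ.symm
  have hgirth {i : ℕ} (hi : i ≤ n + 1) : (2 * i : ℕ) < G.egirth :=
    hG.le_egirth.trans_lt' (Nat.cast_lt.mpr (by lia))
  rw [map_add, Matrix.trace_add, map_mul, aeval_C, ← Algebra.smul_def, Matrix.trace_smul,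
    trace_aeval_adjMatrix_ballKernel hG.regular (hgirth le_rfl),
    trace_aeval_adjMatrix_ballKernel hG.regular (hgirth n.le_succ), derivative_mul, eval_add,
    eval_mul, eval_mul, hθ, mul_zero, zero_add, smul_eq_mul] at htrace
  simp only [eval_add, eval_X, eval_C] at htrace
  have hsum := sub_mul_sum_eval_dickson_two ((d : ℝ) - 1) θ n
  have hsum₁ := sub_mul_sum_eval_dickson_two ((d : ℝ) - 1) θ (n + 1)
  have hderiv := sq_sub_mul_eval_derivative_dickson_two ((d : ℝ) - 1) θ (n + 1)
  rw [eval_dickson_add_two, hθ] at hsum₁ hderiv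
  rw [hθ] at hsum
  push_cast at hderiv
  have ha : (d : ℝ) - 1 ≠ 0 := sub_ne_zero.mpr (Nat.cast_ne_one.mpr hd₁)
  have hbalance : Fintype.card V * (d * ((d - 1) * (dickson 2 ((d : ℝ) - 1) n).eval θ))
      = (G.adjMatrix ℝ).charpoly.rootMultiplicity θ
        * ((d ^ 2 - θ ^ 2) * (derivative (dickson 2 ((d : ℝ) - 1) (n + 1))).eval θ) := by
    linear_combination htrace - Fintype.card V * hsum₁ - Fintype.card V * (d - 1) * hsum
  refine mul_right_cancel₀ (mul_ne_zero ha (eval_dickson_two_ne_zero_of_succ ha hθ)) ?_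
  linear_combination (θ ^ 2 - 4 * (d - 1)) * hbalance
    + (G.adjMatrix ℝ).charpoly.rootMultiplicity θ * (d ^ 2 - θ ^ 2) * hderiv

end IsMooreGraph

end Multiplicities

/-! ### Roots of the ball polynomials -/

section Roots

open Real

lemma eval_dickson_two_mul_sin (s α : ℝ) (n : ℕ) :
    (dickson 2 (s ^ 2) n).eval (2 * s * cos α) * sin α = s ^ n * sin ((n + 1) * α) := by
  induction n using Nat.twoStepInduction with
  | zero => rw [eval_dickson_two_zero]; simp
  | one =>
    rw [dickson_one, eval_X, Nat.cast_one, one_add_one_eq_two, sin_two_mul]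
    ring
  | more n ihn ihn₁ =>
    have hsin : sin ((n + 3) * α) + sin ((n + 1) * α) = 2 * sin ((n + 2) * α) * cos α := by
      rw [sin_add_sin]
      ring_nf
    rw [eval_dickson_add_two]
    push_cast at ihn ihn₁ ⊢
    rw [show (n : ℝ) + 2 + 1 = n + 3 by ring]
    rw [show (n : ℝ) + 1 + 1 = n + 2 by ring] at ihn₁
    linear_combination 2 * s * cos α * ihn₁ - s ^ 2 * ihn - s ^ (n + 2) * hsin

lemma eval_dickson_two_mul_cos_pi_div (s : ℝ) (n : ℕ) :
    (dickson 2 (s ^ 2) (n + 1)).eval (2 * s * cos (π / (n + 2 : ℕ))) = 0 := by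
  have hsin : 0 < sin (π / (n + 2 : ℕ)) :=
    sin_pos_of_pos_of_lt_pi (by positivity) <|
      div_lt_self pi_pos (Nat.one_lt_cast.mpr (by lia))
  have hangle : (((n + 1 : ℕ) : ℝ) + 1) * (π / (n + 2 : ℕ)) = π := by push_cast; field
  have heval := eval_dickson_two_mul_sin s (π / (n + 2 : ℕ)) (n + 1)
  rw [hangle, sin_pi, mul_zero] at heval
  exact (mul_eq_zero.mp heval).resolve_right hsin.ne'

lemma mul_eval_ballPoly_mul_sin (s α : ℝ) (h : ℕ) :
    s * (ballPoly (s ^ 2) h).eval (2 * s * cos α) * sin α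
      = s ^ h * (s * sin ((h + 1) * α) + sin (h * α)) := by
  cases h with
  | zero => simp [ballPoly]
  | succ n =>
    have hsucc := eval_dickson_two_mul_sin s α (n + 1)
    have hn := eval_dickson_two_mul_sin s α n
    rw [ballPoly, eval_add]
    push_cast at hsucc ⊢
    linear_combination s * hsucc + s * hn

lemma exists_mul_sin_add_sin_eq_zero {s : ℝ} (hs : 1 < s) {h i : ℕ} (hi : 0 < i) (hih : i ≤ h) :
    ∃ α ∈ Set.Ioo (i * π / (h + 1)) ((i + 1 / 2) * π / (h + 1)),
      s * sin ((h + 1) * α) + sin (h * α) = 0 := by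
  set l := i * π / (h + 1) with hl
  set r := (i + 1 / 2) * π / (h + 1) with hr
  let f : ℝ → ℝ := fun α ↦ (-1) ^ i * (s * sin ((h + 1) * α) + sin (h * α))
  have hih' : (i : ℝ) ≤ h := mod_cast hih
  have hsq : (-1 : ℝ) ^ i * (-1) ^ i = 1 := by rw [← mul_pow]; simp
  have hleft : f l < 0 := by
    have hmul : (h + 1) * l = i * π := by rw [hl]; field
    have hsin : 0 < sin l := by
      refine sin_pos_of_pos_of_lt_pi (by positivity) ?_
      rw [hl, div_lt_iff₀ (by positivity)]
      nlinarith [pi_pos]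
    have hval : f l = -sin l := by
      simp only [f]
      rw [hmul, sin_nat_mul_pi, show h * l = i * π - l by linear_combination hmul,
        sin_nat_mul_pi_sub]
      linear_combination -sin l * hsq
    linarith
  have hright : 0 < f r := by
    have hmul : (h + 1) * r = π / 2 + i * π := by rw [hr]; field
    have hval : f r = s + (-1) ^ i * sin (h * r) := by
      simp only [f]
      rw [hmul, sin_add_nat_mul_pi, sin_pi_div_two]
      linear_combination s * hsq
    have habs : |(-1) ^ i * sin (h * r)| ≤ 1 := by
      simpa [abs_mul] using abs_sin_le_one (h * r)
    linarith [(abs_le.mp habs).1]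
  have hlr : l ≤ r := by rw [hl, hr]; gcongr; linarith
  obtain ⟨α, hα, hfα⟩ := intermediate_value_Ioo hlr (f := f)
    (by fun_prop) ⟨hleft, hright⟩
  exact ⟨α, hα, (mul_eq_zero.mp hfα).resolve_left (by positivity)⟩

lemma exists_strictMono_mul_sin_add_sin_eq_zero {s : ℝ} (hs : 1 < s) (h : ℕ) :
    ∃ α : Fin h → ℝ, StrictMono α ∧ ∀ i, s * sin ((h + 1) * α i) + sin (h * α i) = 0 ∧
      α i ∈ Set.Ioo 0 π ∧ π < α i + α i.rev := by
  choose α hα hzero using fun i : Fin h ↦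
    exists_mul_sin_add_sin_eq_zero hs i.val.succ_pos (Nat.succ_le_of_lt i.isLt)
  have hh : (0 : ℝ) < h + 1 := by positivity
  simp only [Set.mem_Ioo, div_lt_iff₀ hh, lt_div_iff₀ hh] at hα
  push_cast at hα
  refine ⟨α, fun i j hij ↦ ?_, fun i ↦ ⟨hzero i, ⟨?_, ?_⟩, ?_⟩⟩
  · have hij' : (i : ℝ) + 1 ≤ j := mod_cast hij
    nlinarith [hα i, hα j, pi_pos]
  · exact pos_of_mul_pos_left (lt_trans (by positivity) (hα i).1) hh.le
  · have hi : (i : ℝ) + 1 ≤ h := mod_cast i.isLt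
    nlinarith [hα i, pi_pos]
  · have hi : ((i.rev : ℕ) : ℝ) + i + 1 = h := mod_cast (by rw [Fin.val_rev]; lia)
    nlinarith [hα i, hα i.rev, pi_pos]

lemma exists_strictAnti_roots_ballPoly {a : ℝ} (ha : 1 < a) (h : ℕ) :
    ∃ θ : Fin h → ℝ, StrictAnti θ ∧ ∀ i, (ballPoly a h).eval (θ i) = 0 ∧
      θ i ^ 2 < 4 * a ∧ θ i + θ i.rev < 0 := by
  obtain ⟨s, hs, rfl⟩ : ∃ s, 1 < s ∧ s ^ 2 = a :=
    ⟨√a, by rwa [lt_sqrt zero_le_one, one_pow], sq_sqrt (by linarith)⟩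
  have hs₀ : 0 < s := by linarith
  obtain ⟨α, hmono, hα⟩ := exists_strictMono_mul_sin_add_sin_eq_zero hs h
  refine ⟨fun i ↦ 2 * s * cos (α i), fun i j hij ↦ ?_, fun i ↦ ?_⟩
  · have hcos := cos_lt_cos_of_nonneg_of_le_pi (hα i).2.1.1.le (hα j).2.1.2.le (hmono hij)
    exact mul_lt_mul_of_pos_left hcos (by positivity)
  obtain ⟨hzero, hmem, hrev⟩ := hα i
  have hsin : 0 < sin (α i) := sin_pos_of_mem_Ioo hmem
  refine ⟨?_, ?_, ?_⟩
  · have heval := mul_eval_ballPoly_mul_sin s (α i) h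
    rw [hzero, mul_zero] at heval
    simpa [hs₀.ne', hsin.ne'] using heval
  · nlinarith [sin_sq_add_cos_sq (α i), mul_pos hs₀ hsin]
  · have hcos := cos_lt_cos_of_nonneg_of_le_pi (sub_pos.mpr hmem.2).le (hα i.rev).2.1.2.le
      (sub_lt_iff_lt_add'.mpr hrev)
    rw [cos_pi_sub] at hcos
    nlinarith

lemma sum_eq_neg_nextCoeff_of_injective {R ι : Type*} [CommRing R] [IsDomain R] [Fintype ι]
    {p : R[X]} {θ : ι → R} (hp : IsMonicOfDegree p (Fintype.card ι)) (hθ : Function.Injective θ)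
    (hroot : ∀ i, p.eval (θ i) = 0) : ∑ i, θ i = -p.nextCoeff := by
  have hle : Finset.univ.val.map θ ≤ p.roots := by
    rw [Multiset.le_iff_subset (Finset.univ.nodup.map hθ)]
    simpa [Multiset.subset_iff, hp.ne_zero] using hroot
  have hdvd : ∏ i, (X - C (θ i)) ∣ p := by
    simpa using (Multiset.prod_X_sub_C_dvd_iff_le_roots hp.ne_zero _).mpr hle
  have hprod : p = ∏ i, (X - C (θ i)) :=
    eq_of_monic_of_dvd_of_natDegree_le (monic_prod_X_sub_C _ _) hp.monic hdvd <| by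
      rw [hp.natDegree_eq, natDegree_finsetProd_X_sub_C_eq_card, Finset.card_univ]
  rw [hprod, prod_X_sub_C_nextCoeff, neg_neg]

lemma exists_root_ballPoly_forall_int_ne {a : ℝ} (ha : 1 < a) {n : ℕ} (hn : 2 ≤ n) :
    ∃ θ : ℝ, (ballPoly a (n + 1)).eval θ = 0 ∧ θ ^ 2 < 4 * a ∧ ∀ k : ℤ, θ ≠ k := by
  by_contra! hint
  obtain ⟨θ, hanti, hθ⟩ := exists_strictAnti_roots_ballPoly ha (n + 1)
  choose k hk using fun i ↦ hint (θ i) (hθ i).1 (hθ i).2.1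
  have hsum : ∑ i, k i = -1 := by
    have hθsum := sum_eq_neg_nextCoeff_of_injective
      (by simpa using isMonicOfDegree_ballPoly a (n + 1)) hanti.injective fun i ↦ (hθ i).1
    simp only [nextCoeff_ballPoly_succ, hk] at hθsum
    exact mod_cast hθsum
  have hpair : ∀ i, k i + k i.rev ≤ -1 := fun i ↦ by
    have hneg := (hθ i).2.2
    rw [hk, hk] at hneg
    have hneg' : k i + k i.rev < 0 := mod_cast hneg
    lia
  have hrev : ∑ i, k (Fin.rev i) = ∑ i, k i := Equiv.sum_comp Fin.revPerm k
  have hcontra : -2 ≤ -((n : ℤ) + 1) := calc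
    -2 = ∑ i, (k i + k i.rev) := by
      rw [Finset.sum_add_distrib, hrev, hsum]
      norm_num
    _ ≤ ∑ _i : Fin (n + 1), (-1 : ℤ) := Finset.sum_le_sum fun i _ ↦ hpair i
    _ = -((n : ℤ) + 1) := by simp
  lia

end Roots

/-! ### Integrality and rationality -/

section Integrality

lemma isIntegral_of_eval_ballPoly_eq_zero {R : Type*} [CommRing R] {a : ℤ} {n : ℕ} {x : R}
    (hx : (ballPoly (a : R) n).eval x = 0) : IsIntegral ℤ x := by
  refine ⟨ballPoly a n, (isMonicOfDegree_ballPoly a n).monic, ?_⟩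
  rw [← eval_map, map_ballPoly]
  exact hx

lemma exists_int_eq_of_sq_sub_mul_add_eq_zero {K : Type*} [Field K] [CharZero K] {x : K}
    (hx : IsIntegral ℤ x) {r t : ℚ} (hr : ∀ k : ℤ, r ≠ k) (h : x ^ 2 - r * x + t = 0) :
    ∃ k : ℤ, x = k := by
  rw [← hx.exists_int_iff_exists_rat]
  have hxQ : IsIntegral ℚ x := hx.tower_top
  set p : ℚ[X] := X ^ 2 - C r * X + C t with hp
  have hmonic : p.Monic := by rw [hp]; monicity!
  have hdeg : p.natDegree = 2 := by rw [hp]; compute_degree!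
  have hdvd : minpoly ℚ x ∣ p := minpoly.dvd ℚ x (by simpa [hp] using h)
  have hlin : (minpoly ℚ x).natDegree = 1 := by
    by_contra hne
    have hpos := minpoly.natDegree_pos hxQ
    have heq := eq_of_monic_of_dvd_of_natDegree_le (minpoly.monic hxQ) hmonic hdvd (by lia)
    have hcoeff : -r = ((minpoly ℤ x).coeff 1 : ℤ) := calc
      -r = p.coeff 1 := by simp [hp, coeff_C]
      _ = ((minpoly ℤ x).map (algebraMap ℤ ℚ)).coeff 1 := by
        rw [heq, minpoly.isIntegrallyClosed_eq_field_fractions' ℚ hx]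
      _ = _ := by simp
    exact hr (-(minpoly ℤ x).coeff 1) (by rw [Int.cast_neg, ← hcoeff, neg_neg])
  obtain ⟨q, hq⟩ := minpoly.natDegree_eq_one_iff.mp hlin
  exact ⟨q, by simpa using hq.symm⟩

lemma exists_int_eq_of_mul_sub_sq_eq_mul_sub {x : ℝ} (hx : IsIntegral ℤ x) {p q b c : ℚ}
    (hp : p ≠ 0) (h : p * (b - x ^ 2) = q * (c - x)) (hpos : 0 < b - x ^ 2)
    (hlt : b - x ^ 2 < c - x) : ∃ k : ℤ, x = k := by
  have hratio : ((q / p : ℚ) : ℝ) = (b - x ^ 2) / (c - x) := by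
    push_cast
    rw [div_eq_div_iff (Rat.cast_ne_zero.mpr hp) (hpos.trans hlt).ne', mul_comm _ (p : ℝ), h]
  refine exists_int_eq_of_sq_sub_mul_add_eq_zero hx (r := q / p) (t := q / p * c - b) ?_ ?_
  · intro k hk
    rw [hk, Rat.cast_intCast] at hratio
    have hk₀ : (0 : ℝ) < k := hratio ▸ div_pos hpos (hpos.trans hlt)
    have hk₁ : (k : ℝ) < 1 := hratio ▸ (div_lt_one (hpos.trans hlt)).mpr hlt
    norm_cast at hk₀ hk₁
    lia
  · rw [Rat.cast_sub, Rat.cast_mul, hratio]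
    linear_combination div_mul_cancel₀ (b - x ^ 2) (hpos.trans hlt).ne'

open Real in
lemma eq_three_or_four_or_six_of_cos_two_pi_div_eq_ratCast {h : ℕ} (hh : 3 ≤ h) {c : ℚ}
    (hc : cos (2 * π / h) = c) : h = 3 ∨ h = 4 ∨ h = 6 := by
  have hhQ : (3 : ℚ) ≤ h := mod_cast hh
  have hangle : cos (((2 / h : ℚ) : ℝ) * π) = c := by
    rw [← hc]
    push_cast
    ring_nf
  have hniven := niven_angle_div_pi_eq ⟨c, hangle⟩
    ⟨by positivity, by rw [div_le_one (by positivity)]; linarith⟩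
  simp only [Set.mem_insert_iff, Set.mem_singleton_iff] at hniven
  have hcases : (h : ℚ) = 3 ∨ (h : ℚ) = 4 ∨ (h : ℚ) = 6 := by
    rcases hniven with h₀ | h₀ | h₀ | h₀ | h₀ <;> field_simp at h₀ <;> grind
  exact mod_cast hcases

end Integrality

/-! ### The girth of a Moore graph -/

section MooreGirth

namespace IsMooreGraph

variable {V : Type*} [Fintype V] {G : SimpleGraph V} [DecidableRel G.Adj] {d g n : ℕ}

lemma nonempty (hG : IsMooreGraph G d g) (hd : 1 ≤ d) (hg : 2 ≤ g) : Nonempty V := by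
  rw [← Fintype.card_pos_iff, ← Nat.cast_pos (α := ℝ), hG.card_eq, mooreBound]
  have hd' : (0 : ℝ) ≤ d - 1 := sub_nonneg.mpr (Nat.one_le_cast.mpr hd)
  have hsum : 0 < ∑ i ∈ Finset.range (g / 2), ((d : ℝ) - 1) ^ i := geom_sum_pos hd' (by lia)
  split_ifs <;> positivity

lemma exists_int_eq_of_eval_ballPoly_eq_zero (hG : IsMooreGraph G d (2 * (n + 1) + 1))
    (hd : 3 ≤ d) (hn : 2 ≤ n) {θ : ℝ} (hroot : (ballPoly ((d : ℝ) - 1) (n + 1)).eval θ = 0)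
    (hθ : θ ^ 2 < 4 * ((d : ℝ) - 1)) : ∃ k : ℤ, θ = k := by
  classical
  have := hG.nonempty (by lia) (by lia)
  have hd' : (3 : ℝ) ≤ d := mod_cast hd
  have hn' : (2 : ℝ) ≤ n := mod_cast hn
  have hmult := hG.rootMultiplicity_odd (by lia) hroot
  set m := (G.adjMatrix ℝ).charpoly.rootMultiplicity θ
  have hlt : 4 * ((d : ℝ) - 1) - θ ^ 2 < (2 * n + 3) * (d - 2) + d - θ := by
    nlinarith [sq_nonneg (θ - 1), mul_nonneg (sub_nonneg.mpr hn') (sub_nonneg.mpr hd')]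
  have hbalance : (Fintype.card V * d - m * (2 * n + 3)) * (4 * ((d : ℝ) - 1) - θ ^ 2)
      = m * (d - 2) * ((2 * n + 3) * (d - 2) + d - θ) := by
    linear_combination -hmult
  have hne : (Fintype.card V * d - m * (2 * n + 3) : ℝ) ≠ 0 := by
    intro hzero
    have hc : 0 < (2 * n + 3) * ((d : ℝ) - 2) + d - θ := (sub_pos.mpr hθ).trans hlt
    have hd₂ : (d : ℝ) - 2 ≠ 0 := by linarith
    rw [hzero, zero_mul, eq_comm, mul_eq_zero, mul_eq_zero] at hbalance
    rw [(hbalance.resolve_right hc.ne').resolve_right hd₂, zero_mul, sub_zero] at hzero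
    have hpos : (0 : ℝ) < Fintype.card V * d := by positivity
    exact hpos.ne' hzero
  have hintegral : IsIntegral ℤ θ :=
    isIntegral_of_eval_ballPoly_eq_zero (a := d - 1) (by exact_mod_cast hroot)
  refine exists_int_eq_of_mul_sub_sq_eq_mul_sub hintegral
    (p := Fintype.card V * d - m * (2 * n + 3)) (q := m * (d - 2)) (b := 4 * (d - 1))
    (c := (2 * n + 3) * (d - 2) + d) (mod_cast hne) ?_ ?_ ?_ <;> push_cast
  · exact hbalance
  · exact sub_pos.mpr hθ
  · exact hlt

lemma girth_eq_five_of_odd (hG : IsMooreGraph G d g) (hd : 3 ≤ d) (hg : 5 ≤ g) (hodd : Odd g) :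
    g = 5 := by
  by_contra hne
  obtain ⟨n, rfl⟩ : ∃ n, g = 2 * (n + 1) + 1 := by
    obtain ⟨h, rfl⟩ := hodd
    exact ⟨h - 1, by lia⟩
  have ha : (1 : ℝ) < d - 1 := by
    have hd' : (3 : ℝ) ≤ d := mod_cast hd
    linarith
  have hn : 2 ≤ n := by lia
  obtain ⟨θ, hroot, hθ, hint⟩ := exists_root_ballPoly_forall_int_ne ha hn
  obtain ⟨k, hk⟩ := hG.exists_int_eq_of_eval_ballPoly_eq_zero hd hn hroot hθ
  exact hint k hk

open Real in
lemma exists_rat_eq_cos_two_pi_div (hG : IsMooreGraph G d (2 * (n + 2))) (hd : 3 ≤ d) :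
    ∃ c : ℚ, cos (2 * π / (n + 2 : ℕ)) = c := by
  classical
  have := hG.nonempty (by lia) (by lia)
  have hd' : (3 : ℝ) ≤ d := mod_cast hd
  have ha : (0 : ℝ) < d - 1 := by linarith
  set α : ℝ := π / (n + 2 : ℕ) with hα
  have hsq : √((d : ℝ) - 1) ^ 2 = d - 1 := sq_sqrt ha.le
  have hroot := eval_dickson_two_mul_cos_pi_div √((d : ℝ) - 1) n
  rw [hsq, ← hα] at hroot
  have hmult := hG.rootMultiplicity_even (by lia) (by lia) hroot
  set m := (G.adjMatrix ℝ).charpoly.rootMultiplicity (2 * √((d : ℝ) - 1) * cos α)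
  have hcos : (2 * √((d : ℝ) - 1) * cos α) ^ 2 = 2 * (d - 1) * (1 + cos (2 * α)) := by
    rw [mul_pow, mul_pow, hsq, cos_two_mul]
    ring
  rw [hcos] at hmult
  have hne : (2 * m * (n + 2) - Fintype.card V * d : ℝ) ≠ 0 := by
    intro hzero
    have hpos : 0 < Fintype.card V * d * ((d : ℝ) - 2) ^ 2 := by
      have : (0 : ℝ) < d - 2 := by linarith
      positivity
    refine hpos.ne' ?_
    linear_combination hmult - (d ^ 2 - 2 * (d - 1) * (1 + cos (2 * α))) * hzero
  refine ⟨(2 * m * (n + 2) * d ^ 2 - Fintype.card V * d * (4 * (d - 1)))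
    / ((2 * m * (n + 2) - Fintype.card V * d) * (2 * (d - 1))) - 1, ?_⟩
  rw [mul_div_assoc, ← hα]
  push_cast
  rw [eq_sub_iff_add_eq, eq_div_iff (mul_ne_zero hne (by positivity))]
  linear_combination -hmult

lemma girth_eq_six_or_eight_or_twelve_of_even (hG : IsMooreGraph G d g) (hd : 3 ≤ d) (hg : 5 ≤ g)
    (heven : Even g) : g = 6 ∨ g = 8 ∨ g = 12 := by
  obtain ⟨n, rfl⟩ : ∃ n, g = 2 * (n + 2) := by
    obtain ⟨h, rfl⟩ := heven
    exact ⟨h - 2, by lia⟩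
  obtain ⟨c, hc⟩ := hG.exists_rat_eq_cos_two_pi_div hd
  have := eq_three_or_four_or_six_of_cos_two_pi_div_eq_ratCast (by lia) hc
  lia

end IsMooreGraph

end MooreGirth

end MooreGraph

/-- **Bannai–Ito / Damerell / Feit–Higman / Singleton.** For `d ≥ 3` and `g ≥ 5`, if there is a
`d`-regular graph on exactly `n₀(d, g)` vertices with girth at least `g`,
then `g ∈ {5, 6, 8, 12}`. -/
theorem moore_graphs_girth {V : Type} [Fintype V] (G : SimpleGraph V) [DecidableRel G.Adj]
    (d g : ℕ) (hd : 3 ≤ d) (hg : 5 ≤ g)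
    (hreg : G.IsRegularOfDegree d)
    (hcard : (Fintype.card V : ℝ) = mooreBound d g)
    (hgirth : (g : ℕ∞) ≤ G.egirth) :
    g = 5 ∨ g = 6 ∨ g = 8 ∨ g = 12 := by
  have hG : MooreGraph.IsMooreGraph G d g := ⟨hreg, hcard, hgirth⟩
  rcases Nat.even_or_odd g with heven | hodd
  · exact Or.inr (hG.girth_eq_six_or_eight_or_twelve_of_even hd hg heven)
  · exact Or.inl (hG.girth_eq_five_of_odd hd hg hodd)
end

section
/- Let g ≥ 4 be an even integer and d ≥ 2 an integer. Then every (d,g)-Moore graph is bipartite; that is, every finite simple graph G with minimum degree at least d, girth at least g, and exactly n₀(d,g) vertices is bipartite. -/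
/-!
Write `g = 2h` and fix an edge `uv`. Two paths with the same ends and total length less than `g`
coincide, so around any root the graph looks like a tree up to radius `h - 1`. Hence the set of
vertices at distance `k < h` from `u` and `k + 1` from `v` has at least `(d - 1) ^ k` elements, and
likewise with `u` and `v` exchanged. These `2h` sets are pairwise disjoint, so together they have at
least `n₀(d, g)` elements and therefore exhaust the graph: every vertex is at distance less than `h`
from `u` or from `v`.

Now colour a vertex by the parity of its distance to `u`. Adjacent vertices of the same colour are
at the same distance from `u`. If that distance is less than `h`, they close an odd walk shorter
than `2h`; otherwise both are at distance `h - 1` from `v`, with the same contradiction.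
-/

namespace MooreGraph

open SimpleGraph Finset

variable {V : Type*} {G : SimpleGraph V} {u v w x y : V} {h k : ℕ}

lemma eq_of_isPath_of_length_add_length_lt_egirth {p q : G.Walk u v} (hp : p.IsPath)
    (hq : q.IsPath) (hlt : ((p.length + q.length : ℕ) : ℕ∞) < G.egirth) : p = q := by
  by_contra hne
  obtain ⟨_, _, _, c, hc, hle⟩ := hp.exists_isCycle_length_le_add_of_ne hq hne
  exact hlt.not_ge ((egirth_le_length hc).trans (by exact_mod_cast hle))

lemma dist_ne_of_adj_of_lt_egirth (hadj : G.Adj x y) (hr : G.Reachable w x)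
    (hlt : ((2 * G.dist w x + 1 : ℕ) : ℕ∞) < G.egirth) : G.dist w x ≠ G.dist w y := by
  classical
  intro heq
  obtain ⟨p, hp, hpl⟩ := hr.exists_path_of_dist
  obtain ⟨q, hq, hql⟩ := (hr.trans hadj.reachable).exists_path_of_dist
  have hy : y ∉ p.support := fun hy ↦ by
    have hshort := p.length_takeUntil_lt_length hy hadj.ne'
    have := G.dist_le (p.takeUntil y hy)
    omega
  have hpq : p.concat hadj = q :=
    eq_of_isPath_of_length_add_length_lt_egirth (hp.concat hy hadj) hq
      (by rwa [Walk.length_concat, hpl, hql, ← heq, add_right_comm, ← two_mul])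
  have hlen := congrArg Walk.length hpq
  rw [Walk.length_concat] at hlen
  omega

lemma eq_of_adj_of_dist_add_one_eq {x' : V} (hadj : G.Adj x y) (hadj' : G.Adj x' y)
    (hx : G.dist w x + 1 = G.dist w y) (hx' : G.dist w x' + 1 = G.dist w y)
    (hlt : ((2 * G.dist w y : ℕ) : ℕ∞) < G.egirth) : x = x' := by
  have hr : G.Reachable w y := .of_dist_ne_zero (by omega)
  obtain ⟨p, hp⟩ := (hr.trans hadj.symm.reachable).exists_walk_length_eq_dist
  obtain ⟨p', hp'⟩ := (hr.trans hadj'.symm.reachable).exists_walk_length_eq_dist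
  have hlen : (p.concat hadj).length = G.dist w y := by rw [Walk.length_concat, hp, hx]
  have hlen' : (p'.concat hadj').length = G.dist w y := by rw [Walk.length_concat, hp', hx']
  have hpp' : p.concat hadj = p'.concat hadj' :=
    eq_of_isPath_of_length_add_length_lt_egirth (Walk.isPath_of_length_eq_dist _ hlen)
      (Walk.isPath_of_length_eq_dist _ hlen') (by rwa [hlen, hlen', ← two_mul])
  exact (Walk.concat_inj hpp').1

lemma mem_ball_natCast_iff : x ∈ G.ball w h ↔ G.Reachable w x ∧ G.dist w x < h := by
  rw [mem_ball, edist_comm]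
  constructor
  · intro hx
    have hr : G.Reachable w x := reachable_of_edist_ne_top hx.ne_top
    exact ⟨hr, by rwa [← hr.coe_dist_eq_edist, Nat.cast_lt] at hx⟩
  · rintro ⟨hr, hx⟩
    rwa [← hr.coe_dist_eq_edist, Nat.cast_lt]

lemma colorable_two_of_ball_union_ball_eq_univ (hgirth : ((2 * h : ℕ) : ℕ∞) ≤ G.egirth)
    (huv : G.Adj u v) (hcover : G.ball u h ∪ G.ball v h = Set.univ) : G.Colorable 2 := by
  have hball (x : V) : G.Reachable u x ∧ (G.dist u x < h ∨ G.dist v x < h) := by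
    rcases hcover.ge (Set.mem_univ x) with hx | hx <;> rw [mem_ball_natCast_iff] at hx
    · exact ⟨hx.1, .inl hx.2⟩
    · exact ⟨huv.reachable.trans hx.1, .inr hx.2⟩
  have hne {w x y : V} (hxy : G.Adj x y) (hr : G.Reachable w x) (hx : G.dist w x < h) :
      G.dist w x ≠ G.dist w y :=
    dist_ne_of_adj_of_lt_egirth hxy hr
      ((Nat.cast_lt.mpr (by omega : 2 * G.dist w x + 1 < 2 * h)).trans_le hgirth)
  refine (Coloring.mk (fun x ↦ decide (Even (G.dist u x))) fun {x y} hxy hcol ↦ ?_ :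
    G.Coloring Bool).colorable
  have heq : G.dist u x = G.dist u y := by
    have := hxy.diff_dist_adj (u := u)
    rw [decide_eq_decide, Nat.even_iff, Nat.even_iff] at hcol
    omega
  obtain ⟨hrx, hx⟩ := hball x
  obtain ⟨-, hy⟩ := hball y
  by_cases hlt : G.dist u x < h
  · exact hne hxy hrx hlt heq
  · have hxuv := huv.diff_dist_adj (u := x)
    have hyuv := huv.diff_dist_adj (u := y)
    simp only [G.dist_comm (u := x), G.dist_comm (u := y)] at hxuv hyuv
    exact hne hxy (huv.symm.reachable.trans hrx) (by omega) (by omega)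

variable [Fintype V]

/-- For an edge `uv`, the `k`-th level on the side of `u` in the tree grown from the edge `uv`.
Although `SimpleGraph.dist` is `0` between different components, the value `k + 1` is positive and
so forces the members to be reachable. -/
noncomputable def edgeLayer (G : SimpleGraph V) (u v : V) (k : ℕ) : Finset V :=
  {x | G.dist u x = k ∧ G.dist v x = k + 1}

lemma mem_edgeLayer : x ∈ edgeLayer G u v k ↔ G.dist u x = k ∧ G.dist v x = k + 1 := by
  simp [edgeLayer]

lemma reachable_of_mem_edgeLayer (hx : x ∈ edgeLayer G u v k) : G.Reachable v x :=
  .of_dist_ne_zero (by rw [(mem_edgeLayer.mp hx).2]; exact k.succ_ne_zero)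

lemma mem_ball_of_mem_biUnion_edgeLayer [DecidableEq V] (huv : G.Adj u v)
    (hx : x ∈ (range h).biUnion (edgeLayer G u v)) : x ∈ G.ball u h := by
  obtain ⟨k, hk, hxk⟩ := mem_biUnion.mp hx
  exact mem_ball_natCast_iff.mpr ⟨huv.reachable.trans (reachable_of_mem_edgeLayer hxk),
    (mem_edgeLayer.mp hxk).1.trans_lt (mem_range.mp hk)⟩

lemma disjoint_biUnion_edgeLayer_swap [DecidableEq V] :
    Disjoint ((range h).biUnion (edgeLayer G u v)) ((range h).biUnion (edgeLayer G v u)) := by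
  refine Finset.disjoint_left.mpr fun x hxu hxv ↦ ?_
  obtain ⟨i, -, hi⟩ := mem_biUnion.mp hxu
  obtain ⟨j, -, hj⟩ := mem_biUnion.mp hxv
  rw [mem_edgeLayer] at hi hj
  omega

lemma mem_edgeLayer_succ_of_adj (hlt : ((2 * k + 3 : ℕ) : ℕ∞) < G.egirth) (huv : G.Adj u v)
    (hx : x ∈ edgeLayer G u v k) (hxy : G.Adj x y) (hy : G.dist v y ≠ k) :
    y ∈ edgeLayer G u v (k + 1) := by
  have hr := reachable_of_mem_edgeLayer hx
  rw [mem_edgeLayer] at hx ⊢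
  have hne : G.dist v x ≠ G.dist v y :=
    dist_ne_of_adj_of_lt_egirth hxy hr (by rwa [hx.2])
  have hvxy := hxy.diff_dist_adj (u := v)
  have huxy := hxy.diff_dist_adj (u := u)
  have hyuv := huv.diff_dist_adj (u := y)
  simp only [G.dist_comm (u := y)] at hyuv
  omega

variable [DecidableRel G.Adj]

lemma card_filter_neighborFinset_dist_add_one_eq_le_one
    (hlt : ((2 * G.dist w x : ℕ) : ℕ∞) < G.egirth) :
    #{y ∈ G.neighborFinset x | G.dist w y + 1 = G.dist w x} ≤ 1 := by
  simp only [card_le_one, mem_filter, mem_neighborFinset]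
  exact fun a ⟨hxa, ha⟩ b ⟨hxb, hb⟩ ↦ eq_of_adj_of_dist_add_one_eq hxa.symm hxb.symm ha hb hlt

lemma degree_sub_one_le_card_bipartiteAbove_edgeLayer
    (hlt : ((2 * k + 3 : ℕ) : ℕ∞) < G.egirth) (huv : G.Adj u v) (hx : x ∈ edgeLayer G u v k) :
    G.degree x - 1 ≤ #((edgeLayer G u v (k + 1)).bipartiteAbove G.Adj x) := by
  have hdist : G.dist v x = k + 1 := (mem_edgeLayer.mp hx).2
  have hparent : #{y ∈ G.neighborFinset x | G.dist v y + 1 = G.dist v x} ≤ 1 :=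
    card_filter_neighborFinset_dist_add_one_eq_le_one
      ((Nat.cast_le.mpr (by omega)).trans_lt hlt)
  have hchild : {y ∈ G.neighborFinset x | ¬ G.dist v y + 1 = G.dist v x} ⊆
      (edgeLayer G u v (k + 1)).bipartiteAbove G.Adj x := by
    intro y hy
    rw [mem_filter, mem_neighborFinset] at hy
    exact (mem_bipartiteAbove _).mpr
      ⟨mem_edgeLayer_succ_of_adj hlt huv hx hy.1 (by omega), hy.1⟩
  have hsplit := card_filter_add_card_filter_not (s := G.neighborFinset x)
    (fun y ↦ G.dist v y + 1 = G.dist v x)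
  rw [card_neighborFinset_eq_degree] at hsplit
  have := card_le_card hchild
  omega

lemma card_bipartiteBelow_edgeLayer_le_one (hlt : ((2 * k + 2 : ℕ) : ℕ∞) < G.egirth)
    (hy : y ∈ edgeLayer G u v (k + 1)) :
    #((edgeLayer G u v k).bipartiteBelow G.Adj y) ≤ 1 := by
  have hdist : G.dist u y = k + 1 := (mem_edgeLayer.mp hy).1
  refine (card_le_card fun x hx ↦ ?_).trans
    (card_filter_neighborFinset_dist_add_one_eq_le_one (w := u) (x := y) (by rwa [hdist]))
  rw [mem_bipartiteBelow, mem_edgeLayer] at hx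
  rw [mem_filter, mem_neighborFinset, hx.1.1, hdist]
  exact ⟨hx.2.symm, rfl⟩

lemma card_edgeLayer_mul_le_card_edgeLayer_succ (hlt : ((2 * k + 3 : ℕ) : ℕ∞) < G.egirth)
    (huv : G.Adj u v) :
    #(edgeLayer G u v k) * (G.minDegree - 1) ≤ #(edgeLayer G u v (k + 1)) := by
  rw [← mul_one #(edgeLayer G u v (k + 1))]
  refine card_mul_le_card_mul G.Adj (fun x hx ↦ ?_) fun y hy ↦ ?_
  · exact (Nat.sub_le_sub_right (G.minDegree_le_degree x) 1).trans
      (degree_sub_one_le_card_bipartiteAbove_edgeLayer hlt huv hx)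
  · exact card_bipartiteBelow_edgeLayer_le_one ((Nat.cast_le.mpr (by omega)).trans_lt hlt) hy

lemma minDegree_sub_one_pow_le_card_edgeLayer (huv : G.Adj u v)
    (hlt : ((2 * k + 1 : ℕ) : ℕ∞) < G.egirth) :
    (G.minDegree - 1) ^ k ≤ #(edgeLayer G u v k) := by
  induction k with
  | zero =>
    have hu : u ∈ edgeLayer G u v 0 :=
      mem_edgeLayer.mpr ⟨dist_self, dist_eq_one_iff_adj.mpr huv.symm⟩
    simpa using card_pos.mpr ⟨u, hu⟩
  | succ k ih =>
    calc (G.minDegree - 1) ^ (k + 1)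
        = (G.minDegree - 1) ^ k * (G.minDegree - 1) := pow_succ _ _
      _ ≤ #(edgeLayer G u v k) * (G.minDegree - 1) :=
        Nat.mul_le_mul_right _ (ih ((Nat.cast_le.mpr (by omega)).trans_lt hlt))
      _ ≤ #(edgeLayer G u v (k + 1)) := card_edgeLayer_mul_le_card_edgeLayer_succ hlt huv

lemma sum_minDegree_sub_one_pow_le_card_biUnion_edgeLayer [DecidableEq V]
    (hgirth : ((2 * h : ℕ) : ℕ∞) ≤ G.egirth) (huv : G.Adj u v) :
    ∑ k ∈ range h, (G.minDegree - 1) ^ k ≤ #((range h).biUnion (edgeLayer G u v)) := by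
  have hdisj : (range h : Set ℕ).PairwiseDisjoint (edgeLayer G u v) := by
    intro i _ j _ hij
    refine Finset.disjoint_left.mpr fun x hxi hxj ↦ hij ?_
    rw [← (mem_edgeLayer.mp hxi).1, (mem_edgeLayer.mp hxj).1]
  rw [card_biUnion hdisj]
  refine sum_le_sum fun k hk ↦ minDegree_sub_one_pow_le_card_edgeLayer huv ?_
  rw [mem_range] at hk
  exact (Nat.cast_lt.mpr (by omega)).trans_le hgirth

lemma ball_union_ball_eq_univ_of_card_le (hgirth : ((2 * h : ℕ) : ℕ∞) ≤ G.egirth)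
    (huv : G.Adj u v) (hcard : Fintype.card V ≤ 2 * ∑ k ∈ range h, (G.minDegree - 1) ^ k) :
    G.ball u h ∪ G.ball v h = Set.univ := by
  classical
  have hunion :
      (range h).biUnion (edgeLayer G u v) ∪ (range h).biUnion (edgeLayer G v u) = univ := by
    refine (card_eq_iff_eq_univ _).mp (le_antisymm (card_le_univ _) ?_)
    have hu := sum_minDegree_sub_one_pow_le_card_biUnion_edgeLayer hgirth huv
    have hv := sum_minDegree_sub_one_pow_le_card_biUnion_edgeLayer hgirth huv.symm
    rw [card_union_of_disjoint disjoint_biUnion_edgeLayer_swap]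
    omega
  refine Set.eq_univ_of_forall fun x ↦ ?_
  exact (mem_union.mp (hunion ▸ mem_univ x)).imp
    (mem_ball_of_mem_biUnion_edgeLayer huv) (mem_ball_of_mem_biUnion_edgeLayer huv.symm)

end MooreGraph

lemma mooreBound_two_mul {d : ℕ} (hd : 1 ≤ d) (h : ℕ) :
    mooreBound d (2 * h) = ((2 * ∑ i ∈ Finset.range h, (d - 1) ^ i : ℕ) : ℝ) := by
  rw [mooreBound, if_neg (Nat.not_odd_iff_even.mpr (even_two_mul h)),
    Nat.mul_div_cancel_left h two_pos]
  push_cast [hd]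
  rfl

open MooreGraph in
/-- For even `g ≥ 4` and `d ≥ 2`, every `(d, g)`-Moore graph (a graph with minimum degree at
least `d`, girth at least `g`, and exactly `n₀(d, g)` vertices) is bipartite, i.e.,
properly `2`-colourable. -/
theorem moore_graph_bipartite {V : Type} [Fintype V] (G : SimpleGraph V) [DecidableRel G.Adj]
    (d g : ℕ) (hd : 2 ≤ d) (hg : 4 ≤ g) (hge : Even g)
    (hmin : d ≤ G.minDegree)
    (hgirth : (g : ℕ∞) ≤ G.egirth)
    (hcard : (Fintype.card V : ℝ) = mooreBound d g) :
    G.Colorable 2 := by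
  rcases isEmpty_or_nonempty V with _ | ⟨⟨u⟩⟩
  · exact SimpleGraph.Colorable.of_isEmpty 2
  obtain ⟨h, rfl⟩ := hge.two_dvd
  have hdeg : 0 < G.degree u := by
    have := G.minDegree_le_degree u
    omega
  obtain ⟨v, huv⟩ := (G.degree_pos_iff_exists_adj u).mp hdeg
  rw [mooreBound_two_mul (by omega), Nat.cast_inj] at hcard
  refine colorable_two_of_ball_union_ball_eq_univ hgirth huv
    (ball_union_ball_eq_univ_of_card_le hgirth huv ?_)
  rw [hcard]
  gcongr
end

section
/- For every integer d ≥ 2, there exists a finite projective plane of order d if and only if there exists a finite simple graph on 2(d²+d+1) vertices that is (d+1)-regular and has girth at least 6. -/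
/-!
The incidence graph of a projective plane of order `d` is bipartite and `(d + 1)`-regular, and two
distinct vertices have at most one common neighbour, so its girth is at least `6`.

Conversely, let `E u` be the set of vertices of `G` sharing a neighbour with `u`. Since `G` has no
`4`-cycle, `|E u| = 1 + (d + 1) d`, which is half of the number of vertices. If `u` and `v` are
adjacent then `E u` and `E v` are disjoint, because a common element would close a walk of length
`5`; by the count they are complementary. So sharing a neighbour is an equivalence relation whose
two classes form a bipartition of `G`, and any two distinct vertices of the same class have exactly
one common neighbour. Taking one class as the points, the other as the lines and adjacency as
incidence gives a projective plane.
-/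

namespace MooreGraph

open Configuration SimpleGraph

section Degree

variable {V : Type*} (G : SimpleGraph V) (v : V) [Fintype (G.neighborSet v)]

lemma ncard_neighborSet_eq_degree : (G.neighborSet v).ncard = G.degree v :=
  Set.ncard_eq_toFinset_card' _

lemma encard_neighborSet_eq_degree : (G.neighborSet v).encard = G.degree v :=
  Set.encard_eq_coe_toFinset_card _

end Degree

section Girth

variable {V : Type*} {G : SimpleGraph V} {u v : V}

lemma egirth_le_length_add_length_of_isPath {p q : G.Walk u v} (hp : p.IsPath) (hq : q.IsPath)
    (hne : p ≠ q) : G.egirth ≤ (p.length + q.length : ℕ) := by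
  obtain ⟨_, -, -, c, hc, hlen⟩ := hp.exists_isCycle_length_le_add_of_ne hq hne
  exact (egirth_le_length hc).trans (by exact_mod_cast hlen)

/-- Induction on `p`, moving its first edge `u w` over to `q` as long as `q` remains a path; when
`w` already lies on `q`, either this edge closes a cycle with the part of `q` from `u` to `w`, or
that part is odd and can be discarded together with the edge. -/
lemma egirth_le_length_add_length_of_odd (p : G.Walk u v) {q : G.Walk u v} (hq : q.IsPath)
    (hodd : Odd (p.length + q.length)) : G.egirth ≤ (p.length + q.length : ℕ) := by
  classical
  induction p with
  | nil => simp [(Walk.isPath_iff_nil.1 hq).eq_nil] at hodd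
  | @cons u w v huw p ih =>
    rw [Walk.length_cons] at hodd ⊢
    by_cases hw : w ∈ q.support
    · have hsplit : (q.takeUntil w hw).length + (q.dropUntil w hw).length = q.length := by
        rw [← Walk.length_append, Walk.take_spec]
      rcases Nat.even_or_odd (q.takeUntil w hw).length with heven | hodd'
      · have hne : huw.toWalk ≠ q.takeUntil w hw := by
          intro h
          simp [← h] at heven
        refine (egirth_le_length_add_length_of_isPath (Walk.IsPath.of_adj huw)
          (hq.takeUntil hw) hne).trans ?_
        rw [Walk.length_cons, Walk.length_nil]
        exact_mod_cast (by omega)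
      · refine (ih (hq.dropUntil hw) (by grind)).trans ?_
        exact_mod_cast (by omega)
    · have hlen : p.length + (q.cons huw.symm).length = p.length + 1 + q.length := by
        rw [Walk.length_cons]
        omega
      exact hlen ▸ ih (hq.cons hw) (hlen ▸ hodd)

lemma egirth_le_length_of_odd (w : G.Walk u u) (hodd : Odd w.length) : G.egirth ≤ w.length :=
  egirth_le_length_add_length_of_odd w .nil hodd

lemma pairwise_commonNeighbors_subsingleton_of_four_lt_egirth (hg : 4 < G.egirth) :
    Pairwise fun u v => (G.commonNeighbors u v).Subsingleton := by
  intro u v huv a ha b hb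
  rw [mem_commonNeighbors] at ha hb
  by_contra hab
  have hpath {c : V} (huc : G.Adj u c) (hvc : G.Adj v c) :
      (Walk.cons huc hvc.symm.toWalk).IsPath := by
    simp [huc.ne, hvc.ne', huv]
  refine hg.not_ge (egirth_le_length_add_length_of_isPath (hpath ha.1 ha.2) (hpath hb.1 hb.2) ?_)
  simp [hab]

lemma six_le_egirth_of_isBipartite (hG : G.IsBipartite)
    (hcommon : Pairwise fun u v => (G.commonNeighbors u v).Subsingleton) : 6 ≤ G.egirth := by
  refine le_egirth.2 fun u c hc => ?_
  by_contra! hlt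
  have hlen : c.length = 4 := by
    have heven := two_colorable_iff_forall_loop_even.1 hG u c
    have hthree := hc.three_le_length
    have hsix : c.length < 6 := by exact_mod_cast hlt
    grind
  have hadj (i : ℕ) (hi : i < 4) : G.Adj (c.getVert i) (c.getVert (i + 1)) :=
    c.adj_getVert_succ (hlen ▸ hi)
  have hclosed : c.getVert 0 = c.getVert 4 := by
    rw [c.getVert_zero, ← hlen, c.getVert_length]
  have hinj (i j : ℕ) (hi : i ≤ 3) (hj : j ≤ 3) (h : c.getVert i = c.getVert j) : i = j :=
    hc.getVert_injOn' (by simpa [hlen] using hi) (by simpa [hlen] using hj) h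
  have hne : c.getVert 0 ≠ c.getVert 2 := fun h => by simpa using hinj 0 2 (by simp) (by simp) h
  have h13 := hcommon hne ⟨hadj 0 (by simp), (hadj 1 (by simp)).symm⟩
    ⟨hclosed ▸ (hadj 3 (by simp)).symm, hadj 2 (by simp)⟩
  simpa using hinj 1 3 (by simp) (by simp) h13

end Girth

section IncidenceGraph

/-- The incidence (Levi) graph of a configuration: its vertices are the points and the lines, and a
point is adjacent to the lines containing it. -/
def incidenceGraph (P L : Type*) [Membership P L] : SimpleGraph (P ⊕ L) where
  Adj
    | .inl p, .inr l => p ∈ l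
    | .inr l, .inl p => p ∈ l
    | _, _ => False
  symm := ⟨by rintro (p | l) (q | m) h <;> exact h⟩
  loopless := ⟨by rintro (p | l) h <;> exact h⟩

variable {P L : Type*} [Membership P L]

lemma neighborSet_incidenceGraph_inl (p : P) :
    (incidenceGraph P L).neighborSet (.inl p) = Sum.inr '' {l : L | p ∈ l} := by
  ext (q | l) <;> simp [incidenceGraph]

lemma neighborSet_incidenceGraph_inr (l : L) :
    (incidenceGraph P L).neighborSet (.inr l) = Sum.inl '' {p : P | p ∈ l} := by
  ext (p | m) <;> simp [incidenceGraph]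

lemma isBipartite_incidenceGraph : (incidenceGraph P L).IsBipartite := by
  refine IsBipartiteWith.isBipartite (s := Set.range Sum.inl) (t := Set.range Sum.inr)
    ⟨Set.isCompl_range_inl_range_inr.disjoint, ?_⟩
  rintro (p | l) (q | m) h <;> simp_all [incidenceGraph]

lemma pairwise_commonNeighbors_subsingleton_incidenceGraph [Nondegenerate P L] :
    Pairwise fun x y => ((incidenceGraph P L).commonNeighbors x y).Subsingleton := by
  rintro (p | l) (q | m) hne (a | a) ⟨ha, ha'⟩ (b | b) ⟨hb, hb'⟩ <;>
    simp only [incidenceGraph, mem_neighborSet] at ha ha' hb hb'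
  · exact congrArg _ ((Nondegenerate.eq_or_eq ha ha' hb hb').resolve_left (hne <| congrArg _ ·))
  · exact congrArg _ ((Nondegenerate.eq_or_eq ha hb ha' hb').resolve_right (hne <| congrArg _ ·))

lemma six_le_egirth_incidenceGraph [Nondegenerate P L] : 6 ≤ (incidenceGraph P L).egirth :=
  six_le_egirth_of_isBipartite isBipartite_incidenceGraph
    pairwise_commonNeighbors_subsingleton_incidenceGraph

lemma isRegularOfDegree_incidenceGraph [(incidenceGraph P L).LocallyFinite] {k : ℕ}
    (hline : ∀ p : P, lineCount L p = k) (hpoint : ∀ l : L, pointCount P l = k) :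
    (incidenceGraph P L).IsRegularOfDegree k := by
  intro x
  rw [← ncard_neighborSet_eq_degree]
  rcases x with p | l
  · rw [neighborSet_incidenceGraph_inl, Set.ncard_image_of_injective _ Sum.inr_injective]
    exact hline p
  · rw [neighborSet_incidenceGraph_inr, Set.ncard_image_of_injective _ Sum.inl_injective]
    exact hpoint l

end IncidenceGraph

section ProjectivePlane

variable {P L : Type*} [Membership P L]

lemma exists_line_ne_ne {p : P} (hp : 2 < {l : L | p ∈ l}.encard) (a b : L) :
    ∃ l : L, p ∈ l ∧ l ≠ a ∧ l ≠ b := by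
  by_contra! h
  have hsub : {l : L | p ∈ l} ⊆ {a, b} := fun l hl => or_iff_not_imp_left.2 (h l hl)
  refine hp.not_ge ((Set.encard_le_encard hsub).trans ((Set.encard_insert_le {b} a).trans ?_))
  rw [Set.encard_singleton, one_add_one_eq_two]

lemma nondegenerate_of_existsUnique_line
    (hline : ∀ p q : P, p ≠ q → ∃! l : L, p ∈ l ∧ q ∈ l)
    (hpoints : ∀ l : L, {p : P | p ∈ l}.Nontrivial)
    (hlines : ∀ p : P, {l : L | p ∈ l}.Nontrivial) : Nondegenerate P L := by
  have eq_or_eq {p q : P} {l m : L} (hpl : p ∈ l) (hql : q ∈ l) (hpm : p ∈ m) (hqm : q ∈ m) :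
      p = q ∨ l = m :=
    or_iff_not_imp_left.2 fun hpq => (hline p q hpq).unique ⟨hpl, hql⟩ ⟨hpm, hqm⟩
  refine ⟨fun l => ?_, fun p => ?_, eq_or_eq⟩
  · obtain ⟨p, hpl⟩ := (hpoints l).nonempty
    obtain ⟨m, hpm, hml⟩ := (hlines p).exists_ne l
    obtain ⟨q, hqm, hqp⟩ := (hpoints m).exists_ne p
    exact ⟨q, fun hql => (eq_or_eq hqm hpm hql hpl).elim hqp hml⟩
  · obtain ⟨l, hpl⟩ := (hlines p).nonempty
    obtain ⟨q, hql, hqp⟩ := (hpoints l).exists_ne p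
    obtain ⟨m, hqm, hml⟩ := (hlines q).exists_ne l
    exact ⟨m, fun hpm => (eq_or_eq hqm hpm hql hpl).elim hqp hml⟩

/-- Take three lines `l₂`, `l₃`, `m` through a point `p₂`, further points `p₃` on `l₂` and `p₁` on
`m`, and a line `l₁` through `p₁` other than `m` and `p₁p₃`. -/
lemma exists_config [Nonempty P] [HasLines P L]
    (hpoints : ∀ l : L, {p : P | p ∈ l}.Nontrivial)
    (hlines : ∀ p : P, 2 < {l : L | p ∈ l}.encard) :
    ∃ (p₁ p₂ p₃ : P) (l₁ l₂ l₃ : L),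
      p₁ ∉ l₂ ∧ p₁ ∉ l₃ ∧ p₂ ∉ l₁ ∧ p₂ ∈ l₂ ∧ p₂ ∈ l₃ ∧ p₃ ∉ l₁ ∧ p₃ ∈ l₂ ∧ p₃ ∉ l₃ := by
  obtain ⟨p₂⟩ := ‹Nonempty P›
  have eq_or_eq {p q : P} {l m : L} (hpl : p ∈ l) (hql : q ∈ l) :=
    Nondegenerate.eq_or_eq hpl hql (l₂ := m)
  obtain ⟨l₂, h₂₂⟩ : {l : L | p₂ ∈ l}.Nonempty := Set.encard_pos.1 (pos_of_gt (hlines p₂))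
  obtain ⟨l₃, h₂₃, h₃₂, -⟩ := exists_line_ne_ne (hlines p₂) l₂ l₂
  obtain ⟨m, h₂m, hm₂, hm₃⟩ := exists_line_ne_ne (hlines p₂) l₂ l₃
  obtain ⟨p₃, hp₃l₂, hp₃⟩ := (hpoints l₂).exists_ne p₂
  obtain ⟨p₁, h₁m, hp₁⟩ := (hpoints m).exists_ne p₂
  have h₁₂ : p₁ ∉ l₂ := fun h => (eq_or_eq h₁m h₂m h h₂₂).elim hp₁ hm₂
  have hp₁p₃ : p₁ ≠ p₃ := fun h => h₁₂ (h ▸ hp₃l₂)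
  obtain ⟨h₁k, h₃k⟩ := HasLines.mkLine_ax (L := L) hp₁p₃
  obtain ⟨l₁, h₁₁, hl₁m, hl₁k⟩ := exists_line_ne_ne (hlines p₁) m (HasLines.mkLine hp₁p₃)
  refine ⟨p₁, p₂, p₃, l₁, l₂, l₃, h₁₂, ?_, ?_, h₂₂, h₂₃, ?_, hp₃l₂, ?_⟩
  · exact fun h => (eq_or_eq h₁m h₂m h h₂₃).elim hp₁ hm₃
  · exact fun h => (eq_or_eq h₁₁ h h₁m h₂m).elim hp₁ hl₁m
  · exact fun h => (eq_or_eq h₁₁ h h₁k h₃k).elim hp₁p₃ hl₁k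
  · exact fun h => (eq_or_eq h h₂₃ hp₃l₂ h₂₂).elim hp₃ h₃₂

theorem nonempty_projectivePlane [Nonempty P]
    (hline : ∀ p q : P, p ≠ q → ∃! l : L, p ∈ l ∧ q ∈ l)
    (hpoint : ∀ l m : L, l ≠ m → ∃ p : P, p ∈ l ∧ p ∈ m)
    (hpoints : ∀ l : L, {p : P | p ∈ l}.Nontrivial)
    (hlines : ∀ p : P, 2 < {l : L | p ∈ l}.encard) : Nonempty (ProjectivePlane P L) := by
  have := nondegenerate_of_existsUnique_line hline hpoints fun p =>
    Set.one_lt_encard_iff_nontrivial.1 (lt_trans (by norm_num) (hlines p))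
  choose mkPoint mkPoint_ax using hpoint
  choose mkLine mkLine_ax using fun p q hpq => (hline p q hpq).exists
  let hasLines : HasLines P L := ⟨mkLine _ _, mkLine_ax _ _⟩
  exact ⟨{ hasLines with
    mkPoint := mkPoint _ _
    mkPoint_ax := mkPoint_ax _ _
    exists_config := exists_config hpoints hlines }⟩

end ProjectivePlane

section Side

variable {V : Type*}

/-- The part `s` of a graph `G` with parts `s` and `t`, as the type of points or of lines of a
configuration whose incidence relation is adjacency in `G`. Both `G` and the opposite part `t` are
recorded in the type, so that they determine the incidence instance. -/
def Side (_ : SimpleGraph V) (s _t : Set V) : Type _ := s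

instance (G : SimpleGraph V) (s t : Set V) : Membership (Side G s t) (Side G t s) :=
  ⟨fun l p => G.Adj p.1 l.1⟩

instance (G : SimpleGraph V) (s t : Set V) [Finite V] : Finite (Side G s t) :=
  inferInstanceAs (Finite s)

variable {G : SimpleGraph V} {s t : Set V}

lemma encard_points_side (hG : G.IsBipartiteWith s t) (l : Side G t s) :
    {p : Side G s t | p ∈ l}.encard = (G.neighborSet l.1).encard := by
  have hrange : G.neighborSet l.1 ⊆ Set.range (Subtype.val : s → V) := by
    rw [Subtype.range_coe]
    exact isBipartiteWith_neighborSet_subset hG.symm l.2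
  rw [← Set.encard_preimage_of_injective_subset_range Subtype.val_injective hrange]
  exact congrArg Set.encard (Set.ext fun p => G.adj_comm p.1 l.1)

lemma encard_lines_side (hG : G.IsBipartiteWith s t) (p : Side G s t) :
    {l : Side G t s | p ∈ l}.encard = (G.neighborSet p.1).encard := by
  rw [← encard_points_side hG.symm p]
  exact congrArg Set.encard (Set.ext fun l => G.adj_comm p.1 l.1)

lemma pointCount_side (hG : G.IsBipartiteWith s t) (l : Side G t s) :
    pointCount (Side G s t) l = (G.neighborSet l.1).ncard :=
  congrArg ENat.toNat (encard_points_side hG l)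

theorem nonempty_projectivePlane_side (hG : G.IsBipartiteWith s t) (hs : s.Nonempty)
    (hsub : Pairwise fun u v => (G.commonNeighbors u v).Subsingleton)
    (hss : s.Pairwise fun u v => (G.commonNeighbors u v).Nonempty)
    (htt : t.Pairwise fun u v => (G.commonNeighbors u v).Nonempty)
    (hdeg : ∀ v, 2 < (G.neighborSet v).encard) :
    Nonempty (ProjectivePlane (Side G s t) (Side G t s)) := by
  have : Nonempty (Side G s t) := hs.to_subtype
  refine nonempty_projectivePlane (fun p q hpq => ?_) (fun l m hlm => ?_) (fun l => ?_) fun p => ?_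
  · have hpq' : p.1 ≠ q.1 := Subtype.coe_injective.ne hpq
    obtain ⟨z, hpz, hqz⟩ := hss p.2 q.2 hpq'
    exact ⟨⟨z, hG.mem_of_mem_adj p.2 hpz⟩, ⟨hpz, hqz⟩,
      fun l hl => Subtype.ext (hsub hpq' hl ⟨hpz, hqz⟩)⟩
  · obtain ⟨z, hlz, hmz⟩ := htt l.2 m.2 (Subtype.coe_injective.ne hlm)
    exact ⟨⟨z, hG.symm.mem_of_mem_adj l.2 hlz⟩, hlz.symm, hmz.symm⟩
  · rw [← Set.one_lt_encard_iff_nontrivial, encard_points_side hG]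
    exact lt_trans (by norm_num) (hdeg l.1)
  · rw [encard_lines_side hG]
    exact hdeg p.1

end Side

section ConeighborSet

variable {V : Type*} {G : SimpleGraph V} {u v x y : V}

/-- The set of vertices sharing a neighbour with `u`. It contains `u` unless `u` is isolated. -/
def coneighborSet (G : SimpleGraph V) (u : V) : Set V := {w | (G.commonNeighbors u w).Nonempty}

lemma mem_coneighborSet_self (huv : G.Adj u v) : u ∈ coneighborSet G u := ⟨v, huv, huv⟩

lemma disjoint_coneighborSet (hg : 5 < G.egirth) (huv : G.Adj u v) :
    Disjoint (coneighborSet G u) (coneighborSet G v) := by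
  rw [Set.disjoint_left]
  rintro w ⟨a, hua, hwa⟩ ⟨b, hvb, hwb⟩
  let c : G.Walk u u := .cons hua (.cons hwa.symm (.cons hwb (.cons hvb.symm huv.symm.toWalk)))
  exact hg.not_ge (egirth_le_length_of_odd c ⟨2, rfl⟩)

lemma coneighborSet_eq_insert_biUnion [DecidableEq V] [G.LocallyFinite]
    (hu : u ∈ coneighborSet G u) :
    coneighborSet G u =
      insert u ((G.neighborFinset u).biUnion fun a => (G.neighborFinset a).erase u) := by
  ext w
  by_cases hw : w = u
  · simpa [hw] using hu
  · simp [hw, coneighborSet, Set.Nonempty, mem_commonNeighbors, G.adj_comm w]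

lemma ncard_coneighborSet [G.LocallyFinite] {d : ℕ} (hreg : G.IsRegularOfDegree (d + 1))
    (hsub : Pairwise fun u v => (G.commonNeighbors u v).Subsingleton) (u : V) :
    (coneighborSet G u).ncard = d ^ 2 + d + 1 := by
  classical
  obtain ⟨v, huv⟩ : ∃ v, G.Adj u v := (G.degree_pos_iff_exists_adj u).1 (by simp [hreg u])
  have hcard (a : V) (ha : a ∈ G.neighborFinset u) : ((G.neighborFinset a).erase u).card = d := by
    rw [Finset.card_erase_of_mem (by simpa [G.adj_comm] using ha), card_neighborFinset_eq_degree,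
      hreg a, Nat.add_sub_cancel]
  have hdisj : (G.neighborFinset u : Set V).PairwiseDisjoint
      fun a => (G.neighborFinset a).erase u := by
    refine fun a ha b hb hab => Finset.disjoint_left.2 fun w hwa hwb => hab ?_
    simp only [Finset.mem_erase, mem_neighborFinset, Finset.mem_coe] at ha hb hwa hwb
    exact hsub hwa.1.symm ⟨ha, hwa.2.symm⟩ ⟨hb, hwb.2.symm⟩
  rw [coneighborSet_eq_insert_biUnion (mem_coneighborSet_self huv), Set.ncard_coe_finset,
    Finset.card_insert_of_notMem (by simp), Finset.card_biUnion hdisj, Finset.sum_congr rfl hcard,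
    Finset.sum_const, card_neighborFinset_eq_degree, hreg u]
  ring

lemma compl_coneighborSet [Fintype V] [G.LocallyFinite] {d : ℕ}
    (hcard : Fintype.card V = 2 * (d ^ 2 + d + 1)) (hreg : G.IsRegularOfDegree (d + 1))
    (hg : 5 < G.egirth) (huv : G.Adj u v) : (coneighborSet G u)ᶜ = coneighborSet G v := by
  have hncard := ncard_coneighborSet hreg
    (pairwise_commonNeighbors_subsingleton_of_four_lt_egirth (lt_trans (by norm_num) hg))
  refine (Set.eq_of_subset_of_ncard_le (disjoint_coneighborSet hg huv).subset_compl_left ?_).symm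
  rw [Set.ncard_compl, Nat.card_eq_fintype_card, hcard, hncard, hncard]
  omega

lemma coneighborSet_eq_of_mem
    (hcompl : ∀ ⦃u v⦄, G.Adj u v → (coneighborSet G u)ᶜ = coneighborSet G v)
    (hy : y ∈ coneighborSet G x) : coneighborSet G y = coneighborSet G x := by
  obtain ⟨z, hxz, hyz⟩ := hy
  rw [← hcompl hxz.symm, ← hcompl hyz.symm]

lemma commonNeighbors_nonempty_of_mem_coneighborSet
    (hcompl : ∀ ⦃u v⦄, G.Adj u v → (coneighborSet G u)ᶜ = coneighborSet G v)
    (hx : x ∈ coneighborSet G u) (hy : y ∈ coneighborSet G u) :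
    (G.commonNeighbors x y).Nonempty := by
  rwa [← coneighborSet_eq_of_mem hcompl hx] at hy

lemma mem_coneighborSet_of_adj
    (hcompl : ∀ ⦃u v⦄, G.Adj u v → (coneighborSet G u)ᶜ = coneighborSet G v)
    (huv : G.Adj u v) (hxy : G.Adj x y) (hx : x ∈ coneighborSet G u) :
    y ∈ coneighborSet G v := by
  rw [← hcompl huv, ← coneighborSet_eq_of_mem hcompl hx, hcompl hxy]
  exact mem_coneighborSet_self hxy.symm

lemma isBipartiteWith_coneighborSet
    (hcompl : ∀ ⦃u v⦄, G.Adj u v → (coneighborSet G u)ᶜ = coneighborSet G v)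
    (huv : G.Adj u v) :
    G.IsBipartiteWith (coneighborSet G u) (coneighborSet G v) where
  disjoint := hcompl huv ▸ disjoint_compl_right
  mem_of_adj x y hxy := by
    by_cases hx : x ∈ coneighborSet G u
    · exact .inl ⟨hx, mem_coneighborSet_of_adj hcompl huv hxy hx⟩
    · have hx' : x ∈ coneighborSet G v := hcompl huv ▸ hx
      exact .inr ⟨hx', mem_coneighborSet_of_adj hcompl huv.symm hxy hx'⟩

theorem nonempty_projectivePlane_coneighborSet
    (hcompl : ∀ ⦃u v⦄, G.Adj u v → (coneighborSet G u)ᶜ = coneighborSet G v)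
    (huv : G.Adj u v) (hsub : Pairwise fun u v => (G.commonNeighbors u v).Subsingleton)
    (hdeg : ∀ v, 2 < (G.neighborSet v).encard) :
    Nonempty (ProjectivePlane (Side G (coneighborSet G u) (coneighborSet G v))
      (Side G (coneighborSet G v) (coneighborSet G u))) :=
  nonempty_projectivePlane_side (isBipartiteWith_coneighborSet hcompl huv)
    ⟨u, mem_coneighborSet_self huv⟩ hsub
    (fun _ hx _ hy _ => commonNeighbors_nonempty_of_mem_coneighborSet hcompl hx hy)
    (fun _ hx _ hy _ => commonNeighbors_nonempty_of_mem_coneighborSet hcompl hx hy) hdeg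

theorem exists_isBipartiteWith_nonempty_projectivePlane_side [Fintype V] [G.LocallyFinite] {d : ℕ}
    (hd : 2 ≤ d) (hcard : Fintype.card V = 2 * (d ^ 2 + d + 1))
    (hreg : G.IsRegularOfDegree (d + 1)) (hg : 5 < G.egirth) :
    ∃ s t, G.IsBipartiteWith s t ∧ Nonempty (ProjectivePlane (Side G s t) (Side G t s)) := by
  have hsub := pairwise_commonNeighbors_subsingleton_of_four_lt_egirth
    (lt_trans (by norm_num) hg)
  have hcompl ⦃u v : V⦄ (huv : G.Adj u v) := compl_coneighborSet hcard hreg hg huv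
  have hdeg (v : V) : 2 < (G.neighborSet v).encard := by
    rw [encard_neighborSet_eq_degree, hreg v]
    exact_mod_cast Nat.succ_le_succ hd
  obtain ⟨u⟩ : Nonempty V := Fintype.card_pos_iff.1 (by rw [hcard]; positivity)
  obtain ⟨v, huv⟩ := (G.degree_pos_iff_exists_adj u).1 (by simp [hreg u])
  exact ⟨coneighborSet G u, coneighborSet G v, isBipartiteWith_coneighborSet hcompl huv,
    nonempty_projectivePlane_coneighborSet hcompl huv hsub hdeg⟩

end ConeighborSet

end MooreGraph

/-- **Singleton's theorem (existence version).** For `d ≥ 2`, a finite projective plane of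
order `d` exists if and only if there exists a `(d+1)`-regular graph on `2(d² + d + 1)`
vertices with girth at least `6`. -/
theorem projective_plane_iff_moore_graph (d : ℕ) (hd : 2 ≤ d) :
    (∃ (P L : Type) (_ : Membership P L) (_ : Fintype P) (_ : Fintype L),
        Nonempty (Configuration.ProjectivePlane P L) ∧
        ∀ l : L, Configuration.pointCount P l = d + 1) ↔
    (∃ (V : Type) (_ : Fintype V) (G : SimpleGraph V) (_ : DecidableRel G.Adj),
        Fintype.card V = 2 * (d ^ 2 + d + 1) ∧
        G.IsRegularOfDegree (d + 1) ∧
        (6 : ℕ∞) ≤ G.egirth) := by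
  classical
  constructor
  · rintro ⟨P, L, _, _, _, ⟨_⟩, hpoint⟩
    obtain ⟨-, -, -, l, -⟩ := Configuration.ProjectivePlane.exists_config (P := P) (L := L)
    have horder : Configuration.ProjectivePlane.order P L = d :=
      Nat.succ_injective ((Configuration.ProjectivePlane.pointCount_eq P l).symm.trans (hpoint l))
    refine ⟨P ⊕ L, inferInstance, MooreGraph.incidenceGraph P L, Classical.decRel _, ?_,
      MooreGraph.isRegularOfDegree_incidenceGraph (fun p => ?_) hpoint,
      MooreGraph.six_le_egirth_incidenceGraph⟩
    · rw [Fintype.card_sum, Configuration.ProjectivePlane.card_points P L,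
        Configuration.ProjectivePlane.card_lines P L, horder, two_mul]
    · rw [Configuration.ProjectivePlane.lineCount_eq, horder]
  · rintro ⟨V, _, G, _, hcard, hreg, hg⟩
    obtain ⟨s, t, hG, hplane⟩ :=
      MooreGraph.exists_isBipartiteWith_nonempty_projectivePlane_side hd hcard hreg
        (lt_of_lt_of_le (by norm_num) hg)
    refine ⟨MooreGraph.Side G s t, MooreGraph.Side G t s, inferInstance, Fintype.ofFinite _,
      Fintype.ofFinite _, hplane, fun l => ?_⟩
    rw [MooreGraph.pointCount_side hG, MooreGraph.ncard_neighborSet_eq_degree, hreg]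
end

section
/- Let d be a real number with d ≥ 2 and g ≥ 3 an integer. Every nonempty finite simple graph G whose average degree 2·e(G)/|V(G)| is at least d and whose girth is at least g has at least n₀(d,g) vertices. -/
open Finset SimpleGraph

namespace MooreBound

section Jensen

variable {ι : Type*} {s : Finset ι} {f : ι → ℝ}

lemma log_card_add_sum_log_div_card_le (hs : s.Nonempty) (hf : ∀ i ∈ s, 0 < f i) :
    Real.log #s + (∑ i ∈ s, Real.log (f i)) / #s ≤ Real.log (∑ i ∈ s, f i) := by
  have hcard : (0 : ℝ) < #s := by exact_mod_cast hs.card_pos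
  have jensen := strictConcaveOn_log_Ioi.concaveOn.le_map_sum (t := s)
    (w := fun _ ↦ (#s : ℝ)⁻¹) (p := f) (fun _ _ ↦ by positivity) (by simp [hcard.ne']) hf
  simp only [smul_eq_mul, ← mul_sum] at jensen
  rw [Real.log_mul (by positivity) (sum_pos hf hs).ne', Real.log_inv] at jensen
  rw [div_eq_inv_mul]
  linarith

lemma card_mul_le_sum_of_card_mul_log_le (hf : ∀ i ∈ s, 0 < f i) {c : ℝ} (hc : 0 < c)
    (hlog : #s * Real.log c ≤ ∑ i ∈ s, Real.log (f i)) : #s * c ≤ ∑ i ∈ s, f i := by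
  obtain rfl | hs := s.eq_empty_or_nonempty
  · simp
  have hcard : (0 : ℝ) < #s := by exact_mod_cast hs.card_pos
  rw [← Real.log_le_log_iff (by positivity) (sum_pos hf hs), Real.log_mul hcard.ne' hc.ne']
  calc Real.log #s + Real.log c
      ≤ Real.log #s + (∑ i ∈ s, Real.log (f i)) / #s := by
        gcongr
        rwa [le_div_iff₀' hcard]
    _ ≤ Real.log (∑ i ∈ s, f i) := log_card_add_sum_log_div_card_le hs hf

lemma convexOn_mul_log_sub_one :
    ConvexOn ℝ (Set.Ici 2) fun x : ℝ ↦ x * Real.log (x - 1) := by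
  have hderiv (x : ℝ) (hx : 1 < x) :
      HasDerivAt (fun x ↦ x * Real.log (x - 1)) (Real.log (x - 1) + x / (x - 1)) x := by
    have := (hasDerivAt_id x).mul (((hasDerivAt_id x).sub_const 1).log (sub_pos.2 hx).ne')
    simpa [div_eq_mul_inv] using! this
  have hderiv2 (x : ℝ) (hx : 1 < x) :
      HasDerivAt (fun x ↦ Real.log (x - 1) + x / (x - 1)) ((x - 2) / (x - 1) ^ 2) x := by
    have hx0 : x - 1 ≠ 0 := (sub_pos.2 hx).ne'
    have := (((hasDerivAt_id x).sub_const 1).log hx0).add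
      ((hasDerivAt_id x).div ((hasDerivAt_id x).sub_const 1) hx0)
    convert! this using 1
    simp only [id]
    field_simp
    ring
  refine convexOn_of_hasDerivWithinAt2_nonneg (convex_Ici 2)
    (fun x hx ↦ (hderiv x (one_lt_two.trans_le hx)).continuousAt.continuousWithinAt)
    (f' := fun x ↦ Real.log (x - 1) + x / (x - 1)) (f'' := fun x ↦ (x - 2) / (x - 1) ^ 2)
    ?_ ?_ ?_ <;> rw [interior_Ici] <;> intro x (hx : 2 < x)
  · exact (hderiv x (one_lt_two.trans hx)).hasDerivWithinAt
  · exact (hderiv2 x (one_lt_two.trans hx)).hasDerivWithinAt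
  · exact div_nonneg (sub_nonneg.2 hx.le) (sq_nonneg _)

lemma sum_mul_log_sub_one_le (hf : ∀ i ∈ s, 2 ≤ f i) {d : ℝ} (hd : 1 < d)
    (havg : d * #s ≤ ∑ i ∈ s, f i) :
    (∑ i ∈ s, f i) * Real.log (d - 1) ≤ ∑ i ∈ s, f i * Real.log (f i - 1) := by
  obtain rfl | hs := s.eq_empty_or_nonempty
  · simp
  have hcard : (0 : ℝ) < #s := by exact_mod_cast hs.card_pos
  have jensen := convexOn_mul_log_sub_one.map_sum_le (t := s) (w := fun _ ↦ (#s : ℝ)⁻¹) (p := f)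
    (fun _ _ ↦ by positivity) (by simp [hcard.ne']) hf
  simp only [smul_eq_mul, ← mul_sum] at jensen
  rw [mul_assoc, mul_le_mul_iff_right₀ (by positivity), ← div_eq_inv_mul] at jensen
  have hsum : 0 ≤ ∑ i ∈ s, f i := sum_nonneg fun i hi ↦ zero_le_two.trans (hf i hi)
  refine le_trans ?_ jensen
  gcongr
  rwa [le_div_iff₀ hcard]

end Jensen

section WalkCount

variable {α : Type*} (next : α → Finset α)

/-- The number of walks of length `i` from `a` in the digraph whose out-neighbourhoods are given by
`next`. -/
def walkCount : ℕ → α → ℕ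
  | 0, _ => 1
  | i + 1, a => ∑ b ∈ next a, walkCount i b

variable {next}

lemma walkCount_pos (hne : ∀ a, (next a).Nonempty) (i : ℕ) (a : α) : 0 < walkCount next i a := by
  induction i generalizing a with
  | zero => exact one_pos
  | succ i ih => exact sum_pos (fun b _ ↦ ih b) (hne a)

lemma log_card_add_le_log_walkCount_succ (hne : ∀ a, (next a).Nonempty) (i : ℕ) (a : α) :
    Real.log #(next a) + (∑ b ∈ next a, Real.log (walkCount next i b)) / #(next a) ≤
      Real.log (walkCount next (i + 1) a) := by
  rw [walkCount, Nat.cast_sum]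
  exact log_card_add_sum_log_div_card_le (hne a) fun b _ ↦ by exact_mod_cast walkCount_pos hne i b

variable [Fintype α] [DecidableEq α]

-- `hstat` says that the uniform distribution is stationary for the random walk that moves from `a`
-- to a uniformly chosen element of `next a`.
lemma sum_sum_next_div_card (hstat : ∀ b, ∑ a with b ∈ next a, (#(next a) : ℝ)⁻¹ = 1)
    (f : α → ℝ) : ∑ a, (∑ b ∈ next a, f b) / #(next a) = ∑ b, f b := by
  calc ∑ a, (∑ b ∈ next a, f b) / #(next a)
      = ∑ a, ∑ b ∈ next a, f b * (#(next a) : ℝ)⁻¹ := by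
        simp only [div_eq_mul_inv, sum_mul]
    _ = ∑ b, ∑ a with b ∈ next a, f b * (#(next a) : ℝ)⁻¹ := sum_comm' (by simp)
    _ = ∑ b, f b := by simp only [← mul_sum, hstat, mul_one]

lemma mul_sum_log_card_le_sum_log_walkCount (hne : ∀ a, (next a).Nonempty)
    (hstat : ∀ b, ∑ a with b ∈ next a, (#(next a) : ℝ)⁻¹ = 1) (i : ℕ) :
    i * ∑ a, Real.log #(next a) ≤ ∑ a, Real.log (walkCount next i a) := by
  induction i with
  | zero => simp [walkCount]
  | succ i ih =>
    calc ((i + 1 : ℕ) : ℝ) * ∑ a, Real.log #(next a)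
        = ∑ a, Real.log #(next a) + i * ∑ a, Real.log #(next a) := by push_cast; ring
      _ ≤ ∑ a, Real.log #(next a) + ∑ a, Real.log (walkCount next i a) := by gcongr
      _ = ∑ a, (Real.log #(next a) +
            (∑ b ∈ next a, Real.log (walkCount next i b)) / #(next a)) := by
        rw [sum_add_distrib, sum_sum_next_div_card hstat]
      _ ≤ ∑ a, Real.log (walkCount next (i + 1) a) :=
        sum_le_sum fun a _ ↦ log_card_add_le_log_walkCount_succ hne i a

lemma card_mul_pow_le_sum_walkCount (hne : ∀ a, (next a).Nonempty)
    (hstat : ∀ b, ∑ a with b ∈ next a, (#(next a) : ℝ)⁻¹ = 1) {c : ℝ} (hc : 0 < c)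
    (hlog : Fintype.card α * Real.log c ≤ ∑ a, Real.log #(next a)) (i : ℕ) :
    Fintype.card α * c ^ i ≤ ∑ a, (walkCount next i a : ℝ) := by
  refine card_mul_le_sum_of_card_mul_log_le
    (fun a _ ↦ by exact_mod_cast walkCount_pos hne i a) (pow_pos hc i) ?_
  calc Fintype.card α * Real.log (c ^ i) = i * (Fintype.card α * Real.log c) := by
        rw [Real.log_pow]; ring
    _ ≤ i * ∑ a, Real.log #(next a) := by gcongr
    _ ≤ ∑ a, Real.log (walkCount next i a) :=
        mul_sum_log_card_le_sum_log_walkCount hne hstat i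

end WalkCount

section Girth

variable {V : Type*} {G H : SimpleGraph V}

lemma isAcyclic_of_encard_edgeSet_lt_egirth (hHG : H ≤ G) (hlt : H.edgeSet.encard < G.egirth) :
    H.IsAcyclic := by
  classical
  intro v c hc
  refine hlt.not_ge ?_
  calc G.egirth ≤ H.egirth := egirth_anti hHG
    _ ≤ c.length := egirth_le_length hc
    _ = #c.edges.toFinset := by rw [List.toFinset_card_of_nodup hc.edges_nodup, c.length_edges]
    _ = (c.edges.toFinset : Set (Sym2 V)).encard := (Set.encard_coe_eq_coe_finsetCard _).symm
    _ ≤ H.edgeSet.encard := Set.encard_le_encard fun e he ↦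
        c.edges_subset_edgeSet (List.mem_toFinset.1 he)

lemma encard_edgeSet_toSubgraph_le_length {u v : V} (p : G.Walk u v) :
    p.toSubgraph.edgeSet.encard ≤ p.length := by
  classical
  have hcoe : p.toSubgraph.edgeSet = (p.edges.toFinset : Set (Sym2 V)) := by
    ext e
    simp
  rw [hcoe, Set.encard_coe_eq_coe_finsetCard, ← p.length_edges]
  exact_mod_cast p.edges.toFinset_card_le

/-- A walk that never traverses an edge and immediately returns along it: consecutive edges of the
walk are distinct. -/
def IsNonbacktracking {u v : V} (p : G.Walk u v) : Prop := p.edges.IsChain (· ≠ ·)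

lemma IsNonbacktracking.of_cons {u v w : V} {h : G.Adj u v} {p : G.Walk v w}
    (hp : IsNonbacktracking (p.cons h)) : IsNonbacktracking p :=
  List.IsChain.tail hp

lemma IsNonbacktracking.eq_of_isAcyclic {u v : V} {p q : G.Walk u v}
    (hp : IsNonbacktracking p) (hH : H.IsAcyclic) (hq : IsNonbacktracking q)
    (hpH : ∀ e ∈ p.edges, e ∈ H.edgeSet) (hqH : ∀ e ∈ q.edges, e ∈ H.edgeSet) : p = q := by
  have hp' : (p.transfer H hpH).IsPath := by
    rw [hH.isPath_iff_isChain, p.edges_transfer]; exact hp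
  have hq' : (q.transfer H hqH).IsPath := by
    rw [hH.isPath_iff_isChain, q.edges_transfer]; exact hq
  have heq := congrArg Subtype.val ((hH.subsingleton_path u v).elim ⟨_, hp'⟩ ⟨_, hq'⟩)
  have hsupport := congrArg Walk.support heq
  simp only [Walk.support_transfer] at hsupport
  exact Walk.ext_support hsupport

lemma IsNonbacktracking.eq_of_length_add_length_lt_egirth {u v : V} {p q : G.Walk u v}
    (hp : IsNonbacktracking p) (hq : IsNonbacktracking q)
    (hlt : ((p.length + q.length : ℕ) : ℕ∞) < G.egirth) : p = q := by
  let K := p.toSubgraph ⊔ q.toSubgraph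
  have hK : K.spanningCoe.IsAcyclic := by
    refine isAcyclic_of_encard_edgeSet_lt_egirth K.spanningCoe_le (lt_of_le_of_lt ?_ hlt)
    rw [Subgraph.edgeSet_spanningCoe, Subgraph.edgeSet_sup, Nat.cast_add]
    exact (Set.encard_union_le _ _).trans (add_le_add
      (encard_edgeSet_toSubgraph_le_length p) (encard_edgeSet_toSubgraph_le_length q))
  exact hp.eq_of_isAcyclic hK hq (fun e he ↦ by simp [K, he]) (fun e he ↦ by simp [K, he])

end Girth

section Continuations

variable {V : Type*} [Fintype V] {G : SimpleGraph V} [DecidableRel G.Adj]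

lemma sum_dart_symm {M : Type*} [AddCommMonoid M] (f : G.Dart → M) :
    ∑ e : G.Dart, f e.symm = ∑ e, f e :=
  Equiv.sum_comp Dart.symm_involutive.toPerm f

lemma sum_dart_snd {M : Type*} [AddCommMonoid M] (f : V → M) :
    ∑ e : G.Dart, f e.snd = ∑ v, G.degree v • f v := by
  have : DecidableEq V := Classical.decEq V
  calc ∑ e : G.Dart, f e.snd = ∑ e : G.Dart, f e.fst := sum_dart_symm fun e ↦ f e.fst
    _ = ∑ v, ∑ e : G.Dart with e.fst = v, f e.fst := (sum_fiberwise _ _ _).symm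
    _ = ∑ v, ∑ e : G.Dart with e.fst = v, f v :=
      sum_congr rfl fun v _ ↦ sum_congr rfl fun e he ↦ by rw [(mem_filter.1 he).2]
    _ = ∑ v, G.degree v • f v := by simp only [sum_const, dart_fst_fiber_card_eq_degree]

variable [DecidableEq V]

/-- The darts by which a non-backtracking walk may continue after traversing `e`. -/
def continuations (e : G.Dart) : Finset G.Dart := {e' | e'.fst = e.snd ∧ e' ≠ e.symm}

lemma mem_continuations {e e' : G.Dart} :
    e' ∈ continuations e ↔ e'.fst = e.snd ∧ e' ≠ e.symm := by
  simp [continuations]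

lemma symm_mem_continuations_symm {e e' : G.Dart} :
    e.symm ∈ continuations e'.symm ↔ e' ∈ continuations e := by
  rw [mem_continuations, mem_continuations, Dart.symm_symm]
  exact and_congr eq_comm ne_comm

lemma card_continuations_add_one (e : G.Dart) : #(continuations e) + 1 = G.degree e.snd := by
  have herase : continuations e = ({e' : G.Dart | e'.fst = e.snd} : Finset _).erase e.symm := by
    ext e'
    simp [mem_continuations, and_comm]
  rw [herase, card_erase_add_one (by simp), dart_fst_fiber_card_eq_degree]

lemma cast_card_continuations (e : G.Dart) : (#(continuations e) : ℝ) = G.degree e.snd - 1 := by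
  simp [← card_continuations_add_one]

lemma continuations_nonempty (hmin : ∀ v, 2 ≤ G.degree v) (e : G.Dart) :
    (continuations e).Nonempty := by
  have := card_continuations_add_one e
  have := hmin e.snd
  exact card_pos.1 (by lia)

lemma card_filter_mem_continuations (e' : G.Dart) :
    #{e | e' ∈ continuations e} = #(continuations e'.symm) :=
  card_equiv Dart.symm_involutive.toPerm fun e ↦ by simp [symm_mem_continuations_symm]

lemma sum_inv_card_continuations (hmin : ∀ v, 2 ≤ G.degree v) (e' : G.Dart) :
    ∑ e with e' ∈ continuations e, (#(continuations e) : ℝ)⁻¹ = 1 := by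
  have hcard : ∀ e ∈ ({e | e' ∈ continuations e} : Finset G.Dart),
      (#(continuations e) : ℝ)⁻¹ = (#(continuations e'.symm) : ℝ)⁻¹ := by
    intro e he
    rw [mem_filter, mem_continuations] at he
    rw [cast_card_continuations, cast_card_continuations, ← he.2.1]
    rfl
  rw [sum_congr rfl hcard, sum_const, card_filter_mem_continuations, nsmul_eq_mul]
  exact mul_inv_cancel₀ (by exact_mod_cast (continuations_nonempty hmin _).card_ne_zero)

lemma card_dart_mul_log_le {d : ℝ} (hd : 1 < d) (hmin : ∀ v, 2 ≤ G.degree v)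
    (havg : d * Fintype.card V ≤ Fintype.card G.Dart) :
    Fintype.card G.Dart * Real.log (d - 1) ≤ ∑ e : G.Dart, Real.log #(continuations e) := by
  simp only [cast_card_continuations, sum_dart_snd fun v ↦ Real.log (G.degree v - 1), nsmul_eq_mul]
  rw [dart_card_eq_sum_degrees, Nat.cast_sum] at havg ⊢
  exact sum_mul_log_sub_one_le (fun v _ ↦ by exact_mod_cast hmin v) hd havg

lemma card_dart_mul_pow_le_sum_walkCount {d : ℝ} (hd : 1 < d) (hmin : ∀ v, 2 ≤ G.degree v)
    (havg : d * Fintype.card V ≤ Fintype.card G.Dart) (i : ℕ) :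
    Fintype.card G.Dart * (d - 1) ^ i ≤ ∑ e : G.Dart, (walkCount continuations i e : ℝ) :=
  card_mul_pow_le_sum_walkCount (continuations_nonempty hmin) (sum_inv_card_continuations hmin)
    (sub_pos.2 hd) (card_dart_mul_log_le hd hmin havg) i

end Continuations

section Ends

variable {V : Type*} [Fintype V] [DecidableEq V] {G : SimpleGraph V} [DecidableRel G.Adj]

/-- The last vertices of the non-backtracking walks that begin with `e` and then make `i` further
steps, i.e. of the walks counted by `walkCount continuations i e`. -/
def ends : ℕ → G.Dart → Finset V
  | 0, e => {e.snd}
  | i + 1, e => (continuations e).biUnion (ends i)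

lemma exists_isNonbacktracking_of_mem_ends {i : ℕ} {e : G.Dart} {w : V} (hw : w ∈ ends i e) :
    ∃ p : G.Walk e.snd w, p.length = i ∧ IsNonbacktracking (p.cons e.adj) := by
  induction i generalizing e with
  | zero =>
    obtain rfl : w = e.snd := by simpa [ends] using hw
    exact ⟨.nil, rfl, List.isChain_singleton _⟩
  | succ i ih =>
    obtain ⟨e', he', hw⟩ := mem_biUnion.1 hw
    obtain ⟨hfst, hne⟩ := mem_continuations.1 he'
    obtain ⟨⟨v, x⟩, hvx⟩ := e'
    obtain ⟨p, rfl, hp⟩ := ih hw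
    obtain rfl : v = e.snd := hfst
    refine ⟨p.cons hvx, rfl, List.IsChain.cons_cons (fun hedge ↦ ?_) hp⟩
    obtain heq | heq := (dart_edge_eq_iff e ⟨(e.snd, x), hvx⟩).1 hedge
    · exact e.fst_ne_snd (congrArg (·.fst) heq)
    · exact hne ((Dart.symm_involutive.eq_iff).1 heq.symm)

lemma disjoint_ends_of_fst_eq {i j : ℕ} {e e' : G.Dart} (hfst : e.fst = e'.fst)
    (hne : (i, e) ≠ (j, e')) (hlt : ((i + j + 2 : ℕ) : ℕ∞) < G.egirth) :
    Disjoint (ends i e) (ends j e') := by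
  refine disjoint_left.2 fun w hw hw' ↦ hne ?_
  obtain ⟨⟨u, v⟩, huv⟩ := e
  obtain ⟨⟨u', v'⟩, huv'⟩ := e'
  obtain rfl : u = u' := hfst
  obtain ⟨p, rfl, hp⟩ := exists_isNonbacktracking_of_mem_ends hw
  obtain ⟨q, rfl, hq⟩ := exists_isNonbacktracking_of_mem_ends hw'
  have heq : p.cons huv = q.cons huv' := hp.eq_of_length_add_length_lt_egirth hq
    (hlt.trans_le' (Nat.cast_le.2 (by simp only [Walk.length_cons]; lia)))
  cases heq
  rfl

lemma disjoint_ends_symm {i j : ℕ} {e : G.Dart} (hlt : ((i + j + 1 : ℕ) : ℕ∞) < G.egirth) :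
    Disjoint (ends i e) (ends j e.symm) := by
  refine disjoint_left.2 fun w hw hw' ↦ ?_
  obtain ⟨⟨u, v⟩, huv⟩ := e
  obtain ⟨p, rfl, hp⟩ := exists_isNonbacktracking_of_mem_ends hw
  obtain ⟨q, rfl, hq⟩ := exists_isNonbacktracking_of_mem_ends hw'
  have heq : p.cons huv = q := hp.eq_of_length_add_length_lt_egirth hq.of_cons
    (hlt.trans_le' (Nat.cast_le.2 (Nat.add_right_comm p.length 1 q.length).le))
  -- So the second walk starts with `v → u → v`.
  subst heq
  have hne : s(v, u) ≠ s(u, v) := (List.isChain_cons_cons.1 hq).1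
  exact hne Sym2.eq_swap

lemma fst_notMem_ends {i : ℕ} {e : G.Dart} (hlt : ((i + 1 : ℕ) : ℕ∞) < G.egirth) :
    e.fst ∉ ends i e := by
  intro hmem
  obtain ⟨p, rfl, hp⟩ := exists_isNonbacktracking_of_mem_ends hmem
  cases hp.eq_of_length_add_length_lt_egirth (q := .nil) List.isChain_nil (by simpa using hlt)

lemma card_ends {i : ℕ} (e : G.Dart) (hlt : ((2 * i : ℕ) : ℕ∞) < G.egirth) :
    #(ends i e) = walkCount continuations i e := by
  induction i generalizing e with
  | zero => rfl
  | succ i ih =>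
    rw [ends, walkCount, card_biUnion]
    · exact sum_congr rfl fun e' _ ↦ ih e' (hlt.trans_le' (by gcongr; lia))
    · intro a ha b hb hab
      rw [mem_coe, mem_continuations] at ha hb
      exact disjoint_ends_of_fst_eq (ha.1.trans hb.1.symm) (by simpa using hab)
        (hlt.trans_le' (by gcongr; lia))

lemma card_biUnion_ends {T : Finset (ℕ × G.Dart)}
    (hlt : ∀ a ∈ T, ((2 * a.1 : ℕ) : ℕ∞) < G.egirth)
    (hdisj : (T : Set (ℕ × G.Dart)).PairwiseDisjoint fun a ↦ ends a.1 a.2) :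
    #(T.biUnion fun a ↦ ends a.1 a.2) = ∑ a ∈ T, walkCount continuations a.1 a.2 := by
  rw [card_biUnion hdisj]
  exact sum_congr rfl fun a ha ↦ card_ends a.2 (hlt a ha)

lemma one_add_sum_walkCount_le_card {h : ℕ} (hlt : ((2 * h : ℕ) : ℕ∞) < G.egirth) (v : V) :
    1 + ∑ i ∈ range h, ∑ e : G.Dart with e.fst = v, walkCount continuations i e ≤
      Fintype.card V := by
  let T : Finset (ℕ × G.Dart) := range h ×ˢ ({e | e.fst = v} : Finset G.Dart)
  have hT {a} (ha : a ∈ T) : a.1 < h ∧ a.2.fst = v := by simpa [T] using ha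
  have hdisj : (T : Set (ℕ × G.Dart)).PairwiseDisjoint fun a ↦ ends a.1 a.2 := by
    intro a ha b hb hab
    obtain ⟨ha, hav⟩ := hT ha
    obtain ⟨hb, hbv⟩ := hT hb
    exact disjoint_ends_of_fst_eq (hav.trans hbv.symm) hab (hlt.trans_le' (by gcongr; lia))
  have hv : v ∉ T.biUnion fun a ↦ ends a.1 a.2 := by
    rintro hv
    obtain ⟨a, ha, hva⟩ := mem_biUnion.1 hv
    obtain ⟨ha, rfl⟩ := hT ha
    exact fst_notMem_ends (hlt.trans_le' (by gcongr; lia)) hva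
  rw [← sum_product', ← card_biUnion_ends (T := T) _ hdisj, add_comm, ← card_insert_of_notMem hv]
  · exact card_le_univ _
  · exact fun a ha ↦ hlt.trans_le' (by gcongr; exact (hT ha).1.le)

lemma sum_walkCount_add_sum_walkCount_symm_le_card {h : ℕ}
    (hle : ((2 * h : ℕ) : ℕ∞) ≤ G.egirth) (e : G.Dart) :
    ∑ i ∈ range h, (walkCount continuations i e + walkCount continuations i e.symm) ≤
      Fintype.card V := by
  let T : Finset (ℕ × G.Dart) := range h ×ˢ {e, e.symm}
  have hT {a} (ha : a ∈ T) : a.1 < h ∧ (a.2 = e ∨ a.2 = e.symm) := by simpa [T] using ha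
  have hlt {n : ℕ} (hn : n < 2 * h) : (n : ℕ∞) < G.egirth := (Nat.cast_lt.2 hn).trans_le hle
  have hdisj : (T : Set (ℕ × G.Dart)).PairwiseDisjoint fun a ↦ ends a.1 a.2 := by
    rintro ⟨i, a⟩ ha ⟨j, b⟩ hb hab
    obtain ⟨hi, ha⟩ := hT ha
    obtain ⟨hj, hb⟩ := hT hb
    obtain rfl | rfl : a = b ∨ b = a.symm := by
      rcases ha with rfl | rfl <;> rcases hb with rfl | rfl <;> simp
    · have hij : i ≠ j := by simpa using hab
      exact disjoint_ends_of_fst_eq rfl hab (hlt (by lia))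
    · exact disjoint_ends_symm (hlt (by dsimp only at hi hj; lia))
  calc ∑ i ∈ range h, (walkCount continuations i e + walkCount continuations i e.symm)
      = ∑ a ∈ T, walkCount continuations a.1 a.2 := by
        simp only [T, sum_product, sum_pair e.symm_ne.symm]
    _ = #(T.biUnion fun a ↦ ends a.1 a.2) :=
        (card_biUnion_ends (fun a ha ↦ hlt (by have := (hT ha).1; lia)) hdisj).symm
    _ ≤ Fintype.card V := card_le_univ _

end Ends

section MinDegree

variable {V : Type*} [Fintype V] {G : SimpleGraph V} [DecidableRel G.Adj] {d : ℝ} {h : ℕ}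

lemma card_dart_mul_geom_sum_le [DecidableEq V] (hd : 1 < d) (hmin : ∀ v, 2 ≤ G.degree v)
    (havg : d * Fintype.card V ≤ Fintype.card G.Dart) :
    Fintype.card G.Dart * ∑ i ∈ range h, (d - 1) ^ i ≤
      ∑ i ∈ range h, ∑ e : G.Dart, (walkCount continuations i e : ℝ) := by
  rw [mul_sum]
  exact sum_le_sum fun i _ ↦ card_dart_mul_pow_le_sum_walkCount hd hmin havg i

lemma one_add_mul_geom_sum_le_card [Nonempty V] (hd : 1 < d) (hmin : ∀ v, 2 ≤ G.degree v)
    (havg : d * Fintype.card V ≤ Fintype.card G.Dart) (hlt : ((2 * h : ℕ) : ℕ∞) < G.egirth) :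
    1 + d * ∑ i ∈ range h, (d - 1) ^ i ≤ Fintype.card V := by
  classical
  have hgeom : 0 ≤ ∑ i ∈ range h, (d - 1) ^ i := sum_nonneg fun i _ ↦ pow_nonneg (by linarith) i
  have htree (v : V) : 1 + ∑ i ∈ range h, ∑ e : G.Dart with e.fst = v,
      (walkCount continuations i e : ℝ) ≤ Fintype.card V := by
    exact_mod_cast one_add_sum_walkCount_le_card hlt v
  refine le_of_mul_le_mul_left ?_ (Nat.cast_pos.2 (Fintype.card_pos (α := V)))
  calc (Fintype.card V : ℝ) * (1 + d * ∑ i ∈ range h, (d - 1) ^ i)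
      = Fintype.card V + d * Fintype.card V * ∑ i ∈ range h, (d - 1) ^ i := by ring
    _ ≤ Fintype.card V + Fintype.card G.Dart * ∑ i ∈ range h, (d - 1) ^ i := by gcongr
    _ ≤ Fintype.card V + ∑ i ∈ range h, ∑ e : G.Dart, (walkCount continuations i e : ℝ) := by
        grw [card_dart_mul_geom_sum_le hd hmin havg]
    _ = ∑ v : V, (1 + ∑ i ∈ range h, ∑ e : G.Dart with e.fst = v,
          (walkCount continuations i e : ℝ)) := by
        rw [sum_add_distrib, sum_comm (s := (univ : Finset V))]
        simp only [sum_fiberwise univ (fun e : G.Dart ↦ e.fst), sum_const, card_univ, nsmul_one]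
    _ ≤ ∑ _v : V, (Fintype.card V : ℝ) := sum_le_sum fun v _ ↦ htree v
    _ = Fintype.card V * Fintype.card V := by simp

lemma two_mul_geom_sum_le_card [Nonempty V] (hd : 1 < d) (hmin : ∀ v, 2 ≤ G.degree v)
    (havg : d * Fintype.card V ≤ Fintype.card G.Dart) (hle : ((2 * h : ℕ) : ℕ∞) ≤ G.egirth) :
    2 * ∑ i ∈ range h, (d - 1) ^ i ≤ Fintype.card V := by
  classical
  have hV : (0 : ℝ) < Fintype.card V := Nat.cast_pos.2 Fintype.card_pos
  have htree (e : G.Dart) : ∑ i ∈ range h, ((walkCount continuations i e : ℝ) +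
      walkCount continuations i e.symm) ≤ Fintype.card V := by
    exact_mod_cast sum_walkCount_add_sum_walkCount_symm_le_card hle e
  refine le_of_mul_le_mul_left ?_ (havg.trans_lt' (mul_pos (by linarith) hV))
  calc (Fintype.card G.Dart : ℝ) * (2 * ∑ i ∈ range h, (d - 1) ^ i)
      = 2 * (Fintype.card G.Dart * ∑ i ∈ range h, (d - 1) ^ i) := by ring
    _ ≤ 2 * ∑ i ∈ range h, ∑ e : G.Dart, (walkCount continuations i e : ℝ) := by
        grw [card_dart_mul_geom_sum_le hd hmin havg]
    _ = ∑ e : G.Dart, ∑ i ∈ range h,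
          ((walkCount continuations i e : ℝ) + walkCount continuations i e.symm) := by
        rw [sum_comm]
        simp only [sum_add_distrib, two_mul,
          sum_dart_symm fun e ↦ ∑ i ∈ range h, (walkCount continuations i e : ℝ)]
    _ ≤ ∑ _e : G.Dart, (Fintype.card V : ℝ) := sum_le_sum fun e _ ↦ htree e
    _ = Fintype.card G.Dart * Fintype.card V := by simp

lemma mooreBound_le_card_of_two_le_degree [Nonempty V] (hd : 1 < d) (hmin : ∀ v, 2 ≤ G.degree v)
    (havg : d * Fintype.card V ≤ 2 * #G.edgeFinset) {g : ℕ} (hgirth : g ≤ G.egirth) :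
    mooreBound d g ≤ Fintype.card V := by
  replace havg : d * Fintype.card V ≤ Fintype.card G.Dart := by
    rw [dart_card_eq_twice_card_edges]
    exact_mod_cast havg
  unfold mooreBound
  split_ifs with hg
  · refine one_add_mul_geom_sum_le_card hd hmin havg (hgirth.trans_lt' ?_)
    have := Nat.two_mul_div_two_add_one_of_odd hg
    exact_mod_cast (by lia : 2 * (g / 2) < g)
  · exact two_mul_geom_sum_le_card hd hmin havg (hgirth.trans' (by gcongr; lia))

end MinDegree

section DeleteVertex

variable {V : Type*} [Fintype V] {G : SimpleGraph V} [DecidableRel G.Adj] {d : ℝ}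

lemma card_edgeFinset_eq_card_edgeFinset_induce_compl_add_degree [DecidableEq V] (v : V) :
    #G.edgeFinset = #(G.induce {v}ᶜ).edgeFinset + G.degree v := by
  rw [card_edgeFinset_induce_compl_singleton, card_edgeFinset_deleteIncidenceSet,
    Nat.sub_add_cancel (G.degree_le_card_edgeFinset v)]

lemma nontrivial_of_mul_card_le [Nonempty V] (hd : 0 < d)
    (havg : d * Fintype.card V ≤ 2 * #G.edgeFinset) : Nontrivial V := by
  by_contra! hV
  have hcard : (0 : ℝ) < Fintype.card V := Nat.cast_pos.2 Fintype.card_pos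
  have hedges : G.edgeFinset = ∅ := edgeFinset_eq_empty.2 (Subsingleton.elim _ _)
  rw [hedges, card_empty, Nat.cast_zero, mul_zero] at havg
  exact havg.not_gt (mul_pos hd hcard)

lemma mul_card_compl_singleton_le [DecidableEq V]
    (havg : d * Fintype.card V ≤ 2 * #G.edgeFinset) {v : V} (hv : 2 * G.degree v ≤ d) :
    d * Fintype.card ({v}ᶜ : Set V) ≤ 2 * #(G.induce {v}ᶜ).edgeFinset := by
  have hcard : Fintype.card ({v}ᶜ : Set V) + 1 = Fintype.card V := by
    rw [Fintype.card_compl_set, Set.card_singleton,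
      Nat.sub_add_cancel (Fintype.card_pos_iff.2 ⟨v⟩)]
  rw [← hcard, card_edgeFinset_eq_card_edgeFinset_induce_compl_add_degree v] at havg
  push_cast at havg
  linarith

end DeleteVertex

end MooreBound

/-- **Alon–Hoory–Linial.** Every nonempty graph with average degree at least `d ≥ 2` and
girth at least `g ≥ 3` has at least `n₀(d, g)` vertices. -/
theorem alon_hoory_linial {V : Type} [Fintype V] [Nonempty V]
    (G : SimpleGraph V) [DecidableRel G.Adj]
    (d : ℝ) (g : ℕ) (hd : 2 ≤ d) (hg : 3 ≤ g)
    (havg : d ≤ 2 * (G.edgeFinset.card : ℝ) / (Fintype.card V : ℝ))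
    (hgirth : (g : ℕ∞) ≤ G.egirth) :
    mooreBound d g ≤ (Fintype.card V : ℝ) := by
  classical
  rw [le_div_iff₀ (Nat.cast_pos.2 Fintype.card_pos)] at havg
  induction hn : Fintype.card V using Nat.strong_induction_on generalizing V with | _ n ih
  subst hn
  by_cases hmin : ∀ v, 2 ≤ G.degree v
  · exact MooreBound.mooreBound_le_card_of_two_le_degree (by linarith) hmin havg hgirth
  obtain ⟨v, hv⟩ : ∃ v, G.degree v < 2 := by simpa using hmin
  have hvd : 2 * (G.degree v : ℝ) ≤ d := by
    have : (G.degree v : ℝ) ≤ 1 := by exact_mod_cast Nat.le_of_lt_succ hv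
    linarith
  have := MooreBound.nontrivial_of_mul_card_le (by linarith) havg
  have := (Set.nonempty_compl_of_nontrivial v).to_subtype
  have hcard : Fintype.card ({v}ᶜ : Set V) < Fintype.card V :=
    Fintype.card_subtype_lt (x := v) (by simp)
  calc mooreBound d g ≤ Fintype.card ({v}ᶜ : Set V) :=
        ih _ hcard (G.induce {v}ᶜ)
          (MooreBound.mul_card_compl_singleton_le havg hvd)
          (hgirth.trans (Embedding.induce _).isIndContained.isContained.egirth_le) rfl
    _ ≤ Fintype.card V := by exact_mod_cast hcard.le
end

section
/- Let G be a nonempty finite simple graph with minimum degree at least 2 on n vertices, with average degree d = 2·e(G)/n, and let Λ(G) = ∏_{x ∈ V(G)} (deg(x) − 1)^{deg(x)/(n·d)} (a real number). If the girth of G is at least g for an integer g ≥ 3, then n ≥ n₀(Λ(G)+1, g). -/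
/-!
Consider the digraph on the darts (oriented edges) of `G` in which `e → e'` when `e'` continues `e`
without backtracking. A dart with head `x` has `deg x - 1` successors, so `Λ(G)` is the geometric
mean of the out-degrees. The uniform distribution on darts is stationary for the random walk on this
digraph, whence two applications of the AM-GM inequality, one in each step of the walk and one over
all starting darts, show that a dart has on average at least `Λ ^ i` continuations by `i` steps. (If
some dart has no successor, then `Λ = 0` and this is trivial.)

On the other hand, the edges of two non-backtracking walks of total length below the girth form a
forest, so two such walks with common endpoints coincide. Hence the walks leaving a fixed edge
through one end with fewer than `⌈g/2⌉` further steps and through the other end with fewer than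
`⌊g/2⌋` further steps have pairwise distinct endpoints, and there are at most `n` of them. Averaging
over all darts gives `∑_{i < ⌈g/2⌉} Λ ^ i + ∑_{i < ⌊g/2⌋} Λ ^ i ≤ n`, whose left-hand side is
`n₀(Λ + 1, g)`.
-/

open Finset SimpleGraph

theorem mooreBound_add_one (x : ℝ) (g : ℕ) :
    mooreBound (x + 1) g = ∑ i ∈ range ((g + 1) / 2), x ^ i + ∑ i ∈ range (g / 2), x ^ i := by
  rw [mooreBound, add_sub_cancel_right]
  rcases Nat.even_or_odd' g with ⟨h, rfl | rfl⟩
  · rw [if_neg (by simp), show (2 * h + 1) / 2 = 2 * h / 2 by lia, two_mul]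
  · rw [if_pos (by simp), show (2 * h + 1 + 1) / 2 = (2 * h + 1) / 2 + 1 by lia, sum_range_succ']
    simp only [pow_succ, ← sum_mul, pow_zero]
    ring

/-! ### Counting walks in a finite digraph -/

section Digraph

variable {α : Type*}

theorem card_mul_prod_rpow_inv_card_le_sum (s : Finset α) {f : α → ℝ} (hf : ∀ a ∈ s, 0 ≤ f a) :
    #s * ∏ a ∈ s, f a ^ (#s : ℝ)⁻¹ ≤ ∑ a ∈ s, f a := by
  rcases s.eq_empty_or_nonempty with rfl | hs
  · simp
  have hcard : (0 : ℝ) < #s := mod_cast hs.card_pos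
  have amgm := Real.geom_mean_le_arith_mean_weighted s (fun _ ↦ (#s : ℝ)⁻¹) f
    (fun _ _ ↦ by positivity) (by simp [hcard.ne']) hf
  rwa [← mul_sum, le_inv_mul_iff₀ hcard] at amgm

variable (succ : α → Finset α)

/-- The number of walks of `i` steps starting at `a` in the digraph on `α` in which the
out-neighbours of a vertex `b` are the elements of `succ b`. -/
def walkCount : ℕ → α → ℕ
  | 0, _ => 1
  | i + 1, a => ∑ b ∈ succ a, walkCount i b

variable [Fintype α]

/-- The geometric mean of the out-degrees of the digraph on `α` in which the out-neighbours of a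
vertex `a` are the elements of `succ a`. It is `1` when `α` is empty. -/
noncomputable def geomMeanOutDegree : ℝ :=
  (∏ a, (#(succ a) : ℝ)) ^ (Fintype.card α : ℝ)⁻¹

variable {succ}

theorem geomMeanOutDegree_eq_zero {a : α} (ha : succ a = ∅) : geomMeanOutDegree succ = 0 := by
  have : Nonempty α := ⟨a⟩
  rw [geomMeanOutDegree, prod_eq_zero (mem_univ a) (by simp [ha]), Real.zero_rpow (by simp)]

variable [DecidableEq α]

/-- The uniform distribution on `α` is stationary for the random walk that moves from `a` to a
uniformly chosen element of `succ a`. -/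
def UniformIsStationary (succ : α → Finset α) : Prop :=
  ∀ b, ∑ a with b ∈ succ a, (#(succ a) : ℝ)⁻¹ = 1

theorem prod_prod_rpow_inv_card_eq_prod (hstat : UniformIsStationary succ)
    {f : α → ℝ} (hf : ∀ a, 0 ≤ f a) :
    ∏ a, ∏ b ∈ succ a, f b ^ (#(succ a) : ℝ)⁻¹ = ∏ b, f b := by
  rw [prod_comm' (t' := univ) (s' := fun b ↦ {a | b ∈ succ a}) (by simp)]
  refine prod_congr rfl fun b _ ↦ ?_
  rw [← Real.rpow_sum_of_nonneg (hf b) (fun _ _ ↦ by positivity), hstat, Real.rpow_one]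

theorem prod_card_pow_le_prod_walkCount
    (hstat : UniformIsStationary succ) (i : ℕ) :
    (∏ a, (#(succ a) : ℝ)) ^ i ≤ ∏ a, (walkCount succ i a : ℝ) := by
  induction i with
  | zero => simp [walkCount]
  | succ i ih =>
    calc (∏ a, (#(succ a) : ℝ)) ^ (i + 1)
        ≤ (∏ a, (#(succ a) : ℝ)) * ∏ a, (walkCount succ i a : ℝ) := by
          rw [pow_succ']
          gcongr
      _ = ∏ a, #(succ a) * ∏ b ∈ succ a, (walkCount succ i b : ℝ) ^ (#(succ a) : ℝ)⁻¹ := by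
          rw [prod_mul_distrib, prod_prod_rpow_inv_card_eq_prod hstat fun _ ↦ by positivity]
      _ ≤ ∏ a, ∑ b ∈ succ a, (walkCount succ i b : ℝ) :=
          prod_le_prod (fun _ _ ↦ by positivity) fun a _ ↦
            card_mul_prod_rpow_inv_card_le_sum (succ a) fun _ _ ↦ by positivity
      _ = ∏ a, (walkCount succ (i + 1) a : ℝ) := by simp [walkCount]

theorem card_mul_geomMeanOutDegree_pow_le_sum_walkCount
    (hstat : UniformIsStationary succ) (i : ℕ) :
    Fintype.card α * geomMeanOutDegree succ ^ i ≤ ∑ a, (walkCount succ i a : ℝ) := by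
  calc Fintype.card α * geomMeanOutDegree succ ^ i
      = Fintype.card α * ((∏ a, (#(succ a) : ℝ)) ^ i) ^ (Fintype.card α : ℝ)⁻¹ := by
        rw [geomMeanOutDegree, Real.rpow_pow_comm (by positivity)]
    _ ≤ Fintype.card α * (∏ a, (walkCount succ i a : ℝ)) ^ (Fintype.card α : ℝ)⁻¹ := by
        gcongr
        exact prod_card_pow_le_prod_walkCount hstat i
    _ = #univ * ∏ a, (walkCount succ i a : ℝ) ^ (#(univ : Finset α) : ℝ)⁻¹ := by
        rw [Real.finsetProd_rpow _ _ fun _ _ ↦ by positivity, card_univ]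
    _ ≤ ∑ a, (walkCount succ i a : ℝ) :=
        card_mul_prod_rpow_inv_card_le_sum univ fun _ _ ↦ by positivity

end Digraph

/-! ### Uniqueness of short non-backtracking walks -/

section Nonbacktracking

variable {V : Type*} {G : SimpleGraph V}

theorem isAcyclic_of_encard_edgeSet_lt_egirth {H : SimpleGraph V} (hle : H ≤ G)
    (hcard : H.edgeSet.encard < G.egirth) : H.IsAcyclic := by
  classical
  intro x c hc
  have hlength : (c.length : ℕ∞) = (c.edges.toFinset : Set (Sym2 V)).encard := by
    rw [Set.encard_coe_eq_coe_finsetCard, List.toFinset_card_of_nodup hc.edges_nodup,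
      Walk.length_edges]
  refine hcard.not_ge ?_
  calc G.egirth ≤ H.egirth := egirth_anti hle
    _ ≤ c.length := egirth_le_length hc
    _ = (c.edges.toFinset : Set (Sym2 V)).encard := hlength
    _ ≤ H.edgeSet.encard :=
      Set.encard_le_encard fun _ he ↦ c.edges_subset_edgeSet (List.mem_toFinset.1 he)

theorem encard_edgeSet_le_length {u v : V} (p : G.Walk u v) : p.edgeSet.encard ≤ p.length := by
  classical
  rw [← Walk.coe_edges_toFinset, Set.encard_coe_eq_coe_finsetCard, ← Walk.length_edges]
  exact_mod_cast p.edges.toFinset_card_le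

/-- A walk is non-backtracking if it never traverses an edge twice in a row. -/
def IsNonbacktracking {u v : V} (p : G.Walk u v) : Prop :=
  p.edges.IsChain (· ≠ ·)

theorem IsNonbacktracking.of_cons {u v w : V} {h : G.Adj u v} {p : G.Walk v w}
    (hp : IsNonbacktracking (.cons h p)) : IsNonbacktracking p :=
  List.IsChain.tail hp

theorem IsNonbacktracking.eq_of_isAcyclic (hG : G.IsAcyclic) {u v : V} {p q : G.Walk u v}
    (hp : IsNonbacktracking p) (hq : IsNonbacktracking q) : p = q :=
  congrArg Subtype.val <| (hG.subsingleton_path u v).elim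
    ⟨p, (hG.isPath_iff_isChain p).2 hp⟩ ⟨q, (hG.isPath_iff_isChain q).2 hq⟩

theorem IsNonbacktracking.eq_of_length_add_length_lt {g : ℕ} (hgirth : g ≤ G.egirth) {u v : V}
    {p q : G.Walk u v} (hp : IsNonbacktracking p) (hq : IsNonbacktracking q)
    (hlen : p.length + q.length < g) : p = q := by
  let H : SimpleGraph V := fromEdgeSet (p.edgeSet ∪ q.edgeSet)
  have hsub : p.edgeSet ∪ q.edgeSet ⊆ G.edgeSet :=
    Set.union_subset p.edges_subset_edgeSet q.edges_subset_edgeSet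
  have hH : H.edgeSet = p.edgeSet ∪ q.edgeSet := by
    rw [edgeSet_fromEdgeSet, sdiff_eq_left]
    exact Set.subset_compl_iff_disjoint_right.1 (hsub.trans G.edgeSet_subset_compl_diagSet)
  have hacyc : H.IsAcyclic := by
    refine isAcyclic_of_encard_edgeSet_lt_egirth (edgeSet_subset_edgeSet.1 (hH ▸ hsub)) ?_
    calc H.edgeSet.encard ≤ p.edgeSet.encard + q.edgeSet.encard := hH ▸ Set.encard_union_le _ _
      _ ≤ p.length + q.length :=
        add_le_add (encard_edgeSet_le_length p) (encard_edgeSet_le_length q)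
      _ < g := mod_cast hlen
      _ ≤ G.egirth := hgirth
  have htransfer : p.transfer H (fun e he ↦ hH ▸ .inl he) = q.transfer H fun e he ↦ hH ▸ .inr he :=
    IsNonbacktracking.eq_of_isAcyclic hacyc (by simpa [IsNonbacktracking] using hp)
      (by simpa [IsNonbacktracking] using hq)
  exact Walk.ext_support (by simpa using congrArg Walk.support htransfer)

end Nonbacktracking

/-! ### The non-backtracking digraph on darts -/

section Dart

variable {V : Type*} [Fintype V] {G : SimpleGraph V} [DecidableRel G.Adj]

theorem prod_dart_snd {M : Type*} [CommMonoid M] (f : V → M) :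
    ∏ e : G.Dart, f e.snd = ∏ v, f v ^ G.degree v := by
  classical
  calc ∏ e : G.Dart, f e.snd = ∏ e : G.Dart, f e.fst :=
        Equiv.prod_comp Dart.symm_involutive.toPerm fun e : G.Dart ↦ f e.fst
    _ = ∏ v, ∏ e : G.Dart with e.fst = v, f v :=
        (prod_fiberwise' univ (fun e : G.Dart ↦ e.fst) f).symm
    _ = ∏ v, f v ^ G.degree v := by
        simp only [prod_const, ← dart_fst_fiber_card_eq_degree]

variable [DecidableEq V]

/-- The darts that can follow `e` in a non-backtracking walk. -/
def dartSucc (e : G.Dart) : Finset G.Dart :=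
  {e' | e'.fst = e.snd ∧ e' ≠ e.symm}

theorem mem_dartSucc {e e' : G.Dart} : e' ∈ dartSucc e ↔ e'.fst = e.snd ∧ e' ≠ e.symm := by
  simp [dartSucc]

theorem symm_mem_dartSucc_symm {e e' : G.Dart} :
    e.symm ∈ dartSucc e'.symm ↔ e' ∈ dartSucc e := by
  simp only [mem_dartSucc, Dart.symm_symm]
  exact and_congr eq_comm ne_comm

theorem card_dartSucc (e : G.Dart) : #(dartSucc e) = G.degree e.snd - 1 := by
  have herase : dartSucc e = ({e' | e'.fst = e.snd} : Finset G.Dart).erase e.symm := by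
    ext e'
    simp [mem_dartSucc, and_comm]
  rw [herase, card_erase_of_mem (by simp), dart_fst_fiber_card_eq_degree]

theorem cast_card_dartSucc (e : G.Dart) : (#(dartSucc e) : ℝ) = G.degree e.snd - 1 := by
  have hdeg : 0 < G.degree e.snd := (G.degree_pos_iff_exists_adj _).2 ⟨e.fst, e.adj.symm⟩
  rw [card_dartSucc, Nat.cast_pred hdeg]

theorem card_filter_mem_dartSucc (e' : G.Dart) :
    #{e : G.Dart | e' ∈ dartSucc e} = #(dartSucc e'.symm) :=
  card_equiv Dart.symm_involutive.toPerm fun e ↦ by simp [symm_mem_dartSucc_symm]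

theorem uniformIsStationary_dartSucc (hne : ∀ e : G.Dart, (dartSucc e).Nonempty) :
    UniformIsStationary (dartSucc (G := G)) := by
  intro e'
  have hcard {e : G.Dart} (he : e' ∈ dartSucc e) : #(dartSucc e) = #(dartSucc e'.symm) := by
    rw [card_dartSucc, card_dartSucc, ← (mem_dartSucc.1 he).1]
    rfl
  calc ∑ e with e' ∈ dartSucc e, (#(dartSucc e) : ℝ)⁻¹
      = ∑ e : G.Dart with e' ∈ dartSucc e, (#(dartSucc e'.symm) : ℝ)⁻¹ :=
        sum_congr rfl fun e he ↦ by rw [hcard (mem_filter.1 he).2]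
    _ = 1 := by
        rw [sum_const, card_filter_mem_dartSucc, nsmul_eq_mul, mul_inv_cancel₀]
        exact_mod_cast (hne e'.symm).card_ne_zero

theorem card_dart_mul_geomMeanOutDegree_pow_le (i : ℕ) :
    Fintype.card G.Dart * geomMeanOutDegree (dartSucc (G := G)) ^ i ≤
      ∑ e : G.Dart, (walkCount dartSucc i e : ℝ) := by
  by_cases hne : ∀ e : G.Dart, (dartSucc e).Nonempty
  · exact card_mul_geomMeanOutDegree_pow_le_sum_walkCount (uniformIsStationary_dartSucc hne) i
  · obtain ⟨e, he⟩ : ∃ e : G.Dart, dartSucc e = ∅ := by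
      simpa only [not_forall, not_nonempty_iff_eq_empty] using hne
    rw [geomMeanOutDegree_eq_zero he]
    cases i with
    | zero => simp [walkCount]
    | succ i =>
      rw [zero_pow i.succ_ne_zero, mul_zero]
      positivity

theorem geomMeanOutDegree_dartSucc :
    geomMeanOutDegree (dartSucc (G := G)) =
      ∏ x, ((G.degree x : ℝ) - 1) ^ ((G.degree x : ℝ) / (2 * #G.edgeFinset)) := by
  have hm : (Fintype.card G.Dart : ℝ) = 2 * #G.edgeFinset :=
    mod_cast G.dart_card_eq_twice_card_edges
  have hroot (x : V) : (((G.degree x : ℝ) - 1) ^ (Fintype.card G.Dart : ℝ)⁻¹) ^ G.degree x =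
      ((G.degree x : ℝ) - 1) ^ ((G.degree x : ℝ) / (2 * #G.edgeFinset)) := by
    rcases Nat.eq_zero_or_pos (G.degree x) with hx | hx
    · simp [hx]
    · have hx' : (0 : ℝ) ≤ G.degree x - 1 := sub_nonneg.2 (mod_cast hx)
      rw [← Real.rpow_mul_natCast hx', hm, div_eq_inv_mul]
  calc geomMeanOutDegree (dartSucc (G := G))
      = ∏ e : G.Dart, ((G.degree e.snd : ℝ) - 1) ^ (Fintype.card G.Dart : ℝ)⁻¹ := by
        simp only [geomMeanOutDegree, ← cast_card_dartSucc]
        rw [Real.finsetProd_rpow _ _ fun _ _ ↦ by positivity]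
    _ = ∏ x, ((G.degree x : ℝ) - 1) ^ ((G.degree x : ℝ) / (2 * #G.edgeFinset)) := by
        rw [prod_dart_snd fun x ↦ ((G.degree x : ℝ) - 1) ^ (Fintype.card G.Dart : ℝ)⁻¹]
        exact prod_congr rfl fun x _ ↦ hroot x

/-! ### Endpoints of non-backtracking walks -/

/-- The endpoints of the non-backtracking walks that start with the dart `e` and make `i` further
steps. -/
def nonbacktrackingEnds : ℕ → G.Dart → Finset V
  | 0, e => {e.snd}
  | i + 1, e => (dartSucc e).biUnion (nonbacktrackingEnds i)

theorem exists_isNonbacktracking_cons_of_mem_dartSucc {e e' : G.Dart} (he' : e' ∈ dartSucc e)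
    {x : V} {p : G.Walk e'.snd x} (hp : IsNonbacktracking (.cons e'.adj p)) :
    ∃ q : G.Walk e.snd x, q.length = p.length + 1 ∧ IsNonbacktracking (.cons e.adj q) := by
  obtain ⟨hfst, hne⟩ := mem_dartSucc.1 he'
  obtain ⟨⟨a, b⟩, hab⟩ := e
  obtain ⟨⟨_, c⟩, hbc⟩ := e'
  obtain rfl : _ = b := hfst
  refine ⟨.cons hbc p, rfl, List.isChain_cons_cons.2 ⟨fun hedge ↦ hne ?_, hp⟩⟩
  obtain rfl : a = c := Sym2.congr_right.1 (Sym2.eq_swap.trans hedge)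
  rfl

theorem exists_isNonbacktracking_of_mem_nonbacktrackingEnds {i : ℕ} {e : G.Dart} {x : V}
    (hx : x ∈ nonbacktrackingEnds i e) :
    ∃ p : G.Walk e.snd x, p.length = i ∧ IsNonbacktracking (.cons e.adj p) := by
  induction i generalizing e with
  | zero =>
    obtain rfl := mem_singleton.1 hx
    exact ⟨.nil, rfl, by simp [IsNonbacktracking]⟩
  | succ i ih =>
    obtain ⟨e', he', hx⟩ := mem_biUnion.1 hx
    obtain ⟨p, rfl, hp⟩ := ih hx
    exact exists_isNonbacktracking_cons_of_mem_dartSucc he' hp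

variable {g : ℕ}

theorem eq_of_mem_nonbacktrackingEnds (hgirth : g ≤ G.egirth) {i j : ℕ} (hij : i + 1 + (j + 1) < g)
    {e f : G.Dart} (hfst : e.fst = f.fst) {x : V} (hxe : x ∈ nonbacktrackingEnds i e)
    (hxf : x ∈ nonbacktrackingEnds j f) : e = f := by
  obtain ⟨p, rfl, hp⟩ := exists_isNonbacktracking_of_mem_nonbacktrackingEnds hxe
  obtain ⟨q, rfl, hq⟩ := exists_isNonbacktracking_of_mem_nonbacktrackingEnds hxf
  obtain ⟨⟨a, b⟩, hab⟩ := e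
  obtain ⟨⟨_, c⟩, hac⟩ := f
  obtain rfl : a = _ := hfst
  have hpq := hp.eq_of_length_add_length_lt hgirth hq hij
  obtain rfl : b = c := by simpa only [Walk.snd_cons] using congrArg Walk.snd hpq
  rfl

theorem disjoint_nonbacktrackingEnds_of_ne (hgirth : g ≤ G.egirth) {i j : ℕ} (hne : i ≠ j)
    (hij : i + j < g) (e : G.Dart) :
    Disjoint (nonbacktrackingEnds i e) (nonbacktrackingEnds j e) := by
  refine disjoint_left.2 fun x hxi hxj ↦ hne ?_
  obtain ⟨p, rfl, hp⟩ := exists_isNonbacktracking_of_mem_nonbacktrackingEnds hxi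
  obtain ⟨q, rfl, hq⟩ := exists_isNonbacktracking_of_mem_nonbacktrackingEnds hxj
  rw [hp.of_cons.eq_of_length_add_length_lt hgirth hq.of_cons hij]

theorem disjoint_nonbacktrackingEnds_symm (hgirth : g ≤ G.egirth) {i j : ℕ}
    (hij : i + (j + 1) < g) (e : G.Dart) :
    Disjoint (nonbacktrackingEnds i e) (nonbacktrackingEnds j e.symm) := by
  refine disjoint_left.2 fun x hxi hxj ↦ ?_
  obtain ⟨p, rfl, hp⟩ := exists_isNonbacktracking_of_mem_nonbacktrackingEnds hxi
  obtain ⟨q, rfl, hq⟩ := exists_isNonbacktracking_of_mem_nonbacktrackingEnds hxj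
  -- By uniqueness `p` starts with `e.symm`, so that `e` followed by `p` backtracks.
  obtain rfl : p = .cons e.symm.adj q := hp.of_cons.eq_of_length_add_length_lt hgirth hq hij
  exact (List.isChain_cons_cons.1 hp).1 Sym2.eq_swap

theorem card_nonbacktrackingEnds (hgirth : g ≤ G.egirth) {i : ℕ} (hi : 2 * i < g) (e : G.Dart) :
    #(nonbacktrackingEnds i e) = walkCount dartSucc i e := by
  induction i generalizing e with
  | zero => rfl
  | succ i ih =>
    have hdisj : (dartSucc e : Set G.Dart).PairwiseDisjoint (nonbacktrackingEnds i) := by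
      refine fun e₁ he₁ e₂ he₂ hne ↦ disjoint_left.2 fun x hx₁ hx₂ ↦ hne ?_
      have hfst := (mem_dartSucc.1 he₁).1.trans (mem_dartSucc.1 he₂).1.symm
      exact eq_of_mem_nonbacktrackingEnds hgirth (by lia) hfst hx₁ hx₂
    rw [nonbacktrackingEnds, walkCount, card_biUnion hdisj]
    exact sum_congr rfl fun e' _ ↦ ih (by lia) e'

theorem card_biUnion_range_nonbacktrackingEnds (hgirth : g ≤ G.egirth) {a : ℕ}
    (ha : 2 * a ≤ g + 1) (e : G.Dart) :
    #((range a).biUnion (nonbacktrackingEnds · e)) = ∑ i ∈ range a, walkCount dartSucc i e := by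
  have hdisj : (range a : Set ℕ).PairwiseDisjoint (nonbacktrackingEnds · e) := by
    intro i hi j hj hne
    rw [mem_coe, mem_range] at hi hj
    exact disjoint_nonbacktrackingEnds_of_ne hgirth hne (by lia) e
  rw [card_biUnion hdisj]
  refine sum_congr rfl fun i hi ↦ card_nonbacktrackingEnds hgirth ?_ e
  rw [mem_range] at hi
  lia

theorem sum_walkCount_add_sum_walkCount_symm_le_card (hgirth : g ≤ G.egirth) {a b : ℕ}
    (ha : 2 * a ≤ g + 1) (hb : 2 * b ≤ g + 1) (hab : a + b ≤ g) (e : G.Dart) :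
    ∑ i ∈ range a, walkCount dartSucc i e + ∑ i ∈ range b, walkCount dartSucc i e.symm ≤
      Fintype.card V := by
  have hdisj : Disjoint ((range a).biUnion (nonbacktrackingEnds · e))
      ((range b).biUnion (nonbacktrackingEnds · e.symm)) := by
    simp only [disjoint_biUnion_left, disjoint_biUnion_right, mem_range]
    exact fun i hi j hj ↦ disjoint_nonbacktrackingEnds_symm hgirth (by lia) e
  rw [← card_biUnion_range_nonbacktrackingEnds hgirth ha,
    ← card_biUnion_range_nonbacktrackingEnds hgirth hb, ← card_union_of_disjoint hdisj]
  exact card_le_univ _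

theorem sum_geomMeanOutDegree_pow_le_card [Nonempty G.Dart] (hgirth : g ≤ G.egirth) {a b : ℕ}
    (ha : 2 * a ≤ g + 1) (hb : 2 * b ≤ g + 1) (hab : a + b ≤ g) :
    ∑ i ∈ range a, geomMeanOutDegree (dartSucc (G := G)) ^ i +
      ∑ i ∈ range b, geomMeanOutDegree (dartSucc (G := G)) ^ i ≤ Fintype.card V := by
  set Λ := geomMeanOutDegree (dartSucc (G := G))
  have hpow (c : ℕ) : Fintype.card G.Dart * ∑ i ∈ range c, Λ ^ i ≤
      ∑ e : G.Dart, ∑ i ∈ range c, (walkCount dartSucc i e : ℝ) := by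
    rw [mul_sum, sum_comm]
    exact sum_le_sum fun i _ ↦ card_dart_mul_geomMeanOutDegree_pow_le i
  have hsymm : ∑ e : G.Dart, ∑ i ∈ range b, (walkCount dartSucc i e.symm : ℝ) =
      ∑ e : G.Dart, ∑ i ∈ range b, (walkCount dartSucc i e : ℝ) :=
    Equiv.sum_comp Dart.symm_involutive.toPerm
      fun e : G.Dart ↦ ∑ i ∈ range b, (walkCount dartSucc i e : ℝ)
  refine le_of_mul_le_mul_left ?_ (Nat.cast_pos.2 (Fintype.card_pos (α := G.Dart)) : (0 : ℝ) < _)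
  calc Fintype.card G.Dart * (∑ i ∈ range a, Λ ^ i + ∑ i ∈ range b, Λ ^ i)
      ≤ ∑ e : G.Dart, (∑ i ∈ range a, (walkCount dartSucc i e : ℝ) +
          ∑ i ∈ range b, (walkCount dartSucc i e.symm : ℝ)) := by
        rw [mul_add, sum_add_distrib, hsymm]
        exact add_le_add (hpow a) (hpow b)
    _ ≤ ∑ _e : G.Dart, (Fintype.card V : ℝ) :=
        sum_le_sum fun e _ ↦
          mod_cast sum_walkCount_add_sum_walkCount_symm_le_card hgirth ha hb hab e
    _ = Fintype.card G.Dart * (Fintype.card V : ℝ) := by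
        rw [sum_const, card_univ, nsmul_eq_mul]

end Dart

theorem alon_hoory_linial_strong_general {V : Type*} [Fintype V] (G : SimpleGraph V)
    [DecidableRel G.Adj] (hG : G ≠ ⊥) (g : ℕ) (hgirth : g ≤ G.egirth) :
    mooreBound
      ((∏ x : V, ((G.degree x : ℝ) - 1) ^
          ((G.degree x : ℝ) /
            ((Fintype.card V : ℝ) *
              (2 * (G.edgeFinset.card : ℝ) / (Fintype.card V : ℝ))))) + 1) g
      ≤ (Fintype.card V : ℝ) := by
  classical
  obtain ⟨u, v, huv⟩ := ne_bot_iff_exists_adj.1 hG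
  have : Nonempty G.Dart := ⟨⟨(u, v), huv⟩⟩
  have hn : (Fintype.card V : ℝ) ≠ 0 := mod_cast (Fintype.card_pos_iff.2 ⟨u⟩).ne'
  rw [mul_div_cancel₀ _ hn, ← geomMeanOutDegree_dartSucc, mooreBound_add_one]
  exact sum_geomMeanOutDegree_pow_le_card hgirth (by lia) (by lia) (by lia)

/-- **Alon–Hoory–Linial, strong form.** Let `G` be a nonempty graph on `n` vertices with
minimum degree at least `2`, average degree `d = 2·e(G)/n`, and let
`Λ(G) = ∏_x (deg x − 1)^(deg x / (n·d))`. If `girth(G) ≥ g ≥ 3`, then `n ≥ n₀(Λ(G)+1, g)`. -/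
theorem alon_hoory_linial_strong {V : Type} [Fintype V] [Nonempty V]
    (G : SimpleGraph V) [DecidableRel G.Adj]
    (g : ℕ) (hg : 3 ≤ g)
    (hmin : 2 ≤ G.minDegree)
    (hgirth : (g : ℕ∞) ≤ G.egirth) :
    mooreBound
      ((∏ x : V, ((G.degree x : ℝ) - 1) ^
          ((G.degree x : ℝ) /
            ((Fintype.card V : ℝ) *
              (2 * (G.edgeFinset.card : ℝ) / (Fintype.card V : ℝ))))) + 1) g
      ≤ (Fintype.card V : ℝ) := by
  have hdeg (v : V) : 0 < G.degree v := two_pos.trans_le (hmin.trans (G.minDegree_le_degree v))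
  exact alon_hoory_linial_strong_general G (ne_bot_iff_exists_adj.2
    ⟨Classical.arbitrary V, (G.degree_pos_iff_exists_adj _).1 (hdeg _)⟩) g hgirth
end
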